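/- arXiv:1507.03627 — 5 statements merged into one kernel-verified Lean document; each statement's English description precedes it below -/
import Mathlib

section
/- Let a ∈ (0,1] and let θ ∈ C¹([0,∞)) be such that the support of θ' is compact in ℝ and θ' is not identically zero. Then there exists a constant c > 0 such that for every continuously differentiable function u with compact support in Ω one has ∫_Ω |∇u(x)|² dx − (1/(4a²)) ∫_Ω |u(x)|²/|x|² dx ≥ c ∫_Ω |u(x)|²/(1 + |x|² (log|x|)²) dx. -/
open MeasureTheory Real Set

noncomputable section

/-- The curved wedge of opening angle `2πa` with twisting function `θ`. -/
def curvedWedge (a : ℝ) (θ : ℝ → ℝ) : Set (ℝ × ℝ) :=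
  {x | ∃ r ∈ Ioi (0:ℝ), ∃ φ ∈ Ioo (0:ℝ) (2 * π * a),
    x = (r * Real.cos (φ + θ r), r * Real.sin (φ + θ r))}

/-- The Euclidean norm on `ℝ × ℝ`. -/
def enorm2 (x : ℝ × ℝ) : ℝ := Real.sqrt (x.1 ^ 2 + x.2 ^ 2)


lemma hw_integrableOn {U K : Set (ℝ × ℝ)} (hU : IsOpen U) (hK : IsCompact K) (hKU : K ⊆ U)
    {f : ℝ × ℝ → ℝ} (hf : ContinuousOn f U) (h0 : ∀ p ∈ U \ K, f p = 0) :
    IntegrableOn f U := by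
  have h1 : IntegrableOn f K := (hf.mono hKU).integrableOn_compact hK
  exact h1.of_forall_sdiff_eq_zero hU.measurableSet h0

lemma hw_slice_r {U K : Set (ℝ × ℝ)} (hU : IsOpen U) (hK : IsCompact K) (hKU : K ⊆ U)
    {f f1 : ℝ × ℝ → ℝ} (hf : ContinuousOn f U) (hf1 : ContinuousOn f1 U)
    (h0 : ∀ p ∈ U \ K, f p = 0)
    (hd : ∀ p ∈ U, HasDerivAt (fun s => f (s, p.2)) (f1 p) p.1) :
    (∀ p ∈ U \ K, f1 p = 0) ∧ ∫ p in U, f1 p = 0 := by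
  have hUK : IsOpen (U \ K) := hU.sdiff hK.isClosed
  have h10 : ∀ p ∈ U \ K, f1 p = 0 := by
    intro p hp
    have hev : (fun s => f (s, p.2)) =ᶠ[nhds p.1] fun _ => 0 := by
      have hc : ContinuousAt (fun s : ℝ => (s, p.2)) p.1 := by fun_prop
      filter_upwards [hc.preimage_mem_nhds (hUK.mem_nhds hp)] with s hs
      exact h0 _ hs
    have := (hd p hp.1).congr_of_eventuallyEq hev.symm
    exact this.unique (hasDerivAt_const _ _)
  refine ⟨h10, ?_⟩
  have hi : Integrable (U.indicator f) (volume.prod volume) :=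
    (hw_integrableOn hU hK hKU hf h0).integrable_indicator hU.measurableSet
  have hi1 : Integrable (U.indicator f1) (volume.prod volume) :=
    (hw_integrableOn hU hK hKU hf1 h10).integrable_indicator hU.measurableSet
  rw [← integral_indicator hU.measurableSet]
  have e : (∫ p, U.indicator f1 p) = ∫ y, ∫ x, U.indicator f1 (x, y) :=
    integral_prod_symm _ hi1
  rw [e]
  have : (fun y => ∫ x, U.indicator f1 (x, y)) =ᵐ[volume] fun _ => (0:ℝ) := by
    filter_upwards [hi.prod_left_ae, hi1.prod_left_ae] with y hy hy1
    refine integral_eq_zero_of_hasDerivAt_of_integrable (f := fun x => U.indicator f (x, y)) ?_ hy1 hy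
    intro x
    have hc : ContinuousAt (fun s : ℝ => (s, y)) x := by fun_prop
    by_cases hx : (x, y) ∈ U
    · rw [indicator_of_mem hx]
      refine (hd _ hx).congr_of_eventuallyEq ?_
      filter_upwards [hc.preimage_mem_nhds (hU.mem_nhds hx)] with s hs
      simp only [indicator_of_mem (show _ ∈ U from hs)]
    · rw [indicator_of_notMem hx]
      refine (hasDerivAt_const x (0:ℝ)).congr_of_eventuallyEq ?_
      have hxK : (x, y) ∈ Kᶜ := fun h => hx (hKU h)
      filter_upwards [hc.preimage_mem_nhds (hK.isClosed.isOpen_compl.mem_nhds hxK)] with s hs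
      by_cases hsU : (s, y) ∈ U
      · rw [indicator_of_mem hsU]; exact h0 _ ⟨hsU, hs⟩
      · exact indicator_of_notMem hsU _
  rw [integral_congr_ae this]; simp

lemma hw_slice_f {U K : Set (ℝ × ℝ)} (hU : IsOpen U) (hK : IsCompact K) (hKU : K ⊆ U)
    {f f1 : ℝ × ℝ → ℝ} (hf : ContinuousOn f U) (hf1 : ContinuousOn f1 U)
    (h0 : ∀ p ∈ U \ K, f p = 0)
    (hd : ∀ p ∈ U, HasDerivAt (fun s => f (p.1, s)) (f1 p) p.2) :
    (∀ p ∈ U \ K, f1 p = 0) ∧ ∫ p in U, f1 p = 0 := by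
  have hUK : IsOpen (U \ K) := hU.sdiff hK.isClosed
  have h10 : ∀ p ∈ U \ K, f1 p = 0 := by
    intro p hp
    have hev : (fun s => f (p.1, s)) =ᶠ[nhds p.2] fun _ => 0 := by
      have hc : ContinuousAt (fun s : ℝ => (p.1, s)) p.2 := by fun_prop
      filter_upwards [hc.preimage_mem_nhds (hUK.mem_nhds hp)] with s hs
      exact h0 _ hs
    have := (hd p hp.1).congr_of_eventuallyEq hev.symm
    exact this.unique (hasDerivAt_const _ _)
  refine ⟨h10, ?_⟩
  have hi : Integrable (U.indicator f) (volume.prod volume) :=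
    (hw_integrableOn hU hK hKU hf h0).integrable_indicator hU.measurableSet
  have hi1 : Integrable (U.indicator f1) (volume.prod volume) :=
    (hw_integrableOn hU hK hKU hf1 h10).integrable_indicator hU.measurableSet
  rw [← integral_indicator hU.measurableSet]
  have e : (∫ p, U.indicator f1 p) = ∫ x, ∫ y, U.indicator f1 (x, y) :=
    integral_prod _ hi1
  rw [e]
  have : (fun x => ∫ y, U.indicator f1 (x, y)) =ᵐ[volume] fun _ => (0:ℝ) := by
    filter_upwards [hi.prod_right_ae, hi1.prod_right_ae] with x hy hy1
    refine integral_eq_zero_of_hasDerivAt_of_integrable (f := fun y => U.indicator f (x, y)) ?_ hy1 hy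
    intro y
    have hc : ContinuousAt (fun s : ℝ => (x, s)) y := by fun_prop
    by_cases hx : (x, y) ∈ U
    · rw [indicator_of_mem hx]
      refine (hd _ hx).congr_of_eventuallyEq ?_
      filter_upwards [hc.preimage_mem_nhds (hU.mem_nhds hx)] with s hs
      simp only [indicator_of_mem (show _ ∈ U from hs)]
    · rw [indicator_of_notMem hx]
      refine (hasDerivAt_const y (0:ℝ)).congr_of_eventuallyEq ?_
      have hxK : (x, y) ∈ Kᶜ := fun h => hx (hKU h)
      filter_upwards [hc.preimage_mem_nhds (hK.isClosed.isOpen_compl.mem_nhds hxK)] with s hs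
      by_cases hsU : (x, s) ∈ U
      · rw [indicator_of_mem hsU]; exact h0 _ ⟨hsU, hs⟩
      · exact indicator_of_notMem hsU _
  rw [integral_congr_ae this]; simp

lemma hw_int3 {U : Set (ℝ × ℝ)} {V A B : ℝ × ℝ → ℝ} (hV : IntegrableOn V U)
    (hA : IntegrableOn A U) (hB : IntegrableOn B U) :
    ∫ p in U, (V p - A p + B p) = (∫ p in U, V p) - (∫ p in U, A p) + ∫ p in U, B p := by
  have h : IntegrableOn (fun p => V p - A p) U := hV.sub hA
  rw [integral_add h hB, integral_sub hV hA]

/-- Key inequality by completing squares. -/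
lemma hw_key {U K : Set (ℝ × ℝ)} (hU : IsOpen U) (hK : IsCompact K) (hKU : K ⊆ U)
    {k : ℝ} (hr : ∀ p ∈ U, 0 < p.1) (hs : ∀ p ∈ U, 0 < sin (k * p.2))
    {τ : ℝ → ℝ} (hτ : ContinuousOn (fun p : ℝ × ℝ => τ p.1) U)
    {w d e : ℝ × ℝ → ℝ} (hw : ContinuousOn w U) (hdc : ContinuousOn d U) (hec : ContinuousOn e U)
    (hw0 : ∀ p ∈ U \ K, w p = 0) (hd0 : ∀ p ∈ U \ K, d p = 0) (he0 : ∀ p ∈ U \ K, e p = 0)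
    (hwr : ∀ p ∈ U, HasDerivAt (fun s => w (s, p.2)) (d p + τ p.1 * e p) p.1)
    (hwf : ∀ p ∈ U, HasDerivAt (fun s => w (p.1, s)) (e p) p.2)
    {M Mr Mf η ηf : ℝ × ℝ → ℝ} (hM : ContinuousOn M U) (hMrc : ContinuousOn Mr U)
    (hMfc : ContinuousOn Mf U) (hη : ContinuousOn η U) (hηc : ContinuousOn ηf U)
    (hMr : ∀ p ∈ U, HasDerivAt (fun s => M (s, p.2)) (Mr p) p.1)
    (hMf : ∀ p ∈ U, HasDerivAt (fun s => M (p.1, s)) (Mf p) p.2)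
    (hηf : ∀ p ∈ U, HasDerivAt (fun s => η (p.1, s)) (ηf p) p.2) :
    ∫ p in U, (Mr p - τ p.1 * Mf p - M p ^ 2 / p.1
        - (ηf p + 2 * k * (cos (k * p.2) / sin (k * p.2)) * η p + η p ^ 2) / p.1) * w p ^ 2
      ≤ ∫ p in U, (p.1 * d p ^ 2 + e p ^ 2 / p.1 - k ^ 2 * w p ^ 2 / p.1) := by
  have hr' : ∀ p ∈ U, p.1 ≠ 0 := fun p hp => (hr p hp).ne'
  have hs' : ∀ p ∈ U, sin (k * p.2) ≠ 0 := fun p hp => (hs p hp).ne'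
  have cfst : ContinuousOn (fun p : ℝ × ℝ => p.1) U := by fun_prop
  have ccos : ContinuousOn (fun p : ℝ × ℝ => cos (k * p.2)) U := by fun_prop
  have csin : ContinuousOn (fun p : ℝ × ℝ => sin (k * p.2)) U := by fun_prop
  set H : ℝ × ℝ → ℝ := fun p => k * (cos (k * p.2) / sin (k * p.2)) + η p with hH
  set Hf : ℝ × ℝ → ℝ := fun p => - k ^ 2 / sin (k * p.2) ^ 2 + ηf p with hHf
  have cH : ContinuousOn H U := (continuousOn_const.mul (ccos.div csin hs')).add hη
  have cHf : ContinuousOn Hf U :=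
    (continuousOn_const.div (csin.pow 2) (fun p hp => pow_ne_zero 2 (hs' p hp))).add hηc
  have dH : ∀ p ∈ U, HasDerivAt (fun s => H (p.1, s)) (Hf p) p.2 := by
    intro p hp
    have h1 : HasDerivAt (fun s : ℝ => k * s) k p.2 := by simpa using (hasDerivAt_id p.2).const_mul k
    have h2 := ((h1.cos.div h1.sin (hs' p hp)).const_mul k).add (hηf p hp)
    refine h2.congr_deriv ?_
    simp only [hHf]
    congr 1
    have := hs' p hp
    field_simp
    have := sin_sq_add_cos_sq (k * p.2)
    linear_combination (-k ^ 2) * this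
  obtain ⟨A0, A⟩ := hw_slice_r hU hK hKU (f := fun p => M p * w p ^ 2)
    (f1 := fun p => Mr p * w p ^ 2 + M p * (2 * w p * (d p + τ p.1 * e p)))
    (hM.mul (hw.pow 2)) ((hMrc.mul (hw.pow 2)).add
      (hM.mul ((continuousOn_const.mul hw).mul (hdc.add (hτ.mul hec)))))
    (fun p hp => by simp [hw0 p hp])
    (fun p hp => by
      refine ((hMr p hp).mul ((hwr p hp).pow 2)).congr_deriv ?_
      simp)
  obtain ⟨B0, B⟩ := hw_slice_f hU hK hKU (f := fun p => (τ p.1 * M p + H p / p.1) * w p ^ 2)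
    (f1 := fun p => (τ p.1 * Mf p + Hf p / p.1) * w p ^ 2
      + (τ p.1 * M p + H p / p.1) * (2 * w p * e p))
    (((hτ.mul hM).add (cH.div cfst hr')).mul (hw.pow 2))
    ((((hτ.mul hMfc).add (cHf.div cfst hr')).mul (hw.pow 2)).add
      (((hτ.mul hM).add (cH.div cfst hr')).mul ((continuousOn_const.mul hw).mul hec)))
    (fun p hp => by simp [hw0 p hp])
    (fun p hp => by
      refine ((((hMf p hp).const_mul (τ p.1)).add ((dH p hp).div_const p.1)).mul
        ((hwf p hp).pow 2)).congr_deriv ?_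
      simp)
  have cA : ContinuousOn (fun p => Mr p * w p ^ 2 + M p * (2 * w p * (d p + τ p.1 * e p))) U :=
    ((hMrc.mul (hw.pow 2)).add
      (hM.mul ((continuousOn_const.mul hw).mul (hdc.add (hτ.mul hec)))))
  have cB : ContinuousOn (fun p => (τ p.1 * Mf p + Hf p / p.1) * w p ^ 2
      + (τ p.1 * M p + H p / p.1) * (2 * w p * e p)) U :=
    ((((hτ.mul hMfc).add (cHf.div cfst hr')).mul (hw.pow 2)).add
      (((hτ.mul hM).add (cH.div cfst hr')).mul ((continuousOn_const.mul hw).mul hec)))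
  have iA := hw_integrableOn hU hK hKU cA A0
  have iB := hw_integrableOn hU hK hKU cB B0
  have iV : IntegrableOn (fun p => (Mr p - τ p.1 * Mf p - M p ^ 2 / p.1
        - (ηf p + 2 * k * (cos (k * p.2) / sin (k * p.2)) * η p + η p ^ 2) / p.1) * w p ^ 2) U := by
    refine hw_integrableOn hU hK hKU ?_ (fun p hp => by simp [hw0 p hp])
    exact (((hMrc.sub (hτ.mul hMfc)).sub ((hM.pow 2).div cfst hr')).sub
      (((hηc.add ((continuousOn_const.mul (ccos.div csin hs')).mul hη)).add (hη.pow 2)).div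
        cfst hr')).mul (hw.pow 2)
  have iQ : IntegrableOn (fun p => p.1 * d p ^ 2 + e p ^ 2 / p.1 - k ^ 2 * w p ^ 2 / p.1) U := by
    refine hw_integrableOn hU hK hKU ?_ (fun p hp => by simp [hw0 p hp, hd0 p hp, he0 p hp])
    exact ((cfst.mul (hdc.pow 2)).add ((hec.pow 2).div cfst hr')).sub
      ((continuousOn_const.mul (hw.pow 2)).div cfst hr')
  have key : ∫ p in U, ((Mr p - τ p.1 * Mf p - M p ^ 2 / p.1
        - (ηf p + 2 * k * (cos (k * p.2) / sin (k * p.2)) * η p + η p ^ 2) / p.1) * w p ^ 2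
        - (Mr p * w p ^ 2 + M p * (2 * w p * (d p + τ p.1 * e p)))
        + ((τ p.1 * Mf p + Hf p / p.1) * w p ^ 2 + (τ p.1 * M p + H p / p.1) * (2 * w p * e p)))
      ≤ ∫ p in U, (p.1 * d p ^ 2 + e p ^ 2 / p.1 - k ^ 2 * w p ^ 2 / p.1) := by
    refine setIntegral_mono_on ((iV.sub iA).add iB) iQ hU.measurableSet ?_
    intro p hp
    have hrp := hr p hp
    have hid : (p.1 * d p ^ 2 + e p ^ 2 / p.1 - k ^ 2 * w p ^ 2 / p.1)
        - ((Mr p - τ p.1 * Mf p - M p ^ 2 / p.1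
        - (ηf p + 2 * k * (cos (k * p.2) / sin (k * p.2)) * η p + η p ^ 2) / p.1) * w p ^ 2
        - (Mr p * w p ^ 2 + M p * (2 * w p * (d p + τ p.1 * e p)))
        + ((τ p.1 * Mf p + Hf p / p.1) * w p ^ 2 + (τ p.1 * M p + H p / p.1) * (2 * w p * e p)))
        = p.1 * (d p + M p / p.1 * w p) ^ 2 + (e p - H p * w p) ^ 2 / p.1 := by
      have h1 := hs' p hp
      have h2 := hr' p hp
      have h3 := sin_sq_add_cos_sq (k * p.2)
      have h4 : k ^ 2 / sin (k * p.2) ^ 2 = k ^ 2 + k ^ 2 * (cos (k * p.2) / sin (k * p.2)) ^ 2 := by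
        field_simp
        linear_combination (-k ^ 2) * h3
      simp only [hH, hHf, neg_div, h4]
      generalize cos (k * p.2) / sin (k * p.2) = T
      field_simp
      ring
    have : 0 ≤ p.1 * (d p + M p / p.1 * w p) ^ 2 + (e p - H p * w p) ^ 2 / p.1 := by positivity
    linarith
  rw [hw_int3 iV iA iB, A, B] at key
  simpa using key

lemma hw_logbound (r : ℝ) (hr : 0 < r) :
    (1 + r ^ 2) * (1 + log (1 + r ^ 2)) ^ 2 ≤ 125 * (1 + r ^ 2 * log r ^ 2) := by
  have hL0 : 0 ≤ log (1 + r ^ 2) := log_nonneg (by nlinarith)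
  rcases le_total r 2 with h | h
  · have h1 : log (1 + r ^ 2) ≤ 4 := by
      have := log_le_sub_one_of_pos (show (0:ℝ) < 1 + r ^ 2 by positivity)
      nlinarith
    have h2 : (1 + log (1 + r ^ 2)) ^ 2 ≤ 25 := by nlinarith
    have h3 : 1 + r ^ 2 ≤ 5 := by nlinarith
    have h4 : 0 ≤ r ^ 2 * log r ^ 2 := by positivity
    have : (1 + r ^ 2) * (1 + log (1 + r ^ 2)) ^ 2 ≤ 5 * 25 := by gcongr
    linarith
  · have h0 : log 2 ≤ log r := log_le_log (by norm_num) h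
    have h2 := Real.log_two_gt_d9
    have h1 : log (1 + r ^ 2) ≤ 3 * log r := by
      have : log (1 + r ^ 2) ≤ log (r ^ 3) := by
        apply log_le_log (by positivity)
        nlinarith [mul_nonneg (sq_nonneg r) (sub_nonneg.2 h)]
      rw [log_pow] at this
      exact_mod_cast this
    have h3 : 1 + log (1 + r ^ 2) ≤ 5 * log r := by linarith
    have h4 : (1 + log (1 + r ^ 2)) ^ 2 ≤ (5 * log r) ^ 2 := by gcongr
    have h5 : 1 + r ^ 2 ≤ 2 * r ^ 2 := by nlinarith
    calc _ ≤ (2 * r ^ 2) * (5 * log r) ^ 2 := by gcongr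
      _ = 50 * (r ^ 2 * log r ^ 2) := by ring
      _ ≤ _ := by nlinarith [mul_nonneg (sq_nonneg r) (sq_nonneg (log r))]

lemma hw_m (p q : ℝ) (hp : 0 < p) (hpq : p < q) : ∃ m : ℝ → ℝ, ContDiff ℝ 1 m ∧
    ∃ c > 0, ∃ C ≥ 0, ∀ r > 0,
      (c * (r / (1 + r ^ 2 * log r ^ 2)) ≤ deriv m r - m r ^ 2 / r) ∨
      (r ∈ Icc p q ∧ c * (r / (1 + r ^ 2 * log r ^ 2)) - C ≤ deriv m r - m r ^ 2 / r) := by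
  set l : ℝ := p ^ 2 / (1 + p ^ 2) with hl
  have hl0 : 0 < l := by positivity
  set m1 : ℝ → ℝ := fun r => 1 / p ^ 2 * r ^ 2 with hm1
  set m2 : ℝ → ℝ := fun r => - l / (1 + log (1 + r ^ 2)) with hm2
  set X : ℝ → ℝ := fun r => Real.smoothTransition ((q - r) / (q - p)) with hX
  have hL0 : ∀ r : ℝ, 0 < 1 + log (1 + r ^ 2) := fun r => by
    have : 0 ≤ log (1 + r ^ 2) := log_nonneg (by nlinarith [sq_nonneg r])
    linarith
  have cX : ContDiff ℝ 1 X := Real.smoothTransition.contDiff.comp (by fun_prop)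
  have c1 : ContDiff ℝ 1 m1 := by fun_prop
  have c2 : ContDiff ℝ 1 m2 := by
    refine contDiff_const.div (contDiff_const.add (ContDiff.log (by fun_prop) ?_)) ?_
    · intro r; positivity
    · intro r; exact (hL0 r).ne'
  have cm : ContDiff ℝ 1 (fun r => X r * m1 r + (1 - X r) * m2 r) := by fun_prop
  refine ⟨fun r => X r * m1 r + (1 - X r) * m2 r, cm, min (l / 125) (1 / p ^ 2), by positivity, ?_⟩
  set c := min (l / 125) (1 / p ^ 2) with hc
  set m := (fun r => X r * m1 r + (1 - X r) * m2 r) with hm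
  have hcont : ContinuousOn (fun r => deriv m r - m r ^ 2 / r - c * (r / (1 + r ^ 2 * log r ^ 2)))
      (Icc p q) := by
    have hne : ∀ r ∈ Icc p q, r ≠ 0 := fun r hr => (hp.trans_le hr.1).ne'
    have hlog : ContinuousOn (fun r : ℝ => log r) (Icc p q) := continuousOn_log.mono hne
    refine ContinuousOn.sub (ContinuousOn.sub (cm.continuous_deriv le_rfl).continuousOn
      ((cm.continuous.continuousOn.pow 2).div continuousOn_id hne))
      (continuousOn_const.mul (continuousOn_id.div (continuousOn_const.add
        ((continuousOn_id.pow 2).mul (hlog.pow 2))) ?_))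
    intro r hr
    positivity
  obtain ⟨b, hb⟩ := (isCompact_Icc.image_of_continuousOn hcont).bddBelow
  refine ⟨|b|, abs_nonneg _, fun r hr => ?_⟩
  have hW : 0 ≤ r / (1 + r ^ 2 * log r ^ 2) := by positivity
  by_cases h1 : r < p
  · left
    have hev : m =ᶠ[nhds r] m1 := by
      filter_upwards [Iio_mem_nhds h1] with s hs
      have : X s = 1 := Real.smoothTransition.one_of_one_le (by
        rw [le_div_iff₀ (by linarith)]; have := mem_Iio.1 hs; linarith)
      simp [hm, this]
    rw [hev.deriv_eq, hev.eq_of_nhds]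
    have hd : deriv m1 r = 1 / p ^ 2 * (2 * r) := by
      simp [hm1]
    have e1 : 1 / p ^ 2 * r ≤ deriv m1 r - m1 r ^ 2 / r := by
      rw [hd]
      simp only [hm1]
      have e2 : 1 / p ^ 2 * r ^ 2 ≤ 1 := by
        rw [one_div, inv_mul_le_iff₀ (by positivity)]; nlinarith
      have e3 : (1 / p ^ 2 * r ^ 2) ^ 2 / r = (1 / p ^ 2 * r ^ 2) * (1 / p ^ 2 * r) := by
        field_simp
      rw [e3]
      have : 0 ≤ 1 / p ^ 2 * r := by positivity
      nlinarith
    refine le_trans ?_ e1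
    have : r / (1 + r ^ 2 * log r ^ 2) ≤ r := div_le_self hr.le (by
      nlinarith [mul_nonneg (sq_nonneg r) (sq_nonneg (log r))])
    exact mul_le_mul (min_le_right _ _) this hW (by positivity)
  by_cases h2 : q < r
  · left
    have hev : m =ᶠ[nhds r] m2 := by
      filter_upwards [Ioi_mem_nhds h2] with s hs
      have : X s = 0 := Real.smoothTransition.zero_of_nonpos (by
        apply div_nonpos_of_nonpos_of_nonneg <;> have := mem_Ioi.1 hs <;> linarith)
      simp [hm, this]
    rw [hev.deriv_eq, hev.eq_of_nhds]
    have hL := hL0 r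
    have hd : deriv m2 r = l * (2 * r / (1 + r ^ 2)) / (1 + log (1 + r ^ 2)) ^ 2 := by
      have a1 : HasDerivAt (fun r : ℝ => 1 + r ^ 2) (2 * r) r := by
        simpa using (hasDerivAt_pow 2 r).const_add 1
      have a2 := (a1.log (by positivity)).const_add 1
      have a3 := (hasDerivAt_const r (-l)).div a2 hL.ne'
      refine (HasDerivAt.congr_deriv a3 ?_).deriv
      ring
    rw [hd]
    simp only [hm2]
    have hlr : l / r ≤ r / (1 + r ^ 2) := by
      rw [hl, div_div, div_le_div_iff₀ (by positivity) (by positivity)]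
      have : p ^ 2 ≤ r ^ 2 := by gcongr; linarith
      nlinarith
    have e1 : l * (2 * r / (1 + r ^ 2)) / (1 + log (1 + r ^ 2)) ^ 2
        - (-l / (1 + log (1 + r ^ 2))) ^ 2 / r
        = l / (1 + log (1 + r ^ 2)) ^ 2 * (2 * (r / (1 + r ^ 2)) - l / r) := by
      field_simp
    rw [e1]
    have e2 : l / (1 + log (1 + r ^ 2)) ^ 2 * (r / (1 + r ^ 2)) ≤
        l / (1 + log (1 + r ^ 2)) ^ 2 * (2 * (r / (1 + r ^ 2)) - l / r) := by
      gcongr; linarith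
    refine le_trans ?_ e2
    calc c * (r / (1 + r ^ 2 * log r ^ 2)) ≤ l / 125 * (r / (1 + r ^ 2 * log r ^ 2)) := by
          gcongr; exact min_le_left _ _
      _ = l * r / (125 * (1 + r ^ 2 * log r ^ 2)) := by field_simp
      _ ≤ l * r / ((1 + r ^ 2) * (1 + log (1 + r ^ 2)) ^ 2) := by
          exact div_le_div_of_nonneg_left (by positivity) (by positivity) (hw_logbound r hr)
      _ = _ := by field_simp
  · right
    push Not at h1 h2
    refine ⟨⟨h1, h2⟩, ?_⟩
    have := hb (mem_image_of_mem _ (⟨h1, h2⟩ : r ∈ Icc p q))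
    have := neg_abs_le b
    linarith

structure HWData (U : Set (ℝ × ℝ)) (τ : ℝ → ℝ) (w d e : ℝ × ℝ → ℝ) : Prop where
  ex : ∃ K : Set (ℝ × ℝ), IsCompact K ∧ K ⊆ U ∧ (∀ p ∈ U \ K, w p = 0) ∧ (∀ p ∈ U \ K, d p = 0)
    ∧ (∀ p ∈ U \ K, e p = 0)
  hw : ContinuousOn w U
  hd : ContinuousOn d U
  he : ContinuousOn e U
  hwr : ∀ p ∈ U, HasDerivAt (fun s => w (s, p.2)) (d p + τ p.1 * e p) p.1
  hwf : ∀ p ∈ U, HasDerivAt (fun s => w (p.1, s)) (e p) p.2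

lemma HWData.intg {U : Set (ℝ × ℝ)} (hU : IsOpen U) {τ : ℝ → ℝ} {w d e : ℝ × ℝ → ℝ}
    (h : HWData U τ w d e) {g : ℝ × ℝ → ℝ} (hg : ContinuousOn g U) :
    IntegrableOn (fun p => g p * w p ^ 2) U := by
  obtain ⟨K, hK, hKU, h1, -, -⟩ := h.ex
  exact hw_integrableOn hU hK hKU (hg.mul (h.hw.pow 2)) (fun p hp => by simp [h1 p hp])

lemma hw_key' {U : Set (ℝ × ℝ)} (hU : IsOpen U)
    {k : ℝ} (hr : ∀ p ∈ U, 0 < p.1) (hs : ∀ p ∈ U, 0 < sin (k * p.2))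
    {τ : ℝ → ℝ} (hτ : ContinuousOn (fun p : ℝ × ℝ => τ p.1) U)
    {w d e : ℝ × ℝ → ℝ} (h : HWData U τ w d e)
    {M Mr Mf η ηf g : ℝ × ℝ → ℝ} (hM : ContinuousOn M U) (hMrc : ContinuousOn Mr U)
    (hMfc : ContinuousOn Mf U) (hη : ContinuousOn η U) (hηc : ContinuousOn ηf U)
    (hMr : ∀ p ∈ U, HasDerivAt (fun s => M (s, p.2)) (Mr p) p.1)
    (hMf : ∀ p ∈ U, HasDerivAt (fun s => M (p.1, s)) (Mf p) p.2)
    (hηf : ∀ p ∈ U, HasDerivAt (fun s => η (p.1, s)) (ηf p) p.2)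
    (hg : ContinuousOn g U)
    (hgV : ∀ p ∈ U, g p ≤ Mr p - τ p.1 * Mf p - M p ^ 2 / p.1
        - (ηf p + 2 * k * (cos (k * p.2) / sin (k * p.2)) * η p + η p ^ 2) / p.1) :
    ∫ p in U, g p * w p ^ 2
      ≤ ∫ p in U, (p.1 * d p ^ 2 + e p ^ 2 / p.1 - k ^ 2 * w p ^ 2 / p.1) := by
  obtain ⟨K, hK, hKU, h1, h2, h3⟩ := h.ex
  refine le_trans ?_ (hw_key hU hK hKU hr hs hτ h.hw h.hd h.he h1 h2 h3 h.hwr h.hwf hM hMrc hMfc hη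
    hηc hMr hMf hηf)
  have hr' : ∀ p ∈ U, p.1 ≠ 0 := fun p hp => (hr p hp).ne'
  have hs' : ∀ p ∈ U, sin (k * p.2) ≠ 0 := fun p hp => (hs p hp).ne'
  have cfst : ContinuousOn (fun p : ℝ × ℝ => p.1) U := by fun_prop
  have ccos : ContinuousOn (fun p : ℝ × ℝ => cos (k * p.2)) U := by fun_prop
  have csin : ContinuousOn (fun p : ℝ × ℝ => sin (k * p.2)) U := by fun_prop
  refine setIntegral_mono_on (h.intg hU hg) (h.intg hU ?_) hU.measurableSet ?_
  · exact (((hMrc.sub (hτ.mul hMfc)).sub ((hM.pow 2).div cfst hr')).sub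
      (((hηc.add ((continuousOn_const.mul (ccos.div csin hs')).mul hη)).add (hη.pow 2)).div
        cfst hr'))
  · intro p hp
    exact mul_le_mul_of_nonneg_right (hgV p hp) (sq_nonneg _)

lemma hw_local {U : Set (ℝ × ℝ)} (hU : IsOpen U)
    {k : ℝ} (hk : 0 < k) (hr : ∀ p ∈ U, 0 < p.1) (hs : ∀ p ∈ U, 0 < sin (k * p.2))
    {τ : ℝ → ℝ} (hτ : ContinuousOn (fun p : ℝ × ℝ => τ p.1) U)
    {χ : ℝ → ℝ} (hχ : ContDiff ℝ 1 χ) (hχ1 : ∀ r, |χ r| ≤ 1) {D : ℝ} (hD : ∀ r, |deriv χ r| ≤ D)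
    {p₀ q₀ δ T σ : ℝ} (hp₀ : 0 < p₀) (hpq : p₀ ≤ q₀) (hδ : 0 < δ) (hσ : σ ^ 2 = 1)
    (hsup : ∀ r, χ r ≠ 0 → r ∈ Icc p₀ q₀)
    (hτδ : ∀ r ∈ Icc p₀ q₀, δ ≤ σ * τ r) (hτT : ∀ r ∈ Icc p₀ q₀, |τ r| ≤ T) :
    ∃ c > 0, ∀ w d e : ℝ × ℝ → ℝ, HWData U τ w d e →
      ∫ p in U, (c * χ p.1 ^ 2) * w p ^ 2
      ≤ ∫ p in U, (p.1 * d p ^ 2 + e p ^ 2 / p.1 - k ^ 2 * w p ^ 2 / p.1) := by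
  have hT : 0 ≤ T := (abs_nonneg _).trans (hτT p₀ ⟨le_rfl, hpq⟩)
  have hD0 : 0 ≤ D := (abs_nonneg _).trans (hD 0)
  have hq₀ : 0 < q₀ := hp₀.trans_le hpq
  set B : ℝ := 4 / p₀ + q₀ * (D / k + T) ^ 2 with hB
  have hB0 : 0 < B := by positivity
  set ε : ℝ := k * δ / (2 * B) with hε
  have hε0 : 0 < ε := by positivity
  have hεB : ε * B = k * δ / 2 := by rw [hε]; field_simp
  refine ⟨ε * (k * δ / 2), by positivity, fun w d e h => ?_⟩
  have cχ : ContinuousOn (fun p : ℝ × ℝ => χ p.1) U := (hχ.continuous.comp continuous_fst).continuousOn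
  have cχ' : ContinuousOn (fun p : ℝ × ℝ => deriv χ p.1) U :=
    ((hχ.continuous_deriv le_rfl).comp continuous_fst).continuousOn
  have ccos : ContinuousOn (fun p : ℝ × ℝ => cos (k * p.2)) U := by fun_prop
  have csin : ContinuousOn (fun p : ℝ × ℝ => sin (k * p.2)) U := by fun_prop
  have cfst : ContinuousOn (fun p : ℝ × ℝ => p.1) U := by fun_prop
  have dχ : ∀ r, HasDerivAt χ (deriv χ r) r := fun r =>
    ((hχ.differentiable one_ne_zero) r).hasDerivAt
  have dk : ∀ x : ℝ, HasDerivAt (fun s : ℝ => k * s) k x := fun x => by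
    simpa using (hasDerivAt_id x).const_mul k
  refine hw_key' hU hr hs hτ h
    (M := fun p => ε * σ * χ p.1 ^ 2 * (2 * sin (k * p.2) * cos (k * p.2)))
    (Mr := fun p => ε * σ * (2 * χ p.1 * deriv χ p.1) * (2 * sin (k * p.2) * cos (k * p.2)))
    (Mf := fun p => ε * σ * χ p.1 ^ 2 * (2 * k * (cos (k * p.2) ^ 2 - sin (k * p.2) ^ 2)))
    (η := fun p => ε * σ * p.1 * (χ p.1 * deriv χ p.1 * sin (k * p.2) ^ 2 / k
      - τ p.1 * χ p.1 ^ 2 * (sin (k * p.2) * cos (k * p.2))))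
    (ηf := fun p => ε * σ * p.1 * (2 * χ p.1 * deriv χ p.1 * (sin (k * p.2) * cos (k * p.2))
      - τ p.1 * χ p.1 ^ 2 * (k * (cos (k * p.2) ^ 2 - sin (k * p.2) ^ 2))))
    ((continuousOn_const.mul (cχ.pow 2)).mul ((continuousOn_const.mul csin).mul ccos))
    ((continuousOn_const.mul ((continuousOn_const.mul cχ).mul cχ')).mul
      ((continuousOn_const.mul csin).mul ccos))
    ((continuousOn_const.mul (cχ.pow 2)).mul
      (continuousOn_const.mul ((ccos.pow 2).sub (csin.pow 2))))
    ((continuousOn_const.mul cfst).mul ((((cχ.mul cχ').mul (csin.pow 2)).div_const k).sub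
      ((hτ.mul (cχ.pow 2)).mul (csin.mul ccos))))
    ((continuousOn_const.mul cfst).mul ((((continuousOn_const.mul cχ).mul cχ').mul
      (csin.mul ccos)).sub ((hτ.mul (cχ.pow 2)).mul
        (continuousOn_const.mul ((ccos.pow 2).sub (csin.pow 2))))))
    ?_ ?_ ?_ (continuousOn_const.mul (cχ.pow 2)) ?_
  · intro p hp
    refine ((((dχ p.1).pow 2).const_mul (ε * σ)).mul_const
      (2 * sin (k * p.2) * cos (k * p.2))).congr_deriv ?_
    simp
  · intro p hp
    refine ((((dk p.2).sin.const_mul 2).mul (dk p.2).cos).const_mul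
      (ε * σ * χ p.1 ^ 2)).congr_deriv ?_
    ring
  · intro p hp
    refine (((((dk p.2).sin.pow 2).const_mul (χ p.1 * deriv χ p.1)).div_const k).sub
      (((dk p.2).sin.mul (dk p.2).cos).const_mul (τ p.1 * χ p.1 ^ 2)) |>.const_mul
      (ε * σ * p.1)).congr_deriv ?_
    field_simp
    ring
  · intro p hp
    have hrp := hr p hp
    have hsp := hs p hp
    by_cases hX : χ p.1 = 0
    · simp [hX]
    have hI := hsup _ hX
    have h1 := hτδ _ hI
    have h2 := hτT _ hI
    have h3 := hχ1 p.1
    have h4 := hD p.1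
    have hs1 := abs_sin_le_one (k * p.2)
    have hc1 := abs_cos_le_one (k * p.2)
    have hsc := sin_sq_add_cos_sq (k * p.2)
    set r := p.1
    set X := χ r
    set Y := deriv χ r
    set t := τ r
    set s := sin (k * p.2)
    set c := cos (k * p.2)
    have hid : ε * σ * (2 * X * Y) * (2 * s * c) - t * (ε * σ * X ^ 2 * (2 * k * (c ^ 2 - s ^ 2)))
        - (ε * σ * X ^ 2 * (2 * s * c)) ^ 2 / r
        - (ε * σ * r * (2 * X * Y * (s * c) - t * X ^ 2 * (k * (c ^ 2 - s ^ 2)))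
          + 2 * k * (c / s) * (ε * σ * r * (X * Y * s ^ 2 / k - t * X ^ 2 * (s * c)))
          + (ε * σ * r * (X * Y * s ^ 2 / k - t * X ^ 2 * (s * c))) ^ 2) / r
        = ε * k * X ^ 2 * (σ * t) - ε ^ 2 * X ^ 2 * ((X * (2 * s * c)) ^ 2 / r
          + r * (Y * s ^ 2 / k - t * X * (s * c)) ^ 2) := by
      have e1 : (ε * σ * X ^ 2 * (2 * s * c)) ^ 2 = ε ^ 2 * X ^ 2 * (X * (2 * s * c)) ^ 2 := by
        linear_combination (ε ^ 2 * X ^ 4 * (2 * s * c) ^ 2) * hσ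
      have e2 : (ε * σ * r * (X * Y * s ^ 2 / k - t * X ^ 2 * (s * c))) ^ 2
          = ε ^ 2 * X ^ 2 * r ^ 2 * (Y * s ^ 2 / k - t * X * (s * c)) ^ 2 := by
        linear_combination (ε ^ 2 * r ^ 2 * (X * Y * s ^ 2 / k - t * X ^ 2 * (s * c)) ^ 2) * hσ
      have e3 : 2 * k * (c / s) * (ε * σ * r * (X * Y * s ^ 2 / k - t * X ^ 2 * (s * c)))
          = ε * σ * r * (2 * X * Y * (s * c) - 2 * k * t * X ^ 2 * c ^ 2) := by
        field_simp
      rw [e1, e2, e3]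
      field_simp
      linear_combination (k ^ 3 * σ * t * X * r) * hsc
    rw [hid]
    have b1 : (X * (2 * s * c)) ^ 2 / r ≤ 4 / p₀ := by
      have : (X * (2 * s * c)) ^ 2 ≤ 4 := by
        have : |X * (2 * s * c)| ≤ 1 * (2 * 1 * 1) := by
          rw [abs_mul, abs_mul, abs_mul, abs_two]; gcongr
        calc (X * (2 * s * c)) ^ 2 = |X * (2 * s * c)| ^ 2 := (sq_abs _).symm
          _ ≤ (1 * (2 * 1 * 1)) ^ 2 := by gcongr
          _ = 4 := by norm_num
      have := hI.1
      gcongr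
    have b2 : r * (Y * s ^ 2 / k - t * X * (s * c)) ^ 2 ≤ q₀ * (D / k + T) ^ 2 := by
      have : |Y * s ^ 2 / k - t * X * (s * c)| ≤ D / k + T := by
        refine (abs_sub _ _).trans ?_
        have u1 : |Y * s ^ 2 / k| ≤ D * 1 ^ 2 / k := by
          rw [abs_div, abs_mul, abs_pow, abs_of_pos hk]; gcongr
        have u2 : |t * X * (s * c)| ≤ T * 1 * (1 * 1) := by
          rw [abs_mul, abs_mul, abs_mul]; gcongr
        simp only [one_pow, mul_one] at u1 u2
        linarith
      have h5 := hI.2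
      rw [← sq_abs (Y * s ^ 2 / k - t * X * (s * c))]
      gcongr
    have b3 : ε ^ 2 * X ^ 2 * ((X * (2 * s * c)) ^ 2 / r
          + r * (Y * s ^ 2 / k - t * X * (s * c)) ^ 2) ≤ ε * X ^ 2 * (k * δ / 2) := by
      rw [← hεB]
      calc _ ≤ ε ^ 2 * X ^ 2 * B := by gcongr; linarith
        _ = _ := by ring
    have b4 : ε * k * X ^ 2 * δ ≤ ε * k * X ^ 2 * (σ * t) := by gcongr
    linarith

lemma hw_global {U : Set (ℝ × ℝ)} (hU : IsOpen U)
    {k : ℝ} (hr : ∀ p ∈ U, 0 < p.1) (hs : ∀ p ∈ U, 0 < sin (k * p.2))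
    {τ : ℝ → ℝ} (hτ : ContinuousOn (fun p : ℝ × ℝ => τ p.1) U)
    {χ : ℝ → ℝ} (hχ : Continuous χ)
    {p₀ q₀ : ℝ} (hp₀ : 0 < p₀) (hpq : p₀ < q₀) (hχ1 : ∀ r ∈ Icc p₀ q₀, χ r = 1) :
    ∃ c > 0, ∃ C ≥ 0, ∀ w d e : ℝ × ℝ → ℝ, HWData U τ w d e →
      ∫ p in U, (c * (p.1 / (1 + p.1 ^ 2 * log p.1 ^ 2)) - C * χ p.1 ^ 2) * w p ^ 2
      ≤ ∫ p in U, (p.1 * d p ^ 2 + e p ^ 2 / p.1 - k ^ 2 * w p ^ 2 / p.1) := by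
  obtain ⟨m, cm, c, hc, C, hC, hm⟩ := hw_m p₀ q₀ hp₀ hpq
  refine ⟨c, hc, C, hC, fun w d e h => ?_⟩
  have hr' : ∀ p ∈ U, p.1 ≠ 0 := fun p hp => (hr p hp).ne'
  have clog : ContinuousOn (fun p : ℝ × ℝ => log p.1) U :=
    ContinuousOn.log (by fun_prop) hr'
  have dm : ∀ r, HasDerivAt m (deriv m r) r := fun r =>
    ((cm.differentiable one_ne_zero) r).hasDerivAt
  have cfst : ContinuousOn (fun p : ℝ × ℝ => p.1) U := by fun_prop
  refine hw_key' hU hr hs hτ h (M := fun p => m p.1) (Mr := fun p => deriv m p.1)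
    (Mf := fun p => 0) (η := fun p => 0) (ηf := fun p => 0)
    (cm.continuous.comp continuous_fst).continuousOn
    ((cm.continuous_deriv le_rfl).comp continuous_fst).continuousOn
    continuousOn_const continuousOn_const continuousOn_const
    (fun p _ => dm p.1) (fun p _ => hasDerivAt_const _ (m p.1)) (fun p _ => hasDerivAt_const _ _) ?_ ?_
  · refine (continuousOn_const.mul (cfst.div (continuousOn_const.add
        ((cfst.pow 2).mul (clog.pow 2))) ?_)).sub
        (continuousOn_const.mul ((hχ.comp continuous_fst).continuousOn.pow 2))
    intro p hp
    show 1 + p.1 ^ 2 * log p.1 ^ 2 ≠ 0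
    positivity
  · intro p hp
    simp only [mul_zero, sub_zero, add_zero, ne_eq, OfNat.ofNat_ne_zero, not_false_eq_true,
      zero_pow, zero_div]
    rcases hm p.1 (hr p hp) with h1 | ⟨h1, h2⟩
    · have : 0 ≤ C * χ p.1 ^ 2 := by positivity
      linarith
    · rw [hχ1 _ h1]; linarith

def hwL (θ : ℝ → ℝ) (p : ℝ × ℝ) : ℝ × ℝ :=
  (p.1 * Real.cos (p.2 + θ p.1), p.1 * Real.sin (p.2 + θ p.1))

def hwU (a : ℝ) : Set (ℝ × ℝ) := Ioi (0:ℝ) ×ˢ Ioo (0:ℝ) (2 * π * a)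

lemma hwU_open (a : ℝ) : IsOpen (hwU a) := isOpen_Ioi.prod isOpen_Ioo

lemma hw_image (a : ℝ) (θ : ℝ → ℝ) : hwL θ '' hwU a = curvedWedge a θ := by
  ext x
  constructor
  · rintro ⟨p, ⟨h1, h2⟩, rfl⟩
    exact ⟨p.1, h1, p.2, h2, rfl⟩
  · rintro ⟨r, hr, φ, hφ, rfl⟩
    exact ⟨(r, φ), ⟨hr, hφ⟩, rfl⟩

lemma hw_sq (θ : ℝ → ℝ) (p : ℝ × ℝ) : (hwL θ p).1 ^ 2 + (hwL θ p).2 ^ 2 = p.1 ^ 2 := by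
  have := sin_sq_add_cos_sq (p.2 + θ p.1)
  simp only [hwL]
  linear_combination (p.1 ^ 2) * this

lemma hw_inj0 {θ : ℝ → ℝ} {p q : ℝ × ℝ} (hp : 0 < p.1) (hq : 0 < q.1) (h : hwL θ p = hwL θ q) :
    p.1 = q.1 ∧ cos (p.2 - q.2) = 1 := by
  have h1 := hw_sq θ p
  have h2 := hw_sq θ q
  rw [h] at h1
  have e : p.1 = q.1 := by
    have : p.1 ^ 2 = q.1 ^ 2 := by linarith
    exact (pow_left_inj₀ hp.le hq.le two_ne_zero).1 this
  refine ⟨e, ?_⟩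
  have h3 := congrArg Prod.fst h
  have h4 := congrArg Prod.snd h
  simp only [hwL, e] at h3 h4
  have h5 := mul_left_cancel₀ hq.ne' h3
  have h6 := mul_left_cancel₀ hq.ne' h4
  have : p.2 - q.2 = (p.2 + θ q.1) - (q.2 + θ q.1) := by ring
  rw [this, cos_sub, h5, h6]
  have := sin_sq_add_cos_sq (q.2 + θ q.1)
  linarith

lemma hw_det (a b c d : ℝ) :
    (((a • ContinuousLinearMap.fst ℝ ℝ ℝ + b • ContinuousLinearMap.snd ℝ ℝ ℝ).prod
      (c • ContinuousLinearMap.fst ℝ ℝ ℝ + d • ContinuousLinearMap.snd ℝ ℝ ℝ) :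
        ℝ × ℝ →L[ℝ] ℝ × ℝ)).det = a * d - b * c := by
  rw [ContinuousLinearMap.det, ← LinearMap.det_toMatrix (Module.Basis.finTwoProd ℝ), Matrix.det_fin_two]
  simp [LinearMap.toMatrix_apply]

lemma hw_cov {a : ℝ} (ha : a ∈ Ioc (0:ℝ) 1) {θ θ' : ℝ → ℝ}
    (hθ : ∀ r > 0, HasDerivAt θ (θ' r) r) (f : ℝ × ℝ → ℝ) :
    ∫ x in curvedWedge a θ, f x = ∫ p in hwU a, p.1 * f (hwL θ p) := by
  rw [← hw_image]
  have hinj : InjOn (hwL θ) (hwU a) := by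
    intro p hp q hq h
    obtain ⟨h1, h2⟩ := hw_inj0 hp.1 hq.1 h
    have b1 := hp.2.1
    have b2 := hp.2.2
    have b3 := hq.2.1
    have b4 := hq.2.2
    have b5 : 2 * π * a ≤ 2 * π := mul_le_of_le_one_right (by positivity) ha.2
    rw [cos_eq_one_iff_of_lt_of_lt (by linarith) (by linarith)] at h2
    exact Prod.ext h1 (by linarith)
  have hder : ∀ p ∈ hwU a, HasFDerivWithinAt (hwL θ)
      (((cos (p.2 + θ p.1) - p.1 * sin (p.2 + θ p.1) * θ' p.1) • ContinuousLinearMap.fst ℝ ℝ ℝ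
          + (-(p.1 * sin (p.2 + θ p.1))) • ContinuousLinearMap.snd ℝ ℝ ℝ).prod
       ((sin (p.2 + θ p.1) + p.1 * cos (p.2 + θ p.1) * θ' p.1) • ContinuousLinearMap.fst ℝ ℝ ℝ
          + (p.1 * cos (p.2 + θ p.1)) • ContinuousLinearMap.snd ℝ ℝ ℝ)) (hwU a) p := by
    intro p hp
    have f1 : HasFDerivAt (fun p : ℝ × ℝ => p.1) (ContinuousLinearMap.fst ℝ ℝ ℝ) p := hasFDerivAt_fst
    have f2 : HasFDerivAt (fun p : ℝ × ℝ => p.2) (ContinuousLinearMap.snd ℝ ℝ ℝ) p := hasFDerivAt_snd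
    have f3 : HasFDerivAt (fun p : ℝ × ℝ => p.2 + θ p.1)
        (ContinuousLinearMap.snd ℝ ℝ ℝ + θ' p.1 • ContinuousLinearMap.fst ℝ ℝ ℝ) p :=
      f2.add ((hθ p.1 hp.1).comp_hasFDerivAt p f1)
    have f4 := (f1.mul f3.cos).prodMk (f1.mul f3.sin)
    refine HasFDerivAt.hasFDerivWithinAt (f4.congr_fderiv ?_)
    ext <;> simp <;> ring
  rw [integral_image_eq_integral_abs_det_fderiv_smul volume (hwU_open a).measurableSet hder hinj]
  refine setIntegral_congr_fun (hwU_open a).measurableSet ?_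
  intro p hp
  have hp1 : 0 < p.1 := hp.1
  simp only [hw_det, smul_eq_mul]
  congr 1
  have := sin_sq_add_cos_sq (p.2 + θ p.1)
  rw [show (cos (p.2 + θ p.1) - p.1 * sin (p.2 + θ p.1) * θ' p.1) * (p.1 * cos (p.2 + θ p.1))
    - -(p.1 * sin (p.2 + θ p.1)) * (sin (p.2 + θ p.1) + p.1 * cos (p.2 + θ p.1) * θ' p.1) = p.1 by
      linear_combination p.1 * this]
  exact abs_of_pos hp1

lemma hw_compact {a : ℝ} (ha : a ∈ Ioc (0:ℝ) 1) {θ : ℝ → ℝ}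
    (hθ : ContinuousOn θ (Ioi 0)) {S : Set (ℝ × ℝ)} (hS : IsCompact S)
    (hSΩ : S ⊆ curvedWedge a θ) : IsCompact {p ∈ hwU a | hwL θ p ∈ S} := by
  have h0 : (0 : ℝ × ℝ) ∉ S := by
    intro h
    obtain ⟨p, hp, h1⟩ := (hw_image a θ).symm ▸ hSΩ h
    have := hw_sq θ p
    rw [h1] at this
    have hp1 : 0 < p.1 := hp.1
    simp at this
    exact hp1.ne' (pow_eq_zero_iff two_ne_zero |>.1 this.symm)
  obtain ⟨ε, hε, hb⟩ := Metric.isOpen_iff.1 hS.isClosed.isOpen_compl 0 h0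
  obtain ⟨R, hR⟩ := hS.isBounded.subset_closedBall 0
  have hcont : ContinuousOn (hwL θ) (Icc ε (2 * R) ×ˢ Icc 0 (2 * π * a)) := by
    have hc : ContinuousOn (fun p : ℝ × ℝ => p.2 + θ p.1) (Icc ε (2 * R) ×ˢ Icc 0 (2 * π * a)) :=
      continuousOn_snd.add (hθ.comp continuousOn_fst (fun p hp => hε.trans_le hp.1.1))
    exact (continuousOn_fst.mul (continuous_cos.comp_continuousOn hc)).prodMk
      (continuousOn_fst.mul (continuous_sin.comp_continuousOn hc))
  have hcl : IsCompact ((Icc ε (2 * R) ×ˢ Icc 0 (2 * π * a)) ∩ hwL θ ⁻¹' S) :=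
    (isCompact_Icc.prod isCompact_Icc).of_isClosed_subset
      (hcont.preimage_isClosed_of_isClosed (isClosed_Icc.prod isClosed_Icc) hS.isClosed)
      inter_subset_left
  convert hcl using 1
  ext p
  have b5 : 2 * π * a ≤ 2 * π := mul_le_of_le_one_right (by positivity) ha.2
  have b6 : 0 < 2 * π * a := by have := ha.1; positivity
  constructor
  · rintro ⟨hp, hpS⟩
    have hp1 : 0 < p.1 := hp.1
    refine ⟨⟨⟨?_, ?_⟩, hp.2.1.le, hp.2.2.le⟩, hpS⟩
    · by_contra hlt
      push Not at hlt
      refine hb ?_ hpS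
      rw [mem_ball_zero_iff, Prod.norm_def, max_lt_iff]
      simp only [hwL, norm_mul, Real.norm_eq_abs, abs_of_pos hp1]
      have := abs_cos_le_one (p.2 + θ p.1)
      have := abs_sin_le_one (p.2 + θ p.1)
      constructor <;> nlinarith
    · have h1 := hR hpS
      rw [mem_closedBall_zero_iff, Prod.norm_def, max_le_iff] at h1
      have h2 := hw_sq θ p
      have h3 : (hwL θ p).1 ^ 2 ≤ R ^ 2 := by
        rw [← sq_abs]; have := h1.1; rw [Real.norm_eq_abs] at this; gcongr
      have h4 : (hwL θ p).2 ^ 2 ≤ R ^ 2 := by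
        rw [← sq_abs]; have := h1.2; rw [Real.norm_eq_abs] at this; gcongr
      have hR0 : 0 ≤ R := (norm_nonneg _).trans h1.1
      nlinarith
  · rintro ⟨⟨hp1, hp2⟩, hpS⟩
    have hp0 : 0 < p.1 := hε.trans_le hp1.1
    refine ⟨⟨hp0, ?_⟩, hpS⟩
    obtain ⟨q, hq, h1⟩ := (hw_image a θ).symm ▸ hSΩ hpS
    obtain ⟨-, h2⟩ := hw_inj0 hq.1 hp0 h1
    have b3 := hq.2.1
    have b4 := hq.2.2
    have b7 := hp2.1
    have b8 := hp2.2
    rw [cos_eq_one_iff_of_lt_of_lt (by linarith) (by linarith)] at h2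
    have : p.2 = q.2 := by linarith
    rw [this]; exact hq.2

lemma hw_data {a : ℝ} (ha : a ∈ Ioc (0:ℝ) 1) {θ θ' : ℝ → ℝ}
    (hθ : ∀ r > 0, HasDerivAt θ (θ' r) r) {u : ℝ × ℝ → ℝ} (hu : ContDiff ℝ 1 u)
    (huc : HasCompactSupport u) (hus : tsupport u ⊆ curvedWedge a θ) :
    HWData (hwU a) θ' (fun p => u (hwL θ p))
      (fun p => cos (p.2 + θ p.1) * fderiv ℝ u (hwL θ p) (1, 0)
        + sin (p.2 + θ p.1) * fderiv ℝ u (hwL θ p) (0, 1))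
      (fun p => p.1 * (- sin (p.2 + θ p.1) * fderiv ℝ u (hwL θ p) (1, 0)
        + cos (p.2 + θ p.1) * fderiv ℝ u (hwL θ p) (0, 1))) := by
  have hθc : ContinuousOn θ (Ioi 0) := fun r hr => (hθ r hr).continuousAt.continuousWithinAt
  have hc : ContinuousOn (fun p : ℝ × ℝ => p.2 + θ p.1) (hwU a) :=
      continuousOn_snd.add (hθc.comp continuousOn_fst (fun p hp => hp.1))
  have hL : ContinuousOn (hwL θ) (hwU a) :=
    (continuousOn_fst.mul (continuous_cos.comp_continuousOn hc)).prodMk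
      (continuousOn_fst.mul (continuous_sin.comp_continuousOn hc))
  have hcc := continuous_cos.comp_continuousOn hc
  have hcs := continuous_sin.comp_continuousOn hc
  have hg : ∀ v : ℝ × ℝ, ContinuousOn (fun p => fderiv ℝ u (hwL θ p) v) (hwU a) := fun v =>
    ((hu.continuous_fderiv one_ne_zero).clm_apply continuous_const).comp_continuousOn hL
  have hlin : ∀ (A : ℝ × ℝ →L[ℝ] ℝ) (x y : ℝ), A (x, y) = x * A (1, 0) + y * A (0, 1) := by
    intro A x y
    have : ((x, y) : ℝ × ℝ) = x • (1, 0) + y • (0, 1) := by simp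
    rw [this, map_add, map_smul, map_smul]; simp
  have hdu : ∀ x, HasFDerivAt u (fderiv ℝ u x) x := fun x =>
    ((hu.differentiable one_ne_zero) x).hasFDerivAt
  refine ⟨⟨{p ∈ hwU a | hwL θ p ∈ tsupport u}, hw_compact ha hθc huc hus, fun p hp => hp.1,
    ?_, ?_, ?_⟩, hu.continuous.comp_continuousOn hL,
    (hcc.mul (hg _)).add (hcs.mul (hg _)),
    continuousOn_fst.mul ((hcs.neg.mul (hg _)).add (hcc.mul (hg _))), ?_, ?_⟩
  · rintro p ⟨h1, h2⟩
    exact image_eq_zero_of_notMem_tsupport fun h => h2 ⟨h1, h⟩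
  · rintro p ⟨h1, h2⟩
    have : fderiv ℝ u (hwL θ p) = 0 := fderiv_of_notMem_tsupport ℝ fun h => h2 ⟨h1, h⟩
    simp [this]
  · rintro p ⟨h1, h2⟩
    have : fderiv ℝ u (hwL θ p) = 0 := fderiv_of_notMem_tsupport ℝ fun h => h2 ⟨h1, h⟩
    simp [this]
  · intro p hp
    have f1 : HasDerivAt (fun s : ℝ => p.2 + θ s) (θ' p.1) p.1 := (hθ p.1 hp.1).const_add _
    have f2 : HasDerivAt (fun s => hwL θ (s, p.2)) (_, _) p.1 :=
      ((hasDerivAt_id p.1).mul f1.cos).prodMk ((hasDerivAt_id p.1).mul f1.sin)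
    refine ((hdu (hwL θ p)).comp_hasDerivAt p.1 f2).congr_deriv ?_
    rw [hlin]
    simp only [id]
    ring
  · intro p hp
    have f1 : HasDerivAt (fun s : ℝ => s + θ p.1) 1 p.2 := (hasDerivAt_id p.2).add_const _
    have f2 : HasDerivAt (fun s => hwL θ (p.1, s)) (_, _) p.2 :=
      (f1.cos.const_mul p.1).prodMk (f1.sin.const_mul p.1)
    refine ((hdu (hwL θ p)).comp_hasDerivAt p.2 f2).congr_deriv ?_
    rw [hlin]
    ring

/-- **Improved Hardy inequality in a non-trivially curved wedge.**
If `a ∈ (0,1]`, `θ ∈ C¹([0,∞))`, `θ'` has compact support and is not identically zero,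
then there is `c > 0` such that for every `C¹` function `u` with compact support in the
curved wedge `Ω`,
`∫_Ω |∇u|² - (1/(4a²)) ∫_Ω u²/|x|² ≥ c ∫_Ω u²/(1 + |x|² log²|x|)`. -/
theorem improved_hardy_curved_wedge
    (a : ℝ) (ha : a ∈ Ioc (0:ℝ) 1)
    (θ θ' : ℝ → ℝ)
    (hderiv : ∀ r ∈ Ici (0:ℝ), HasDerivWithinAt θ (θ' r) (Ici 0) r)
    (hcont : ContinuousOn θ' (Ici 0))
    (hsupp : HasCompactSupport θ')
    (hne : ∃ r ∈ Ioi (0:ℝ), θ' r ≠ 0) :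
    ∃ c > 0, ∀ u : ℝ × ℝ → ℝ,
      ContDiff ℝ 1 u → HasCompactSupport u → tsupport u ⊆ curvedWedge a θ →
      (∫ x in curvedWedge a θ, ((fderiv ℝ u x (1, 0)) ^ 2 + (fderiv ℝ u x (0, 1)) ^ 2))
          - (1 / (4 * a ^ 2)) * ∫ x in curvedWedge a θ, (u x) ^ 2 / enorm2 x ^ 2
        ≥ c * ∫ x in curvedWedge a θ,
            (u x) ^ 2 / (1 + enorm2 x ^ 2 * (Real.log (enorm2 x)) ^ 2) := by
  have hθ : ∀ r > 0, HasDerivAt θ (θ' r) r := fun r hr =>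
    (hderiv r (le_of_lt hr)).hasDerivAt (Ici_mem_nhds hr)
  have ha0 : 0 < a := ha.1
  obtain ⟨r₀, hr₀, hτ₀⟩ := hne
  have hr₀' : 0 < r₀ := hr₀
  have habs : 0 < |θ' r₀| := abs_pos.2 hτ₀
  set σ : ℝ := θ' r₀ / |θ' r₀| with hσdef
  have hσ2 : σ ^ 2 = 1 := by
    rw [hσdef, div_pow, sq_abs]; exact div_self (pow_ne_zero 2 hτ₀)
  have hσ1 : σ * θ' r₀ = |θ' r₀| := by
    rw [hσdef, div_mul_eq_mul_div, ← sq, ← sq_abs, sq]; exact mul_div_cancel_right₀ _ habs.ne'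
  have hτc : ContinuousAt θ' r₀ := hcont.continuousAt (Ici_mem_nhds hr₀')
  have hev1 : ∀ᶠ r in nhds r₀, |θ' r₀| / 2 < σ * θ' r :=
    (continuousAt_const.mul hτc).eventually (lt_mem_nhds (by
      show |θ' r₀| / 2 < σ * θ' r₀
      rw [hσ1]; linarith))
  have hev2 : ∀ᶠ r in nhds r₀, |θ' r| < 2 * |θ' r₀| :=
    hτc.abs.eventually (gt_mem_nhds (by linarith))
  obtain ⟨ρ₁, hρ₁, hball⟩ := Metric.eventually_nhds_iff.1 (hev1.and hev2)
  set ρ : ℝ := min ρ₁ r₀ / 2 with hρdef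
  have hmin : 0 < min ρ₁ r₀ := lt_min hρ₁ hr₀'
  have hρ : 0 < ρ := by positivity
  have hρ1 : ρ < ρ₁ := by have := min_le_left ρ₁ r₀; linarith
  have hρ2 : ρ < r₀ := by have := min_le_right ρ₁ r₀; linarith
  have hIcc : ∀ r ∈ Icc (r₀ - ρ) (r₀ + ρ), |θ' r₀| / 2 < σ * θ' r ∧ |θ' r| < 2 * |θ' r₀| := by
    intro r hr
    apply hball
    rw [Real.dist_eq, abs_lt]
    constructor <;> linarith [hr.1, hr.2]
  let χ : ContDiffBump r₀ := ⟨ρ / 2, ρ, by positivity, by linarith⟩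
  have hχc : ContDiff ℝ 1 χ := χ.contDiff
  obtain ⟨D, hD⟩ := (χ.hasCompactSupport.deriv).exists_bound_of_continuous
    (hχc.continuous_deriv le_rfl)
  set k : ℝ := 1 / (2 * a) with hk
  have hk0 : 0 < k := by positivity
  have hU := hwU_open a
  have hr : ∀ p ∈ hwU a, 0 < p.1 := fun p hp => hp.1
  have hs : ∀ p ∈ hwU a, 0 < sin (k * p.2) := by
    intro p hp
    have h1 := hp.2.1
    have h2 := hp.2.2
    apply sin_pos_of_pos_of_lt_pi (by positivity)
    rw [hk, div_mul_eq_mul_div, div_lt_iff₀ (by positivity)]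
    linarith
  have hτ : ContinuousOn (fun p : ℝ × ℝ => θ' p.1) (hwU a) :=
    hcont.comp continuousOn_fst (fun p hp => mem_Ici.2 (le_of_lt (hr p hp)))
  obtain ⟨c₁, hc₁, H1⟩ := hw_local hU hk0 hr hs hτ (χ := χ) hχc
    (fun r => by rw [abs_of_nonneg χ.nonneg]; exact χ.le_one) (D := D) hD
    (p₀ := r₀ - ρ) (q₀ := r₀ + ρ) (δ := |θ' r₀| / 2) (T := 2 * |θ' r₀|) (σ := σ)
    (by linarith) (by linarith) (by positivity) hσ2
    (fun r hne => by
      have : r ∈ Function.support χ := hne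
      rw [χ.support_eq, Metric.mem_ball, Real.dist_eq, abs_lt] at this
      have h3 : χ.rOut = ρ := rfl
      rw [h3] at this
      constructor <;> linarith [this.1, this.2])
    (fun r hr => (hIcc r hr).1.le) (fun r hr => (hIcc r hr).2.le)
  obtain ⟨c₂, hc₂, C, hC, H2⟩ := hw_global hU hr hs hτ (χ := χ) χ.continuous
    (p₀ := r₀ - ρ / 2) (q₀ := r₀ + ρ / 2) (by linarith) (by linarith)
    (fun r hr => by
      apply χ.one_of_mem_closedBall
      have h3 : χ.rIn = ρ / 2 := rfl
      rw [Metric.mem_closedBall, Real.dist_eq, abs_le, h3]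
      constructor <;> linarith [hr.1, hr.2])
  refine ⟨c₂ / (1 + C / c₁), by positivity, fun u hu huc hus => ?_⟩
  have hdat := hw_data ha hθ hu huc hus
  have G1 := H1 _ _ _ hdat
  have G2 := H2 _ _ _ hdat
  rw [hw_cov ha hθ, hw_cov ha hθ, hw_cov ha hθ]
  have hen : ∀ p ∈ hwU a, enorm2 (hwL θ p) = p.1 := by
    intro p hp
    rw [enorm2, hw_sq, sqrt_sq (hr p hp).le]
  have hr' : ∀ p ∈ hwU a, p.1 ≠ 0 := fun p hp => (hr p hp).ne'
  have clog : ContinuousOn (fun p : ℝ × ℝ => log p.1) (hwU a) :=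
    ContinuousOn.log (by fun_prop) hr'
  have cfst : ContinuousOn (fun p : ℝ × ℝ => p.1) (hwU a) := by fun_prop
  have cW : ContinuousOn (fun p : ℝ × ℝ => p.1 / (1 + p.1 ^ 2 * log p.1 ^ 2)) (hwU a) := by
    refine cfst.div (continuousOn_const.add ((cfst.pow 2).mul (clog.pow 2))) ?_
    intro p hp
    show 1 + p.1 ^ 2 * log p.1 ^ 2 ≠ 0
    positivity
  have cχ : ContinuousOn (fun p : ℝ × ℝ => χ p.1 ^ 2) (hwU a) :=
    ((χ.continuous.comp continuous_fst).pow 2).continuousOn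
  have iW := hdat.intg hU cW
  have iχ := hdat.intg hU cχ
  have i2 := hdat.intg hU (g := fun p => 1 / p.1) (continuousOn_const.div cfst hr')
  have i1 : IntegrableOn (fun p => p.1 * (fderiv ℝ u (hwL θ p) (1, 0) ^ 2
      + fderiv ℝ u (hwL θ p) (0, 1) ^ 2)) (hwU a) := by
    obtain ⟨K, hK, hKU, -, h2, h3⟩ := hdat.ex
    have := hw_integrableOn hU hK hKU
      ((cfst.mul (hdat.hd.pow 2)).add ((hdat.he.pow 2).div cfst hr'))
      (fun p hp => by
        have e2 := h2 p hp
        have e3 := h3 p hp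
        simp only [Pi.add_apply, Pi.mul_apply, Pi.pow_apply, Pi.div_apply]; rw [e2, e3]; simp)
    refine this.congr_fun ?_ hU.measurableSet
    intro p hp
    have hp1 := hr' p hp
    have hsc := sin_sq_add_cos_sq (p.2 + θ p.1)
    simp only [Pi.add_apply, Pi.mul_apply, Pi.pow_apply, Pi.div_apply]
    have e1 : (p.1 * (- sin (p.2 + θ p.1) * fderiv ℝ u (hwL θ p) (1, 0)
        + cos (p.2 + θ p.1) * fderiv ℝ u (hwL θ p) (0, 1))) ^ 2 / p.1
        = p.1 * (- sin (p.2 + θ p.1) * fderiv ℝ u (hwL θ p) (1, 0)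
        + cos (p.2 + θ p.1) * fderiv ℝ u (hwL θ p) (0, 1)) ^ 2 := by field_simp
    rw [e1]
    linear_combination p.1 * (fderiv ℝ u (hwL θ p) (1, 0) ^ 2
      + fderiv ℝ u (hwL θ p) (0, 1) ^ 2) * hsc
  have E2 : ∫ p in hwU a, p.1 * (u (hwL θ p) ^ 2 / enorm2 (hwL θ p) ^ 2)
      = ∫ p in hwU a, 1 / p.1 * u (hwL θ p) ^ 2 := by
    refine setIntegral_congr_fun hU.measurableSet ?_
    intro p hp
    have hp1 := hr' p hp
    simp only [hen p hp]
    field_simp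
  have E3 : ∫ p in hwU a, p.1 * (u (hwL θ p) ^ 2
        / (1 + enorm2 (hwL θ p) ^ 2 * log (enorm2 (hwL θ p)) ^ 2))
      = ∫ p in hwU a, p.1 / (1 + p.1 ^ 2 * log p.1 ^ 2) * u (hwL θ p) ^ 2 := by
    refine setIntegral_congr_fun hU.measurableSet ?_
    intro p hp
    simp only [hen p hp]
    ring
  have EQ : ∫ p in hwU a, (p.1 * (cos (p.2 + θ p.1) * fderiv ℝ u (hwL θ p) (1, 0)
        + sin (p.2 + θ p.1) * fderiv ℝ u (hwL θ p) (0, 1)) ^ 2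
        + (p.1 * (- sin (p.2 + θ p.1) * fderiv ℝ u (hwL θ p) (1, 0)
        + cos (p.2 + θ p.1) * fderiv ℝ u (hwL θ p) (0, 1))) ^ 2 / p.1
        - k ^ 2 * u (hwL θ p) ^ 2 / p.1)
      = (∫ p in hwU a, p.1 * (fderiv ℝ u (hwL θ p) (1, 0) ^ 2
      + fderiv ℝ u (hwL θ p) (0, 1) ^ 2))
        - 1 / (4 * a ^ 2) * ∫ p in hwU a, 1 / p.1 * u (hwL θ p) ^ 2 := by
    rw [← integral_const_mul, ← integral_sub i1 (i2.const_mul _)]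
    refine setIntegral_congr_fun hU.measurableSet ?_
    intro p hp
    have hp1 := hr' p hp
    have hsc := sin_sq_add_cos_sq (p.2 + θ p.1)
    have hk2 : k ^ 2 = 1 / (4 * a ^ 2) := by rw [hk]; ring
    simp only [hk2]
    have e1 : (p.1 * (- sin (p.2 + θ p.1) * fderiv ℝ u (hwL θ p) (1, 0)
        + cos (p.2 + θ p.1) * fderiv ℝ u (hwL θ p) (0, 1))) ^ 2 / p.1
        = p.1 * (- sin (p.2 + θ p.1) * fderiv ℝ u (hwL θ p) (1, 0)
        + cos (p.2 + θ p.1) * fderiv ℝ u (hwL θ p) (0, 1)) ^ 2 := by field_simp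
    rw [e1]
    linear_combination p.1 * (fderiv ℝ u (hwL θ p) (1, 0) ^ 2
      + fderiv ℝ u (hwL θ p) (0, 1) ^ 2) * hsc
  have E1' : ∫ p in hwU a, (c₁ * χ p.1 ^ 2) * u (hwL θ p) ^ 2
      = c₁ * ∫ p in hwU a, χ p.1 ^ 2 * u (hwL θ p) ^ 2 := by
    rw [← integral_const_mul]; simp only [mul_assoc]
  have E2' : ∫ p in hwU a, (c₂ * (p.1 / (1 + p.1 ^ 2 * log p.1 ^ 2)) - C * χ p.1 ^ 2)
        * u (hwL θ p) ^ 2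
      = c₂ * (∫ p in hwU a, p.1 / (1 + p.1 ^ 2 * log p.1 ^ 2) * u (hwL θ p) ^ 2)
        - C * ∫ p in hwU a, χ p.1 ^ 2 * u (hwL θ p) ^ 2 := by
    rw [← integral_const_mul, ← integral_const_mul,
      ← integral_sub (iW.const_mul _) (iχ.const_mul _)]
    congr 1; ext p; ring
  rw [E1', EQ] at G1
  rw [E2', EQ] at G2
  rw [E2, E3]
  rw [ge_iff_le, div_mul_eq_mul_div, div_le_iff₀ (by positivity)]
  generalize ((∫ p in hwU a, p.1 * (fderiv ℝ u (hwL θ p) (1, 0) ^ 2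
      + fderiv ℝ u (hwL θ p) (0, 1) ^ 2))
        - 1 / (4 * a ^ 2) * ∫ p in hwU a, 1 / p.1 * u (hwL θ p) ^ 2) = Q at *
  generalize (∫ p in hwU a, p.1 / (1 + p.1 ^ 2 * log p.1 ^ 2) * u (hwL θ p) ^ 2) = W at *
  generalize (∫ p in hwU a, χ p.1 ^ 2 * u (hwL θ p) ^ 2) = Z at *
  have h5 : C * Z ≤ Q * (C / c₁) := by
    rw [← mul_div_assoc, le_div_iff₀ hc₁]
    nlinarith
  linarith
end
end

section
/- Let a ∈ (0,1] and let θ ∈ C¹((0,∞)). Then for every continuously differentiable function u with compact support in Ω one has ∫_Ω |∇u(x)|² dx ≥ (1/(4a²)) ∫_Ω |u(x)|²/|x|² dx. -/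
open MeasureTheory Real Set

noncomputable section

lemma wirt_aux (g g' : ℝ → ℝ) (α β μ : ℝ) (hαβ : α < β) (hμ0 : 0 ≤ μ) (hμ : μ * (β - α) < π)
    (hg : ∀ x, HasDerivAt g (g' x) x) (hg' : Continuous g') (h0 : g α = 0) (h1 : g β = 0) :
    μ ^ 2 * ∫ x in α..β, g x ^ 2 ≤ ∫ x in α..β, g' x ^ 2 := by
  have hgc : Continuous g := continuous_iff_continuousAt.2 fun x => (hg x).continuousAt
  set m := (α + β) / 2 with hm
  have hcos : ∀ x ∈ Icc α β, Real.cos (μ * (x - m)) ≠ 0 := by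
    intro x hx
    apply ne_of_gt
    have e1 : μ * (x - m) ≤ μ * ((β - α) / 2) :=
      mul_le_mul_of_nonneg_left (by rw [hm]; linarith [hx.2]) hμ0
    have e2 : μ * (-((β - α) / 2)) ≤ μ * (x - m) :=
      mul_le_mul_of_nonneg_left (by rw [hm]; linarith [hx.1]) hμ0
    apply Real.cos_pos_of_mem_Ioo
    constructor <;> nlinarith
  have hT : ContinuousOn (fun x => Real.tan (μ * (x - m))) (Icc α β) := by
    intro x hx
    have := (Real.continuousAt_tan.2 (hcos x hx))
    exact (ContinuousAt.comp (f := fun x => μ * (x - m)) this (by fun_prop)).continuousWithinAt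
  set F' : ℝ → ℝ := fun x => - μ ^ 2 * (1 + Real.tan (μ * (x - m)) ^ 2) * g x ^ 2
    - 2 * μ * Real.tan (μ * (x - m)) * g x * g' x with hF'
  have hF'c : ContinuousOn F' (Icc α β) := by
    have h2 := hgc.continuousOn (s := Icc α β)
    have h3 := hg'.continuousOn (s := Icc α β)
    rw [hF']; fun_prop
  have hi : ∫ x in α..β, F' x = 0 := by
    rw [intervalIntegral.integral_eq_sub_of_hasDerivAt
      (f := fun x => - μ * Real.tan (μ * (x - m)) * g x ^ 2)]
    · simp [h0, h1]
    · intro x hx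
      rw [uIcc_of_le hαβ.le] at hx
      have hc := hcos x hx
      have d1 : HasDerivAt (fun x => μ * (x - m)) μ x := by
        simpa using ((hasDerivAt_id x).sub_const m).const_mul μ
      have d2 := (Real.hasDerivAt_tan hc).comp x d1
      have d3 := (d2.const_mul (-μ)).mul ((hg x).pow 2)
      refine HasDerivAt.congr_deriv d3 ?_
      simp only [hF', Function.comp, one_div, ← Real.inv_one_add_tan_sq hc, inv_inv]
      norm_num
      ring
    · exact ContinuousOn.intervalIntegrable_of_Icc hαβ.le hF'c
  have hmono : ∫ x in α..β, F' x ≤ ∫ x in α..β, (g' x ^ 2 - μ ^ 2 * g x ^ 2) := by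
    apply intervalIntegral.integral_mono_on hαβ.le
    · exact ContinuousOn.intervalIntegrable_of_Icc hαβ.le hF'c
    · exact Continuous.intervalIntegrable (by fun_prop) _ _
    · intro x _
      simp only [hF']
      nlinarith [sq_nonneg (g' x + μ * Real.tan (μ * (x - m)) * g x)]
  rw [hi, intervalIntegral.integral_sub (Continuous.intervalIntegrable (by fun_prop) _ _)
    (Continuous.intervalIntegrable (by fun_prop) _ _), intervalIntegral.integral_const_mul] at hmono
  linarith

lemma wirt (g g' : ℝ → ℝ) (α β l : ℝ) (hαβ : α < β) (hl0 : 0 < l) (hl : l * (β - α) = π)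
    (hg : ∀ x, HasDerivAt g (g' x) x) (hg' : Continuous g') (h0 : g α = 0) (h1 : g β = 0) :
    l ^ 2 * ∫ x in α..β, g x ^ 2 ≤ ∫ x in α..β, g' x ^ 2 := by
  have ht : Filter.Tendsto (fun μ : ℝ => μ ^ 2 * ∫ x in α..β, g x ^ 2) (nhdsWithin l (Iio l))
      (nhds (l ^ 2 * ∫ x in α..β, g x ^ 2)) := by
    apply Filter.Tendsto.mono_left _ nhdsWithin_le_nhds
    apply Continuous.tendsto (by fun_prop)
  refine le_of_tendsto ht ?_
  filter_upwards [Ioo_mem_nhdsLT hl0] with μ hμ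
  exact wirt_aux g g' α β μ hαβ hμ.1.le
    (by rw [← hl]; exact mul_lt_mul_of_pos_right hμ.2 (by linarith)) hg hg' h0 h1

lemma circ (a : ℝ) (ha : a ∈ Ioc (0:ℝ) 1) (θ : ℝ → ℝ) (u : ℝ × ℝ → ℝ) (hu : ContDiff ℝ 1 u)
    (hs : tsupport u ⊆ curvedWedge a θ) (r : ℝ) (hr : 0 < r) :
    (1 / (4 * a ^ 2)) * ∫ φ in (-π)..π, u (r * Real.cos φ, r * Real.sin φ) ^ 2 ≤
      ∫ φ in (-π)..π, r ^ 2 * ((fderiv ℝ u (r * Real.cos φ, r * Real.sin φ) (1, 0)) ^ 2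
        + (fderiv ℝ u (r * Real.cos φ, r * Real.sin φ) (0, 1)) ^ 2) := by
  obtain ⟨ha0, ha1⟩ := ha
  have hpi := Real.pi_pos
  have hfc : Continuous (fderiv ℝ u) := hu.continuous_fderiv one_ne_zero
  have huc := hu.continuous
  set g : ℝ → ℝ := fun φ => u (r * Real.cos φ, r * Real.sin φ) with hgdef
  set g' : ℝ → ℝ := fun φ =>
    fderiv ℝ u (r * Real.cos φ, r * Real.sin φ) (r * (-Real.sin φ), r * Real.cos φ) with hg'def
  set h : ℝ → ℝ := fun φ => r ^ 2 * ((fderiv ℝ u (r * Real.cos φ, r * Real.sin φ) (1, 0)) ^ 2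
        + (fderiv ℝ u (r * Real.cos φ, r * Real.sin φ) (0, 1)) ^ 2) with hhdef
  have hg : ∀ x, HasDerivAt g (g' x) x := by
    intro x
    have d := ((Real.hasDerivAt_cos x).const_mul r).prodMk ((Real.hasDerivAt_sin x).const_mul r)
    exact ((hu.differentiable one_ne_zero _).hasFDerivAt).comp_hasDerivAt x d
  have hgc : Continuous g := by rw [hgdef]; fun_prop
  have hg'c : Continuous g' := by
    rw [hg'def]; exact (hfc.comp (by fun_prop)).clm_apply (by fun_prop)
  have hhc : Continuous h := by
    have e1 : Continuous fun φ : ℝ => fderiv ℝ u (r * Real.cos φ, r * Real.sin φ) :=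
      hfc.comp (by fun_prop)
    rw [hhdef]
    have := e1.clm_apply (continuous_const (y := ((1:ℝ),(0:ℝ))))
    have := e1.clm_apply (continuous_const (y := ((0:ℝ),(1:ℝ))))
    fun_prop
  have hle : ∀ x, g' x ^ 2 ≤ h x := by
    intro x
    have e : g' x = r * (-Real.sin x * fderiv ℝ u (r * Real.cos x, r * Real.sin x) (1, 0)
        + Real.cos x * fderiv ℝ u (r * Real.cos x, r * Real.sin x) (0, 1)) := by
      have : ((r * (-Real.sin x), r * Real.cos x) : ℝ × ℝ)
        = (r * (-Real.sin x)) • ((1:ℝ), (0:ℝ)) + (r * Real.cos x) • ((0:ℝ), (1:ℝ)) := by simp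
      simp only [hg'def]
      rw [this, map_add, map_smul, map_smul, smul_eq_mul, smul_eq_mul]; ring
    rw [e, hhdef, mul_pow]
    dsimp only
    apply mul_le_mul_of_nonneg_left _ (sq_nonneg r)
    generalize fderiv ℝ u (r * Real.cos x, r * Real.sin x) (1, 0) = p
    generalize fderiv ℝ u (r * Real.cos x, r * Real.sin x) (0, 1) = q
    have hsc := Real.sin_sq_add_cos_sq x
    have : p ^ 2 + q ^ 2 = (Real.sin x ^ 2 + Real.cos x ^ 2) * (p ^ 2 + q ^ 2) := by
      rw [hsc, one_mul]
    rw [this]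
    nlinarith [sq_nonneg (Real.cos x * p + Real.sin x * q)]
  -- vanishing
  have hz : ∀ s : ℝ, (s = 0 ∨ (2 * π * a ≤ s ∧ s ≤ 2 * π)) → g (θ r + s) = 0 := by
    intro s hs'
    by_contra hne
    obtain ⟨r', hr', φ', hφ', he⟩ := hs (subset_tsupport u hne)
    have hr'0 : 0 < r' := hr'
    rw [Prod.mk.injEq] at he
    obtain ⟨h1, h2⟩ := he
    have hsc := Real.sin_sq_add_cos_sq (θ r + s)
    have hsc' := Real.sin_sq_add_cos_sq (φ' + θ r')
    have hrr : r = r' := by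
      have : r ^ 2 = r' ^ 2 := by
        calc r ^ 2 = (r * Real.cos (θ r + s)) ^ 2 + (r * Real.sin (θ r + s)) ^ 2 := by
              linear_combination (-r ^ 2) * hsc
          _ = r' ^ 2 := by rw [h1, h2]; linear_combination (r' ^ 2) * hsc'
      exact (pow_left_inj₀ hr.le hr'0.le two_ne_zero).1 this
    subst hrr
    have h1 := mul_left_cancel₀ hr.ne' h1
    have h2 := mul_left_cancel₀ hr.ne' h2
    have hc : Real.cos ((θ r + s) - (φ' + θ r)) = 1 := by
      rw [Real.cos_sub, h1, h2]; linear_combination hsc'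
    have hx : (θ r + s) - (φ' + θ r) = s - φ' := by ring
    rw [hx] at hc
    have hφ2 : φ' < 2 * π := by nlinarith [hφ'.2]
    have := (Real.cos_eq_one_iff_of_lt_of_lt (x := s - φ')
      (by rcases hs' with h | h <;> linarith [hφ'.1, hφ'.2])
      (by rcases hs' with h | h <;> linarith [hφ'.1, hφ'.2])).1 hc
    rcases hs' with h | h <;> linarith [hφ'.1, hφ'.2]
  have hL : 2 * π * a ≤ 2 * π := by nlinarith
  have hLp : 0 < 2 * π * a := by positivity
  have hw := wirt g g' (θ r) (θ r + 2 * π * a) (1 / (2 * a)) (by linarith) (by positivity)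
    (by field_simp; ring) hg hg'c (by simpa using hz 0 (Or.inl rfl))
    (hz (2 * π * a) (Or.inr ⟨le_rfl, hL⟩))
  have per : ∀ f : ℝ → ℝ, Function.Periodic f (2 * π) →
      ∫ x in (-π)..π, f x = ∫ x in (θ r)..(θ r + 2 * π), f x := by
    intro f hf
    have := hf.intervalIntegral_add_eq (-π) (θ r)
    rw [← this]; congr 1; ring
  rw [per (fun φ => g φ ^ 2) (by intro x; simp [hgdef]), per h (by intro x; simp [hhdef])]
  have ii : ∀ (f : ℝ → ℝ), Continuous f → ∀ x y, IntervalIntegrable f volume x y :=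
    fun f hf x y => hf.intervalIntegrable x y
  rw [← intervalIntegral.integral_add_adjacent_intervals (b := θ r + 2 * π * a)
      (ii (fun φ => g φ ^ 2) (by fun_prop) _ _) (ii _ (by fun_prop) _ _),
    ← intervalIntegral.integral_add_adjacent_intervals (b := θ r + 2 * π * a)
      (ii h hhc _ _) (ii h hhc _ _)]
  have z1 : ∫ x in (θ r + 2 * π * a)..(θ r + 2 * π), g x ^ 2 = 0 := by
    apply intervalIntegral.integral_zero_ae
    refine Filter.Eventually.of_forall fun x hx => ?_
    rw [uIoc_of_le (by linarith)] at hx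
    have := hz (x - θ r) (Or.inr ⟨by linarith [hx.1], by linarith [hx.2]⟩)
    rw [add_sub_cancel] at this
    simp [this]
  have z2 : 0 ≤ ∫ x in (θ r + 2 * π * a)..(θ r + 2 * π), h x :=
    intervalIntegral.integral_nonneg (by linarith) fun x _ => by rw [hhdef]; positivity
  have z3 : ∫ x in (θ r)..(θ r + 2 * π * a), g' x ^ 2 ≤ ∫ x in (θ r)..(θ r + 2 * π * a), h x :=
    intervalIntegral.integral_mono_on (by linarith) (ii _ (by fun_prop) _ _) (ii _ hhc _ _)
      fun x _ => hle x
  have e : (1 / (2 * a)) ^ 2 = 1 / (4 * a ^ 2) := by field_simp; ring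
  rw [e] at hw
  rw [z1, add_zero]
  linarith

/-- **The immediate Hardy inequality in a curved wedge.**
For `a ∈ (0,1]` and `θ ∈ C¹((0,∞))`, every `C¹` function `u` with compact support in the
curved wedge `Ω` satisfies `∫_Ω |∇u|² ≥ (1/(4a²)) ∫_Ω u²/|x|²`. -/
theorem immediate_hardy_curved_wedge
    (a : ℝ) (ha : a ∈ Ioc (0:ℝ) 1)
    (θ θ' : ℝ → ℝ)
    (hderiv : ∀ r ∈ Ioi (0:ℝ), HasDerivAt θ (θ' r) r)
    (hcont : ContinuousOn θ' (Ioi 0)) :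
    ∀ u : ℝ × ℝ → ℝ,
      ContDiff ℝ 1 u → HasCompactSupport u → tsupport u ⊆ curvedWedge a θ →
      (∫ x in curvedWedge a θ, ((fderiv ℝ u x (1, 0)) ^ 2 + (fderiv ℝ u x (0, 1)) ^ 2))
        ≥ (1 / (4 * a ^ 2)) * ∫ x in curvedWedge a θ, (u x) ^ 2 / enorm2 x ^ 2 := by
  intro u hu hcs hs
  have hfc : Continuous (fderiv ℝ u) := hu.continuous_fderiv one_ne_zero
  have huc := hu.continuous
  have c1 : Continuous fun x => fderiv ℝ u x (1, 0) := hfc.clm_apply continuous_const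
  have c2 : Continuous fun x => fderiv ℝ u x (0, 1) := hfc.clm_apply continuous_const
  have hz : ∀ x, x ∉ curvedWedge a θ → u x = 0 := fun x hx =>
    image_eq_zero_of_notMem_tsupport fun h => hx (hs h)
  have hz' : ∀ x, x ∉ curvedWedge a θ → fderiv ℝ u x = 0 := fun x hx => by
    by_contra hne
    exact hx (hs (support_fderiv_subset ℝ hne))
  rw [setIntegral_eq_integral_of_forall_compl_eq_zero (fun x hx => by simp [hz' x hx]),
    setIntegral_eq_integral_of_forall_compl_eq_zero (fun x hx => by simp [hz x hx]),
    ← integral_const_mul, ge_iff_le]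
  set G : ℝ × ℝ → ℝ := fun x => (fderiv ℝ u x (1, 0)) ^ 2 + (fderiv ℝ u x (0, 1)) ^ 2 with hG
  set H : ℝ × ℝ → ℝ := fun x => 1 / (4 * a ^ 2) * ((u x) ^ 2 / enorm2 x ^ 2) with hH
  have hGc : Continuous G := by rw [hG]; fun_prop
  have hGs : HasCompactSupport G := by
    apply (hcs.fderiv ℝ).mono
    intro x hx hx0
    apply hx
    simp [hG, hx0]
  have hGi : Integrable G := hGc.integrable_of_hasCompactSupport hGs
  have hG0 : ∀ x, 0 ≤ G x := fun x => by rw [hG]; positivity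
  have hH0 : ∀ x, 0 ≤ H x := fun x => by rw [hH]; positivity
  have hec : Continuous enorm2 := by unfold enorm2; fun_prop
  have hHm : Measurable H := by
    have := huc.measurable
    have := hec.measurable
    rw [hH]; fun_prop
  have hGm := hGc.measurable
  rw [integral_eq_lintegral_of_nonneg_ae (Filter.Eventually.of_forall hH0)
      hHm.aestronglyMeasurable,
    integral_eq_lintegral_of_nonneg_ae (Filter.Eventually.of_forall hG0)
      hGm.aestronglyMeasurable]
  apply ENNReal.toReal_mono
  · exact (hGi.lintegral_lt_top).ne
  rw [← lintegral_comp_polarCoord_symm, ← lintegral_comp_polarCoord_symm]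
  have hps : Measurable (fun p : ℝ × ℝ => (p.1 * Real.cos p.2, p.1 * Real.sin p.2)) := by
    fun_prop
  simp only [polarCoord_target, polarCoord_symm_apply, smul_eq_mul]
  rw [Measure.volume_eq_prod, setLIntegral_prod _ (by fun_prop), setLIntegral_prod _ (by fun_prop)]
  apply setLIntegral_mono' measurableSet_Ioi
  intro r hr
  have hr0 : (0:ℝ) < r := hr
  have hen : ∀ φ, enorm2 (r * Real.cos φ, r * Real.sin φ) ^ 2 = r ^ 2 := by
    intro φ
    rw [enorm2, Real.sq_sqrt (by positivity)]
    linear_combination r ^ 2 * Real.sin_sq_add_cos_sq φ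
  dsimp only
  rw [lintegral_const_mul _ (by fun_prop), lintegral_const_mul _ (by fun_prop)]
  gcongr ENNReal.ofReal r * ?_
  have hHe : ∀ φ : ℝ, H (r * Real.cos φ, r * Real.sin φ)
      = (1 / (4 * a ^ 2) / r ^ 2) * u (r * Real.cos φ, r * Real.sin φ) ^ 2 := by
    intro φ
    simp only [hH, hen]; ring
  have hHc : Continuous fun φ : ℝ => H (r * Real.cos φ, r * Real.sin φ) := by
    simp only [hHe]; fun_prop
  have hGc' : Continuous fun φ : ℝ => G (r * Real.cos φ, r * Real.sin φ) := by fun_prop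
  have io : ∀ f : ℝ → ℝ, Continuous f → IntegrableOn f (Ioo (-π) π) := fun f hf =>
    (hf.integrableOn_Icc).mono_set Ioo_subset_Icc_self
  rw [← ofReal_integral_eq_lintegral_ofReal (io _ hHc) (Filter.Eventually.of_forall fun _ => hH0 _),
    ← ofReal_integral_eq_lintegral_ofReal (io _ hGc') (Filter.Eventually.of_forall fun _ => hG0 _)]
  apply ENNReal.ofReal_le_ofReal
  have hc := circ a ha θ u hu hs r hr0
  have hpp : -π ≤ π := by linarith [Real.pi_pos]
  rw [← integral_Ioc_eq_integral_Ioo, ← integral_Ioc_eq_integral_Ioo,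
    ← intervalIntegral.integral_of_le hpp, ← intervalIntegral.integral_of_le hpp]
  simp only [hHe]
  rw [intervalIntegral.integral_const_mul] at hc ⊢
  have : 0 < r ^ 2 := by positivity
  rw [div_mul_eq_mul_div, div_le_iff₀ this, mul_comm _ (r ^ 2)]
  exact hc
end
end

section
/- Let a ∈ (0,1] and let Ω₀ := { (r cos φ, r sin φ) : r ∈ (0,∞), φ ∈ (0,2πa) } be the straight wedge. For every smooth function V with compact support in Ω₀ satisfying V ≥ 0 and V not identically zero, there exists a smooth function u with compact support in Ω₀ such that ∫_{Ω₀} |∇u(x)|² dx − (1/(4a²)) ∫_{Ω₀} |u(x)|²/|x|² dx − ∫_{Ω₀} V(x) |u(x)|² dx < 0. -/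
open MeasureTheory Real Set

noncomputable section

/-- The straight wedge of opening angle `2πa`. -/
def straightWedge (a : ℝ) : Set (ℝ × ℝ) :=
  {x | ∃ r ∈ Ioi (0:ℝ), ∃ φ ∈ Ioo (0:ℝ) (2 * π * a),
    x = (r * Real.cos φ, r * Real.sin φ)}

def hwPhi (p : ℝ × ℝ) : ℝ × ℝ := (Real.exp p.1 * Real.cos p.2, Real.exp p.1 * Real.sin p.2)

def hwPsi (x : ℝ × ℝ) : ℝ × ℝ :=
  ((Complex.log (-((x.1:ℂ) + (x.2:ℂ) * Complex.I))).re,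
   (Complex.log (-((x.1:ℂ) + (x.2:ℂ) * Complex.I))).im + π)

def hwDPhi (p : ℝ × ℝ) : ℝ × ℝ →L[ℝ] ℝ × ℝ :=
  LinearMap.toContinuousLinearMap (Matrix.toLin (Module.Basis.finTwoProd ℝ) (Module.Basis.finTwoProd ℝ)
    !![Real.exp p.1 * Real.cos p.2, -(Real.exp p.1 * Real.sin p.2);
       Real.exp p.1 * Real.sin p.2, Real.exp p.1 * Real.cos p.2])

lemma hwPhi_hasFDerivAt (p : ℝ × ℝ) : HasFDerivAt hwPhi (hwDPhi p) p := by
  unfold hwPhi hwDPhi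
  rw [Matrix.toLin_finTwoProd_toContinuousLinearMap]
  have h1 : HasFDerivAt (fun p : ℝ × ℝ => Real.exp p.1) (Real.exp p.1 • ContinuousLinearMap.fst ℝ ℝ ℝ) p :=
    (hasFDerivAt_fst (𝕜 := ℝ) (p := p)).exp
  have h2 : HasFDerivAt (fun p : ℝ × ℝ => Real.cos p.2) (-Real.sin p.2 • ContinuousLinearMap.snd ℝ ℝ ℝ) p :=
    (hasFDerivAt_snd (𝕜 := ℝ) (p := p)).cos
  have h3 : HasFDerivAt (fun p : ℝ × ℝ => Real.sin p.2) (Real.cos p.2 • ContinuousLinearMap.snd ℝ ℝ ℝ) p :=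
    (hasFDerivAt_snd (𝕜 := ℝ) (p := p)).sin
  convert (h1.mul h2).prodMk (h1.mul h3) using 2 <;>
  · ext <;> simp <;> ring

lemma hwDPhi_det (p : ℝ × ℝ) : (hwDPhi p).det = Real.exp (2 * p.1) := by
  unfold hwDPhi
  simp only [LinearMap.det_toContinuousLinearMap, LinearMap.det_toLin, Matrix.det_fin_two_of]
  have := Real.sin_sq_add_cos_sq p.2
  rw [two_mul, Real.exp_add]
  linear_combination (Real.exp p.1 * Real.exp p.1) * this

lemma hwPhi_complex (p : ℝ × ℝ) : (((hwPhi p).1 : ℂ) + ((hwPhi p).2 : ℂ) * Complex.I)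
    = Complex.exp (p.1 + p.2 * Complex.I) := by
  rw [Complex.exp_add, Complex.exp_mul_I]
  simp [hwPhi]; ring

lemma hwPsi_Phi (p : ℝ × ℝ) (h : p.2 ∈ Ioo 0 (2 * π)) : hwPsi (hwPhi p) = p := by
  unfold hwPsi
  rw [hwPhi_complex]
  have : -Complex.exp (p.1 + p.2 * Complex.I) = Complex.exp (p.1 + p.2 * Complex.I - π * Complex.I) := by
    rw [Complex.exp_sub, Complex.exp_pi_mul_I, div_neg, div_one]
  rw [this, Complex.log_exp]
  · simp
  · simp; linarith [h.1]
  · simp; linarith [h.2]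

lemma hwPhi_Psi (x : ℝ × ℝ) (h : x ≠ 0) : hwPhi (hwPsi x) = x := by
  set z : ℂ := (x.1:ℂ) + (x.2:ℂ) * Complex.I with hz
  have hz1 : z.re = x.1 := by simp [hz]
  have hz2 : z.im = x.2 := by simp [hz]
  have hz0 : -z ≠ 0 := by
    intro h0
    rw [neg_eq_zero] at h0
    rw [h0] at hz1 hz2
    exact h (Prod.ext (by simpa using hz1.symm) (by simpa using hz2.symm))
  have e := hwPhi_complex (hwPsi x)
  have : (((hwPsi x).1 : ℂ) + ((hwPsi x).2 : ℂ) * Complex.I) = Complex.log (-z) + π * Complex.I := by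
    have h3 := Complex.re_add_im (Complex.log (-z))
    have h1 : (hwPsi x).1 = (Complex.log (-z)).re := rfl
    have h2 : (hwPsi x).2 = (Complex.log (-z)).im + π := rfl
    rw [h1, h2]
    push_cast
    linear_combination h3
  rw [this, Complex.exp_add, Complex.exp_log hz0, Complex.exp_pi_mul_I] at e
  have e' : (((hwPhi (hwPsi x)).1 : ℂ) + ((hwPhi (hwPsi x)).2 : ℂ) * Complex.I) = z := by
    rw [e]; ring
  have a1 := congrArg Complex.re e'
  have a2 := congrArg Complex.im e'
  apply Prod.ext
  · rw [← hz1, ← a1]; simp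
  · rw [← hz2, ← a2]; simp

lemma hwPhi_image (a : ℝ) : hwPhi '' (univ ×ˢ Ioo 0 (2 * π * a)) = straightWedge a := by
  ext x
  constructor
  · rintro ⟨p, ⟨-, hp⟩, rfl⟩
    exact ⟨Real.exp p.1, Real.exp_pos _, p.2, hp, rfl⟩
  · rintro ⟨r, hr, φ, hφ, rfl⟩
    refine ⟨(Real.log r, φ), ⟨mem_univ _, hφ⟩, ?_⟩
    simp [hwPhi, Real.exp_log (show 0 < r from hr)]

lemma hw_cov_s2 (a : ℝ) (ha : a ∈ Ioc (0:ℝ) 1) (f : ℝ × ℝ → ℝ) :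
    ∫ x in straightWedge a, f x =
      ∫ p in (univ : Set ℝ) ×ˢ Ioo 0 (2 * π * a), Real.exp (2 * p.1) * f (hwPhi p) := by
  have hs : MeasurableSet ((univ : Set ℝ) ×ˢ Ioo 0 (2 * π * a)) :=
    MeasurableSet.univ.prod measurableSet_Ioo
  rw [← hwPhi_image, integral_image_eq_integral_abs_det_fderiv_smul volume hs
    (fun x _ => (hwPhi_hasFDerivAt x).hasFDerivWithinAt)]
  · refine setIntegral_congr_fun hs fun p _ => ?_
    simp [hwDPhi_det]
  · intro p hp q hq hpq
    have hl : 2 * π * a ≤ 2 * π := by nlinarith [Real.pi_pos, ha.2]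
    rw [← hwPsi_Phi p ⟨hp.2.1, hp.2.2.trans_le hl⟩, ← hwPsi_Phi q ⟨hq.2.1, hq.2.2.trans_le hl⟩, hpq]

lemma hwPhi_continuous : Continuous hwPhi := by unfold hwPhi; fun_prop

lemma hwPhi_ne (p : ℝ × ℝ) : hwPhi p ≠ 0 := by
  intro h
  have := hwPhi_complex p
  rw [h] at this
  simp at this
  exact Complex.exp_ne_zero _ this.symm

lemma hwPsi_contDiffAt (p : ℝ × ℝ) (h : p.2 ∈ Ioo 0 (2 * π)) :
    ContDiffAt ℝ (⊤ : ℕ∞) hwPsi (hwPhi p) := by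
  have key : ContDiffAt ℝ (⊤ : ℕ∞) (fun x : ℝ × ℝ => Complex.log (-((x.1:ℂ) + (x.2:ℂ) * Complex.I))) (hwPhi p) := by
    have h1 : ContDiffAt ℝ (⊤ : ℕ∞) (fun x : ℝ × ℝ => (-((x.1:ℂ) + (x.2:ℂ) * Complex.I))) (hwPhi p) := by
      have : ContDiff ℝ (⊤ : ℕ∞) (fun x : ℝ × ℝ => (-((x.1:ℂ) + (x.2:ℂ) * Complex.I))) := by
        have e1 : ContDiff ℝ (⊤ : ℕ∞) (fun x : ℝ × ℝ => (x.1:ℂ)) :=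
          Complex.ofRealCLM.contDiff.comp contDiff_fst
        have e2 : ContDiff ℝ (⊤ : ℕ∞) (fun x : ℝ × ℝ => (x.2:ℂ)) :=
          Complex.ofRealCLM.contDiff.comp contDiff_snd
        exact (e1.add (e2.mul contDiff_const)).neg
      exact this.contDiffAt
    have hm : (-(((hwPhi p).1:ℂ) + ((hwPhi p).2:ℂ) * Complex.I)) ∈ Complex.slitPlane := by
      have hne : (-(((hwPhi p).1:ℂ) + ((hwPhi p).2:ℂ) * Complex.I)) ≠ 0 := by
        rw [hwPhi_complex]; exact neg_ne_zero.mpr (Complex.exp_ne_zero _)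
      rw [Complex.mem_slitPlane_iff_arg]
      refine ⟨?_, hne⟩
      have := congrArg Prod.snd (hwPsi_Phi p h)
      simp only [hwPsi, Complex.log_im] at this
      intro h'
      rw [h'] at this
      linarith [h.2]
    exact ((Complex.contDiffAt_log hm).restrict_scalars ℝ).comp (hwPhi p) h1
  exact (Complex.reCLM.contDiff.contDiffAt.comp _ key).prodMk
    ((Complex.imCLM.contDiff.contDiffAt.comp _ key).add contDiffAt_const)

lemma hw_exists_u (a : ℝ) (ha : a ∈ Ioc (0:ℝ) 1) (ψ χ : ℝ → ℝ)
    (hψ : ContDiff ℝ (⊤ : ℕ∞) ψ) (hχ : ContDiff ℝ (⊤ : ℕ∞) χ) (A α β : ℝ)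
    (hα : 0 < α) (hβ : β < 2 * π * a) (hψA : ∀ t, ψ t ≠ 0 → t ∈ Icc (-A) A)
    (hχA : ∀ t, χ t ≠ 0 → t ∈ Icc α β) :
    ∃ u : ℝ × ℝ → ℝ, ContDiff ℝ (⊤ : ℕ∞) u ∧ HasCompactSupport u ∧
      tsupport u ⊆ straightWedge a ∧
      ∀ p : ℝ × ℝ, p.2 ∈ Ioo 0 (2 * π * a) → u (hwPhi p) = ψ p.1 * χ p.2 := by
  classical
  have hl : 2 * π * a ≤ 2 * π := by nlinarith [Real.pi_pos, ha.2]
  set K : Set (ℝ × ℝ) := hwPhi '' (Icc (-A) A ×ˢ Icc α β) with hK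
  have hKc : IsCompact K := (isCompact_Icc.prod isCompact_Icc).image hwPhi_continuous
  have hKw : K ⊆ straightWedge a := by
    rw [← hwPhi_image]
    apply image_mono
    rintro p ⟨-, hp⟩
    exact ⟨mem_univ _, hα.trans_le hp.1, hp.2.trans_lt hβ⟩
  set u : ℝ × ℝ → ℝ := fun x => if x = 0 then 0 else ψ (hwPsi x).1 * χ (hwPsi x).2 with hu
  have hsup : Function.support u ⊆ K := by
    intro x hx
    rw [Function.mem_support] at hx
    by_cases h0 : x = 0
    · simp [hu, h0] at hx
    · simp only [hu, h0, if_false] at hx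
      exact ⟨hwPsi x, ⟨hψA _ (left_ne_zero_of_mul hx), hχA _ (right_ne_zero_of_mul hx)⟩,
        hwPhi_Psi x h0⟩
  have hts : tsupport u ⊆ K := closure_minimal hsup hKc.isClosed
  refine ⟨u, ?_, HasCompactSupport.of_support_subset_isCompact hKc hsup, hts.trans hKw, ?_⟩
  · rw [contDiff_iff_contDiffAt]
    intro x
    by_cases hx : x ∈ K
    · obtain ⟨p, ⟨-, hp⟩, rfl⟩ := hx
      have hps := hwPsi_contDiffAt p ⟨hα.trans_le hp.1, (hp.2.trans_lt hβ).trans_le hl⟩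
      have : ContDiffAt ℝ (⊤ : ℕ∞) (fun x => ψ (hwPsi x).1 * χ (hwPsi x).2) (hwPhi p) :=
        (hψ.contDiffAt.comp _ (contDiffAt_fst.comp _ hps)).mul
          (hχ.contDiffAt.comp _ (contDiffAt_snd.comp _ hps))
      refine this.congr_of_eventuallyEq ?_
      filter_upwards [isOpen_ne.mem_nhds (hwPhi_ne p)] with y hy
      have : y ≠ 0 := hy
      simp [hu, this]
    · refine (contDiffAt_const (c := (0:ℝ))).congr_of_eventuallyEq ?_
      filter_upwards [hKc.isClosed.isOpen_compl.mem_nhds hx] with y hy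
      by_contra h
      exact hy (hsup h)
  · intro p hp
    simp only [hu, hwPhi_ne, if_false]
    rw [hwPsi_Phi p ⟨hp.1, hp.2.trans_le hl⟩]

lemma hw_grad (L : ℝ) (ψ χ : ℝ → ℝ)
    (hψ : Differentiable ℝ ψ) (hχ : Differentiable ℝ χ) (u : ℝ × ℝ → ℝ) (hu : Differentiable ℝ u)
    (huw : ∀ p : ℝ × ℝ, p.2 ∈ Ioo 0 L → u (hwPhi p) = ψ p.1 * χ p.2)
    (p : ℝ × ℝ) (hp : p.2 ∈ Ioo 0 L) :
    Real.exp (2 * p.1) * ((fderiv ℝ u (hwPhi p) (1, 0)) ^ 2 + (fderiv ℝ u (hwPhi p) (0, 1)) ^ 2)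
      = (deriv ψ p.1) ^ 2 * (χ p.2) ^ 2 + (ψ p.1) ^ 2 * (deriv χ p.2) ^ 2 := by
  obtain ⟨t, φ⟩ := p
  simp only at hp ⊢
  set X := fderiv ℝ u (hwPhi (t, φ)) (1, 0) with hX
  set Y := fderiv ℝ u (hwPhi (t, φ)) (0, 1) with hY
  have hlin : ∀ c d : ℝ, fderiv ℝ u (hwPhi (t, φ)) (c, d) = c * X + d * Y := by
    intro c d
    have : ((c, d) : ℝ × ℝ) = c • (1, 0) + d • (0, 1) := by simp
    rw [this, map_add, map_smul, map_smul]; rfl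
  have hd := (hu (hwPhi (t, φ))).hasFDerivAt
  have c1 : HasDerivAt (fun s => hwPhi (s, φ)) (Real.exp t * Real.cos φ, Real.exp t * Real.sin φ) t :=
    ((Real.hasDerivAt_exp t).mul_const (Real.cos φ)).prodMk
      ((Real.hasDerivAt_exp t).mul_const (Real.sin φ))
  have c2 : HasDerivAt (fun s => hwPhi (t, s)) (Real.exp t * -Real.sin φ, Real.exp t * Real.cos φ) φ :=
    ((Real.hasDerivAt_cos φ).const_mul (Real.exp t)).prodMk
      ((Real.hasDerivAt_sin φ).const_mul (Real.exp t))
  have d1 := hd.comp_hasDerivAt t c1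
  have d2 := hd.comp_hasDerivAt φ c2
  have e1 : HasDerivAt (u ∘ fun s => hwPhi (s, φ)) (deriv ψ t * χ φ) t := by
    refine ((hψ t).hasDerivAt.mul_const _).congr_of_eventuallyEq ?_
    exact Filter.Eventually.of_forall fun s => huw (s, φ) hp
  have e2 : HasDerivAt (u ∘ fun s => hwPhi (t, s)) (ψ t * deriv χ φ) φ := by
    refine ((hχ φ).hasDerivAt.const_mul _).congr_of_eventuallyEq ?_
    filter_upwards [isOpen_Ioo.mem_nhds hp] with s hs using huw (t, s) hs
  have f1 := d1.unique e1
  have f2 := d2.unique e2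
  rw [hlin] at f1 f2
  rw [← mul_pow, ← mul_pow, ← f1, ← f2, two_mul, Real.exp_add]
  linear_combination (-(Real.exp t) ^ 2 * (X ^ 2 + Y ^ 2)) * Real.sin_sq_add_cos_sq φ

lemma hw_enorm (p : ℝ × ℝ) : enorm2 (hwPhi p) ^ 2 = Real.exp (2 * p.1) := by
  unfold enorm2 hwPhi
  rw [Real.sq_sqrt (by positivity), two_mul, Real.exp_add]
  linear_combination (Real.exp p.1) ^ 2 * Real.sin_sq_add_cos_sq p.2

lemma hw_psi : ∃ R0 R1 : ℝ, 0 ≤ R0 ∧ 0 ≤ R1 ∧ ∀ T : ℝ, 0 < T → ∃ ψ : ℝ → ℝ,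
    ContDiff ℝ (⊤ : ℕ∞) ψ ∧ (∀ t, ψ t ≠ 0 → t ∈ Icc (-(2*T)) (2*T)) ∧
    (∀ t ∈ Icc (-T) T, ψ t = 1) ∧ (∫ t, ψ t ^ 2) = T * R0 ∧ (∫ t, deriv ψ t ^ 2) = R1 / T := by
  let ρ : ContDiffBump (0:ℝ) := ⟨1, 2, one_pos, by norm_num⟩
  refine ⟨∫ t, ρ t ^ 2, ∫ t, deriv ρ t ^ 2, integral_nonneg fun t => sq_nonneg _,
    integral_nonneg fun t => sq_nonneg _, fun T hT => ⟨fun t => ρ (t / T), ?_, ?_, ?_, ?_, ?_⟩⟩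
  · exact ρ.contDiff.comp (contDiff_id.div_const T)
  · intro t ht
    have : t / T ∈ Function.support ρ := ht
    rw [ρ.support_eq, Metric.mem_ball, Real.dist_eq, sub_zero, abs_div, abs_of_pos hT,
      div_lt_iff₀ hT, abs_lt] at this
    exact ⟨this.1.le, this.2.le⟩
  · intro t ht
    apply ρ.one_of_mem_closedBall
    rw [Metric.mem_closedBall, Real.dist_eq, sub_zero, abs_div, abs_of_pos hT, div_le_iff₀ hT]
    change |t| ≤ 1 * T
    rw [one_mul]
    exact abs_le.mpr ht
  · have := Measure.integral_comp_div (fun t => ρ t ^ 2) T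
    simpa [abs_of_pos hT] using this
  · have h : ∀ t, deriv (fun t => ρ (t / T)) t = deriv ρ (t / T) / T := by
      intro t
      have h1 : HasDerivAt (fun t : ℝ => t / T) (1 / T) t := (hasDerivAt_id t).div_const T
      have h2 : HasDerivAt ρ (deriv ρ (t / T)) (t / T) :=
        ((ρ.contDiff (n := 1)).differentiable (by norm_num) _).hasDerivAt
      have := (h2.comp t h1).deriv
      rw [← mul_one_div]; exact this
    have := Measure.integral_comp_div (fun t => deriv ρ t ^ 2) T
    simp only [abs_of_pos hT, smul_eq_mul] at this
    simp only [h, div_pow, integral_div, this]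
    field_simp

lemma hw_S_bound : ∃ C : ℝ, 0 ≤ C ∧ ∀ x, |deriv Real.smoothTransition x| ≤ C ∧
    (1 ≤ x → deriv Real.smoothTransition x = 0) := by
  have h1 : ∀ x, 1 ≤ x → deriv Real.smoothTransition x = 0 := by
    intro x hx
    apply IsLocalMax.deriv_eq_zero
    refine Filter.Eventually.of_forall fun y => ?_
    rw [Real.smoothTransition.one_of_one_le hx]
    exact Real.smoothTransition.le_one y
  have h0 : ∀ x, x ≤ 0 → deriv Real.smoothTransition x = 0 := by
    intro x hx
    apply IsLocalMin.deriv_eq_zero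
    refine Filter.Eventually.of_forall fun y => ?_
    rw [Real.smoothTransition.zero_of_nonpos hx]
    exact Real.smoothTransition.nonneg y
  have hc : Continuous (deriv Real.smoothTransition) :=
    (Real.smoothTransition.contDiff (n := 1)).continuous_deriv (by norm_num)
  have hs : HasCompactSupport (deriv Real.smoothTransition) := by
    apply HasCompactSupport.intro (isCompact_Icc (a := (0:ℝ)) (b := 1))
    intro x hx
    by_cases h : x ≤ 0
    · exact h0 x h
    · exact h1 x (by by_contra h'; exact hx ⟨(not_le.mp h).le, (not_le.mp h').le⟩)
  obtain ⟨C, hC⟩ := hs.exists_bound_of_continuous hc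
  exact ⟨C, (norm_nonneg _).trans (hC 0), fun x => ⟨hC x, h1 x⟩⟩

lemma hw_chi (L k : ℝ) (hL : 0 < L) (hk : 0 < k) (hkL : k * L = π) : ∃ M : ℝ, 0 ≤ M ∧
    ∀ δ : ℝ, 0 < δ → 4 * δ ≤ L → ∃ χ : ℝ → ℝ,
    ContDiff ℝ (⊤ : ℕ∞) χ ∧ (∀ t, χ t ≠ 0 → t ∈ Icc δ (L - δ)) ∧
    (∀ t, |χ t| ≤ 1) ∧
    (∀ t ∈ Icc (2 * δ) (L - 2 * δ), χ t = Real.sin (k * t)) ∧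
    (∫ t in Ioo 0 L, deriv χ t ^ 2) - k ^ 2 * (∫ t in Ioo 0 L, χ t ^ 2) ≤ M * δ := by
  obtain ⟨C, hC0, hC⟩ := hw_S_bound
  refine ⟨64 * C ^ 2 * k ^ 2, by positivity, fun δ hδ hδL => ?_⟩
  set S := Real.smoothTransition with hS
  set D := deriv S with hD
  have hSd : ∀ x, HasDerivAt S (D x) x := fun x =>
    ((Real.smoothTransition.contDiff (n := 1)).differentiable (by norm_num) x).hasDerivAt
  have hDc : Continuous D :=
    (Real.smoothTransition.contDiff (n := 1)).continuous_deriv (by norm_num)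
  have hSc : Continuous S := Real.smoothTransition.continuous
  set η : ℝ → ℝ := fun t => S (t / δ - 1) * S ((L - t) / δ - 1) with hη
  set η' : ℝ → ℝ := fun t => D (t / δ - 1) * (1 / δ) * S ((L - t) / δ - 1)
    + S (t / δ - 1) * (D ((L - t) / δ - 1) * (-1 / δ)) with hη'
  have hηd : ∀ t, HasDerivAt η (η' t) t := by
    intro t
    have a1 : HasDerivAt (fun t : ℝ => t / δ - 1) (1 / δ) t :=
      ((hasDerivAt_id t).div_const δ).sub_const 1
    have a2 : HasDerivAt (fun t : ℝ => (L - t) / δ - 1) (-1 / δ) t :=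
      (((hasDerivAt_id t).const_sub L).div_const δ).sub_const 1
    exact ((hSd _).comp t a1).mul ((hSd _).comp t a2)
  have hη'c : Continuous η' := by fun_prop
  have hηc : Continuous η := by fun_prop
  have hη0 : ∀ t, 0 ≤ η t := fun t =>
    mul_nonneg (Real.smoothTransition.nonneg _) (Real.smoothTransition.nonneg _)
  have hη1 : ∀ t, η t ≤ 1 := fun t =>
    mul_le_one₀ (Real.smoothTransition.le_one _) (Real.smoothTransition.nonneg _)
      (Real.smoothTransition.le_one _)
  have hη'b : ∀ t, |η' t| ≤ 2 * C / δ := by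
    intro t
    have b1 : |D (t / δ - 1) * (1 / δ) * S ((L - t) / δ - 1)| ≤ C * (1 / δ) * 1 := by
      rw [abs_mul, abs_mul, abs_of_pos (show 0 < 1 / δ by positivity),
        abs_of_nonneg (Real.smoothTransition.nonneg _)]
      gcongr
      · exact Real.smoothTransition.nonneg _
      · exact (hC _).1
      · exact Real.smoothTransition.le_one _
    have b2 : |S (t / δ - 1) * (D ((L - t) / δ - 1) * (-1 / δ))| ≤ 1 * (C * (1 / δ)) := by
      rw [abs_mul, abs_mul, abs_of_nonneg (Real.smoothTransition.nonneg _), neg_div, abs_neg,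
        abs_of_pos (show 0 < 1 / δ by positivity)]
      gcongr
      · exact Real.smoothTransition.le_one _
      · exact (hC _).1
    calc |η' t| ≤ _ := abs_add_le _ _
      _ ≤ C * (1 / δ) * 1 + 1 * (C * (1 / δ)) := add_le_add b1 b2
      _ = 2 * C / δ := by ring
  set χ : ℝ → ℝ := fun t => η t * Real.sin (k * t) with hχ
  have hsd : ∀ t, HasDerivAt (fun t => Real.sin (k * t)) (k * Real.cos (k * t)) t := by
    intro t
    have := ((hasDerivAt_id t).const_mul k).sin
    simpa [mul_comm] using this
  have hcd : ∀ t, HasDerivAt (fun t => Real.cos (k * t)) (-(k * Real.sin (k * t))) t := by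
    intro t
    have := ((hasDerivAt_id t).const_mul k).cos
    simpa [mul_comm] using this
  have hχd : ∀ t, deriv χ t = η' t * Real.sin (k * t) + η t * (k * Real.cos (k * t)) :=
    fun t => ((hηd t).mul (hsd t)).deriv
  have hχc : Continuous χ := by fun_prop
  refine ⟨χ, ?_, ?_, ?_, ?_, ?_⟩
  · have e1 : ContDiff ℝ (⊤ : ℕ∞) S := Real.smoothTransition.contDiff
    have e2 : ContDiff ℝ (⊤ : ℕ∞) η :=
      (e1.comp ((contDiff_id.div_const δ).sub contDiff_const)).mul
        (e1.comp (((contDiff_const.sub contDiff_id).div_const δ).sub contDiff_const))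
    exact e2.mul (Real.contDiff_sin.comp (contDiff_const.mul contDiff_id))
  · intro t ht
    have h1 := left_ne_zero_of_mul ht
    have h2 := left_ne_zero_of_mul h1
    have h3 := right_ne_zero_of_mul h1
    rw [hS, Ne, Real.smoothTransition.zero_iff_nonpos, not_le, sub_pos, lt_div_iff₀ hδ] at h2 h3
    constructor <;> linarith
  · intro t
    rw [hχ, abs_mul, abs_of_nonneg (hη0 t)]
    exact mul_le_one₀ (hη1 t) (abs_nonneg _) (Real.abs_sin_le_one _)
  · intro t ht
    have g1 : 1 ≤ t / δ - 1 := by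
      rw [le_sub_iff_add_le, le_div_iff₀ hδ]; linarith [ht.1]
    have g2 : 1 ≤ (L - t) / δ - 1 := by
      rw [le_sub_iff_add_le, le_div_iff₀ hδ]; linarith [ht.2]
    simp only [hχ, hη, hS, Real.smoothTransition.one_of_one_le g1,
      Real.smoothTransition.one_of_one_le g2]
    ring
  · set F : ℝ → ℝ := fun t => Real.sin (k * t) ^ 2 * η' t ^ 2 with hF
    have hFc : Continuous F := by fun_prop
    set G : ℝ → ℝ := fun t => Real.sin (k * t) * (k * Real.cos (k * t)) * (η t * η t) with hG
    set G' : ℝ → ℝ := fun t => (k * Real.cos (k * t) * (k * Real.cos (k * t))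
      + Real.sin (k * t) * (k * -(k * Real.sin (k * t)))) * (η t * η t)
      + Real.sin (k * t) * (k * Real.cos (k * t)) * (η' t * η t + η t * η' t) with hG'
    have hGd : ∀ t, HasDerivAt G (G' t) t := fun t =>
      ((hsd t).mul ((hcd t).const_mul k)).mul ((hηd t).mul (hηd t))
    have hG'c : Continuous G' := by fun_prop
    have hdc : Continuous (deriv χ) := by
      have : deriv χ = fun t => η' t * Real.sin (k * t) + η t * (k * Real.cos (k * t)) := funext hχd
      rw [this]; fun_prop
    have iI : ∀ f : ℝ → ℝ, ∫ t in Ioo 0 L, f t = ∫ t in (0:ℝ)..L, f t := fun f => by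
      rw [intervalIntegral.integral_of_le hL.le, integral_Ioc_eq_integral_Ioo]
    rw [iI, iI, ← intervalIntegral.integral_const_mul, ← intervalIntegral.integral_sub
      (Continuous.intervalIntegrable (by fun_prop) _ _)
      (Continuous.intervalIntegrable (by fun_prop) _ _)]
    have hid : ∀ t, deriv χ t ^ 2 - k ^ 2 * χ t ^ 2 = F t + G' t := by
      intro t; rw [hχd]; simp only [hχ, hF, hG']; ring
    simp only [hid]
    rw [intervalIntegral.integral_add (hFc.intervalIntegrable _ _) (hG'c.intervalIntegrable _ _),
      intervalIntegral.integral_eq_sub_of_hasDerivAt (fun t _ => hGd t) (hG'c.intervalIntegrable _ _)]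
    have g0 : G 0 = 0 := by simp [hG]
    have gL : G L = 0 := by simp [hG, hkL]
    rw [g0, gL, sub_zero, add_zero]
    have hFb : ∀ t, |Real.sin (k * t)| ≤ 2 * k * δ → ‖F t‖ ≤ 16 * C ^ 2 * k ^ 2 := by
      intro t ht
      have hFt : F t = (Real.sin (k * t) * η' t) ^ 2 := by simp only [hF]; ring
      rw [hFt, Real.norm_eq_abs, abs_of_nonneg (sq_nonneg _), ← sq_abs, abs_mul]
      calc (|Real.sin (k * t)| * |η' t|) ^ 2 ≤ (2 * k * δ * (2 * C / δ)) ^ 2 := by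
            gcongr; exact hη'b t
        _ = _ := by field_simp; ring
    have i1 : ‖∫ t in (0:ℝ)..(2*δ), F t‖ ≤ 16 * C ^ 2 * k ^ 2 * |2 * δ - 0| := by
      apply intervalIntegral.norm_integral_le_of_norm_le_const
      intro t ht
      rw [uIoc_of_le (by positivity)] at ht
      apply hFb
      refine Real.abs_sin_le_abs.trans ?_
      rw [abs_of_nonneg (mul_nonneg hk.le ht.1.le)]
      nlinarith [ht.2]
    have i3 : ‖∫ t in (L - 2*δ)..L, F t‖ ≤ 16 * C ^ 2 * k ^ 2 * |L - (L - 2 * δ)| := by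
      apply intervalIntegral.norm_integral_le_of_norm_le_const
      intro t ht
      rw [uIoc_of_le (by linarith)] at ht
      apply hFb
      have : Real.sin (k * t) = Real.sin (k * (L - t)) := by
        rw [mul_sub, hkL, Real.sin_pi_sub]
      rw [this]
      refine Real.abs_sin_le_abs.trans ?_
      rw [abs_of_nonneg (mul_nonneg hk.le (by linarith [ht.2]))]
      nlinarith [ht.1]
    have i2 : ‖∫ t in (2*δ)..(L - 2*δ), F t‖ ≤ 0 * |L - 2 * δ - 2 * δ| := by
      apply intervalIntegral.norm_integral_le_of_norm_le_const
      intro t ht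
      rw [uIoc_of_le (by linarith)] at ht
      have g1 : 1 ≤ t / δ - 1 := by
        rw [le_sub_iff_add_le, le_div_iff₀ hδ]; linarith [ht.1]
      have g2 : 1 ≤ (L - t) / δ - 1 := by
        rw [le_sub_iff_add_le, le_div_iff₀ hδ]; linarith [ht.2]
      have : η' t = 0 := by
        simp only [hη']
        rw [(hC _).2 g1, (hC _).2 g2]; ring
      simp [hF, this]
    rw [← intervalIntegral.integral_add_adjacent_intervals (b := 2 * δ)
        (hFc.intervalIntegrable _ _) (hFc.intervalIntegrable _ _),
      ← intervalIntegral.integral_add_adjacent_intervals (a := 2 * δ) (b := L - 2 * δ)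
        (hFc.intervalIntegrable _ _) (hFc.intervalIntegrable _ _)]
    rw [sub_zero, abs_of_pos (by positivity)] at i1
    rw [sub_sub_cancel, abs_of_pos (by positivity)] at i3
    rw [zero_mul] at i2
    have j1 := (le_abs_self _).trans i1
    have j2 := (le_abs_self _).trans i2
    have j3 := (le_abs_self _).trans i3
    linarith

lemma hw_sqi (f : ℝ → ℝ) (hf : Continuous f) (hfc : HasCompactSupport f) :
    Integrable (fun t => f t ^ 2) := by
  have h : Continuous (fun t => f t ^ 2) := by fun_prop
  refine h.integrable_of_hasCompactSupport ?_
  have := HasCompactSupport.mul_left (f := f) (f' := f) hfc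
  simp only [pow_two]
  exact this

set_option maxHeartbeats 1000000 in
/-- **Optimality of the immediate Hardy inequality in the straight wedge.**
For every nonnegative, not identically vanishing smooth potential `V` compactly supported
in the straight wedge `Ω₀`, there is a smooth compactly supported `u` making the Hardy
quadratic form minus `∫ V u²` negative. -/
theorem hardy_optimal_straight_wedge
    (a : ℝ) (ha : a ∈ Ioc (0:ℝ) 1)
    (V : ℝ × ℝ → ℝ) (hV : ContDiff ℝ (⊤ : ℕ∞) V) (hVc : HasCompactSupport V)
    (hVsupp : tsupport V ⊆ straightWedge a)
    (hVpos : ∀ x, 0 ≤ V x) (hVne : ∃ x, V x ≠ 0) :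
    ∃ u : ℝ × ℝ → ℝ, ContDiff ℝ (⊤ : ℕ∞) u ∧ HasCompactSupport u ∧
      tsupport u ⊆ straightWedge a ∧
      (∫ x in straightWedge a, ((fderiv ℝ u x (1, 0)) ^ 2 + (fderiv ℝ u x (0, 1)) ^ 2))
          - (1 / (4 * a ^ 2)) * (∫ x in straightWedge a, (u x) ^ 2 / enorm2 x ^ 2)
          - (∫ x in straightWedge a, V x * (u x) ^ 2) < 0 := by
  have ha0 : 0 < a := ha.1
  have hpi := Real.pi_pos
  set L := 2 * π * a with hLdef
  set k := 1 / (2 * a) with hkdef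
  have hL : 0 < L := by positivity
  have hk : 0 < k := by positivity
  have hkL : k * L = π := by rw [hkdef, hLdef]; field_simp
  have hk2 : 1 / (4 * a ^ 2) = k ^ 2 := by rw [hkdef]; field_simp; norm_num
  obtain ⟨R0, R1, hR0, hR1, hψex⟩ := hw_psi
  obtain ⟨M, hM, hχex⟩ := hw_chi L k hL hk hkL
  -- the point where V is positive
  obtain ⟨x0, hx0⟩ := hVne
  have hx0w : x0 ∈ straightWedge a := hVsupp (subset_tsupport V hx0)
  rw [← hwPhi_image] at hx0w
  obtain ⟨⟨t0, φ0⟩, ⟨-, hφ0⟩, rfl⟩ := hx0w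
  simp only at hφ0
  obtain ⟨hφa, hφb⟩ : 0 < φ0 ∧ φ0 < L := hφ0
  set T0 := |t0| + 1 with hT0
  set δ0 := min φ0 (L - φ0) / 4 with hδ0
  have hδ0p : 0 < δ0 := by
    have : 0 < min φ0 (L - φ0) := lt_min hφa (by linarith)
    positivity
  have hδ0a : 4 * δ0 ≤ φ0 := by
    have := min_le_left φ0 (L - φ0); rw [hδ0]; linarith
  have hδ0b : 4 * δ0 ≤ L - φ0 := by
    have := min_le_right φ0 (L - φ0); rw [hδ0]; linarith
  set B : Set (ℝ × ℝ) := Ioo (-T0) T0 ×ˢ Ioo (2 * δ0) (L - 2 * δ0) with hB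
  have hBo : IsOpen B := isOpen_Ioo.prod isOpen_Ioo
  have hB0 : (t0, φ0) ∈ B := by
    refine ⟨⟨?_, ?_⟩, ⟨?_, ?_⟩⟩
    · have := neg_abs_le t0; simp only [hT0]; linarith
    · have := le_abs_self t0; simp only [hT0]; linarith
    · simp only; linarith
    · simp only; linarith
  have hVcont : Continuous V := hV.continuous
  set f0 : ℝ × ℝ → ℝ := fun p => Real.exp (2 * p.1) * (V (hwPhi p) * Real.sin (k * p.2) ^ 2) with hf0
  have hf0c : Continuous f0 := by
    have := hVcont.comp hwPhi_continuous
    have hpc := hwPhi_continuous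
    simp only [Function.comp_def] at this
    simp only [hf0]
    fun_prop
  have hf0n : ∀ p, 0 ≤ f0 p := fun p =>
    mul_nonneg (Real.exp_pos _).le (mul_nonneg (hVpos _) (sq_nonneg _))
  have hf0i : IntegrableOn f0 B :=
    (hf0c.continuousOn.integrableOn_compact
      ((isCompact_Icc (a := -T0) (b := T0)).prod (isCompact_Icc (a := 2 * δ0) (b := L - 2 * δ0)))).mono_set
      (prod_mono Ioo_subset_Icc_self Ioo_subset_Icc_self)
  set c := ∫ p in B, f0 p with hc
  have hcpos : 0 < c := by
    rw [hc, setIntegral_pos_iff_support_of_nonneg_ae (Filter.Eventually.of_forall hf0n) hf0i]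
    refine IsOpen.measure_pos volume (hf0c.isOpen_support.inter hBo) ⟨(t0, φ0), ?_, hB0⟩
    have hs : 0 < Real.sin (k * φ0) := by
      apply Real.sin_pos_of_pos_of_lt_pi (by positivity)
      rw [← hkL]; gcongr
    rw [Function.mem_support]
    exact mul_ne_zero (Real.exp_pos _).ne' (mul_ne_zero hx0 (pow_pos hs 2).ne')
  -- choose parameters
  set T := max T0 (4 * R1 * L / c) with hT
  have hT0p : 0 < T0 := by positivity
  have hTp : 0 < T := hT0p.trans_le (le_max_left _ _)
  have hTT0 : T0 ≤ T := le_max_left _ _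
  have hTc : R1 / T * L ≤ c / 4 := by
    have := le_max_right T0 (4 * R1 * L / c)
    rw [← hT, div_le_iff₀ hcpos] at this
    rw [div_mul_eq_mul_div, div_le_iff₀ hTp]
    linarith
  set δ := min δ0 (c / (4 * (T * R0 * M + 1))) with hδ
  have hden : 0 < T * R0 * M + 1 := by positivity
  have hδp : 0 < δ := lt_min hδ0p (by positivity)
  have hδδ0 : δ ≤ δ0 := min_le_left _ _
  have hδc : T * R0 * (M * δ) ≤ c / 4 := by
    have := min_le_right δ0 (c / (4 * (T * R0 * M + 1)))
    rw [← hδ, le_div_iff₀ (by positivity)] at this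
    nlinarith
  obtain ⟨ψ, hψs, hψA, hψ1, hψ2, hψ3⟩ := hψex T hTp
  obtain ⟨χ, hχs, hχA, hχb, hχ1, hχ2⟩ := hχex δ hδp (by linarith)
  obtain ⟨u, hus, huc, hut, huw⟩ := hw_exists_u a ha ψ χ hψs hχs (2 * T) δ (L - δ) hδp
    (by linarith) hψA hχA
  refine ⟨u, hus, huc, hut, ?_⟩
  rw [hw_cov_s2 a ha, hw_cov_s2 a ha, hw_cov_s2 a ha, hk2, ← hLdef]
  have hs : MeasurableSet ((univ : Set ℝ) ×ˢ Ioo 0 L) := MeasurableSet.univ.prod measurableSet_Ioo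
  have hψcs : HasCompactSupport ψ := HasCompactSupport.intro isCompact_Icc
    (fun t ht => by_contra fun h => ht (hψA t h))
  have hχcs : HasCompactSupport χ := HasCompactSupport.intro isCompact_Icc
    (fun t ht => by_contra fun h => ht (hχA t h))
  have hψ'c : Continuous (deriv ψ) := hψs.continuous_deriv (by simp)
  have hχ'c : Continuous (deriv χ) := hχs.continuous_deriv (by simp)
  have iψ := hw_sqi ψ hψs.continuous hψcs
  have iχ := hw_sqi χ hχs.continuous hχcs
  have iψ' := hw_sqi _ hψ'c hψcs.deriv
  have iχ' := hw_sqi _ hχ'c hχcs.deriv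
  have hprod : ∀ f g : ℝ → ℝ, ∫ p in (univ : Set ℝ) ×ˢ Ioo 0 L, f p.1 * g p.2 =
      (∫ t, f t) * ∫ t in Ioo 0 L, g t := by
    intro f g
    rw [Measure.volume_eq_prod, setIntegral_prod_mul, setIntegral_univ]
  have E1 : ∫ p in (univ : Set ℝ) ×ˢ Ioo 0 L, Real.exp (2 * p.1) *
      ((fderiv ℝ u (hwPhi p) (1, 0)) ^ 2 + (fderiv ℝ u (hwPhi p) (0, 1)) ^ 2) =
      (R1 / T) * (∫ t in Ioo 0 L, χ t ^ 2) + (T * R0) * (∫ t in Ioo 0 L, deriv χ t ^ 2) := by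
    rw [← hψ2, ← hψ3, ← hprod (fun t => deriv ψ t ^ 2) (fun t => χ t ^ 2),
      ← hprod (fun t => ψ t ^ 2) (fun t => deriv χ t ^ 2), ← integral_add]
    · exact setIntegral_congr_fun hs fun p hp => hw_grad L ψ χ (hψs.differentiable (by simp))
        (hχs.differentiable (by simp)) u (hus.differentiable (by simp)) huw p hp.2
    · exact (iψ'.mul_prod iχ).integrableOn
    · exact (iψ.mul_prod iχ').integrableOn
  have E2 : ∫ p in (univ : Set ℝ) ×ˢ Ioo 0 L, Real.exp (2 * p.1) *
      (u (hwPhi p) ^ 2 / enorm2 (hwPhi p) ^ 2) = (T * R0) * (∫ t in Ioo 0 L, χ t ^ 2) := by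
    rw [← hψ2, ← hprod (fun t => ψ t ^ 2) (fun t => χ t ^ 2)]
    refine setIntegral_congr_fun hs fun p hp => ?_
    rw [hw_enorm, huw p hp.2, mul_div_cancel₀ _ (Real.exp_pos _).ne', mul_pow]
  have E3 : c ≤ ∫ p in (univ : Set ℝ) ×ˢ Ioo 0 L, Real.exp (2 * p.1) *
      (V (hwPhi p) * u (hwPhi p) ^ 2) := by
    set f1 : ℝ × ℝ → ℝ := fun p => Real.exp (2 * p.1) * (V (hwPhi p) * (ψ p.1 * χ p.2) ^ 2) with hf1
    have hf1c : Continuous f1 := by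
      have h1 := hVcont.comp hwPhi_continuous
      have hpc := hwPhi_continuous
      simp only [Function.comp_def] at h1
      have h2 := hψs.continuous
      have h3 := hχs.continuous
      simp only [hf1]
      fun_prop
    have hf1i : Integrable f1 := by
      refine hf1c.integrable_of_hasCompactSupport ?_
      refine HasCompactSupport.intro ((isCompact_Icc (a := -(2 * T)) (b := 2 * T)).prod
        (isCompact_Icc (a := δ) (b := L - δ))) fun p hp => ?_
      by_contra h
      apply hp
      have h1 : ψ p.1 * χ p.2 ≠ 0 := by
        intro h0; apply h; simp [hf1, h0]
      exact ⟨hψA _ (left_ne_zero_of_mul h1), hχA _ (right_ne_zero_of_mul h1)⟩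
    have e1 : ∫ p in (univ : Set ℝ) ×ˢ Ioo 0 L, Real.exp (2 * p.1) *
      (V (hwPhi p) * u (hwPhi p) ^ 2) = ∫ p in (univ : Set ℝ) ×ˢ Ioo 0 L, f1 p :=
      setIntegral_congr_fun hs fun p hp => by simp only [hf1]; rw [huw p hp.2]
    have e2 : c = ∫ p in B, f1 p := by
      refine setIntegral_congr_fun hBo.measurableSet fun p hp => ?_
      obtain ⟨⟨q1, q2⟩, ⟨q3, q4⟩⟩ := hp
      simp only [hf1, hf0]
      rw [hψ1 p.1 ⟨by linarith, by linarith⟩, hχ1 p.2 ⟨by linarith, by linarith⟩, one_mul]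
    rw [e1, e2]
    refine setIntegral_mono_set hf1i.integrableOn (Filter.Eventually.of_forall fun p =>
      mul_nonneg (Real.exp_pos _).le (mul_nonneg (hVpos _) (sq_nonneg _))) ?_
    refine Filter.Eventually.of_forall fun p hp => ?_
    obtain ⟨-, ⟨q3, q4⟩⟩ := hp
    exact ⟨mem_univ _, by linarith, by linarith⟩
  rw [E1, E2]
  have hX : ∫ t in Ioo 0 L, χ t ^ 2 ≤ L := by
    calc ∫ t in Ioo 0 L, χ t ^ 2 ≤ ∫ t in Ioo 0 L, (1:ℝ) := by
          refine setIntegral_mono iχ.integrableOn (integrableOn_const (by simp)) fun t => ?_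
          simp only
          rw [← sq_abs]; exact pow_le_one₀ (abs_nonneg _) (hχb t)
      _ = L := by simp [hL.le]
  have k1 : R1 / T * (∫ t in Ioo 0 L, χ t ^ 2) ≤ R1 / T * L :=
    mul_le_mul_of_nonneg_left hX (by positivity)
  have k2 := mul_le_mul_of_nonneg_left hχ2 (show 0 ≤ T * R0 by positivity)
  nlinarith
end
end

section
/- Let a ∈ (0,1] and let θ ∈ C¹([0,∞)) be such that the support of θ' is compact in ℝ and θ' is not identically zero. Then there exists c > 0 such that for every ψ ∈ C¹_c(U) one has ∫_U [ |∂_rψ(r,φ) − θ'(r) ∂_φψ(r,φ)|² + |∂_φψ(r,φ)|²/r² − (1/(4a²)) |ψ(r,φ)|²/r² ] r dr dφ ≥ c ∫_U |ψ(r,φ)|²/(1 + r² (log r)²) r dr dφ. -/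
open MeasureTheory Real Set

noncomputable section

/-- The half-strip `U = (0,∞) × (0,2πa)` of curvilinear coordinates `(r,φ)`. -/
def wedgeU (a : ℝ) : Set (ℝ × ℝ) := Ioi (0:ℝ) ×ˢ Ioo (0:ℝ) (2 * π * a)

lemma int_fst (G : ℝ × ℝ → ℝ) (hG : ContDiff ℝ 1 G) (hc : HasCompactSupport G) :
    ∫ p, fderiv ℝ G p (1, 0) = 0 := by
  have hcont : Continuous fun p => fderiv ℝ G p (1,0) :=
    (hG.continuous_fderiv (by norm_num)).clm_apply continuous_const
  have hcs : HasCompactSupport fun p => fderiv ℝ G p (1,0) := hc.fderiv_apply ℝ (1,0)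
  rw [Measure.volume_eq_prod, integral_prod_symm _ (hcont.integrable_of_hasCompactSupport hcs)]
  have : ∀ y : ℝ, ∫ x, fderiv ℝ G (x, y) (1,0) = 0 := by
    intro y
    have hemb : Topology.IsClosedEmbedding (fun x : ℝ => (x, y)) := by
      refine Topology.IsClosedEmbedding.of_continuous_injective_isClosedMap (by fun_prop) (fun a b h => by simpa using h) ?_
      intro s hs
      have : (fun x : ℝ => (x, y)) '' s = s ×ˢ {y} := by ext ⟨a, b⟩; simp; grind
      rw [this]; exact hs.prod isClosed_singleton
    refine integral_eq_zero_of_hasDerivAt_of_integrable (f := fun x => G (x, y)) ?_ ?_ ?_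
    · intro x
      have h1 := (hG.differentiable (by norm_num) (x, y)).hasFDerivAt
      exact h1.comp_hasDerivAt x ((hasDerivAt_id x).prodMk (hasDerivAt_const x y))
    · exact (hcont.comp (by fun_prop)).integrable_of_hasCompactSupport (hcs.comp_isClosedEmbedding hemb)
    · exact (hG.continuous.comp (by fun_prop)).integrable_of_hasCompactSupport (hc.comp_isClosedEmbedding hemb)
  simp [this]

lemma int_snd (G : ℝ × ℝ → ℝ) (hG : ContDiff ℝ 1 G) (hc : HasCompactSupport G)
    (b : ℝ → ℝ) (hb : Continuous b) :
    ∫ p : ℝ × ℝ, b p.1 * fderiv ℝ G p (0, 1) = 0 := by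
  have hcont : Continuous fun p => fderiv ℝ G p (0,1) :=
    (hG.continuous_fderiv (by norm_num)).clm_apply continuous_const
  have hcs : HasCompactSupport fun p => fderiv ℝ G p (0,1) := hc.fderiv_apply ℝ (0,1)
  have hI : Integrable (fun p : ℝ × ℝ => b p.1 * fderiv ℝ G p (0,1)) := 
    ((hb.comp continuous_fst).mul hcont).integrable_of_hasCompactSupport hcs.mul_left
  rw [Measure.volume_eq_prod, integral_prod _ hI]
  have : ∀ x : ℝ, ∫ y, fderiv ℝ G (x, y) (0,1) = 0 := by
    intro x
    have hemb : Topology.IsClosedEmbedding (fun y : ℝ => (x, y)) := by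
      refine Topology.IsClosedEmbedding.of_continuous_injective_isClosedMap (by fun_prop) (fun a b h => by simpa using h) ?_
      intro s hs
      have : (fun y : ℝ => (x, y)) '' s = {x} ×ˢ s := by ext ⟨a, b⟩; simp; grind
      rw [this]; exact isClosed_singleton.prod hs
    refine integral_eq_zero_of_hasDerivAt_of_integrable (f := fun y => G (x, y)) ?_ ?_ ?_
    · intro y
      have h1 := (hG.differentiable (by norm_num) (x, y)).hasFDerivAt
      exact h1.comp_hasDerivAt y ((hasDerivAt_const y x).prodMk (hasDerivAt_id y))
    · exact (hcont.comp (by fun_prop)).integrable_of_hasCompactSupport (hcs.comp_isClosedEmbedding hemb)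
    · exact (hG.continuous.comp (by fun_prop)).integrable_of_hasCompactSupport (hc.comp_isClosedEmbedding hemb)
  simp [integral_const_mul, this]

lemma sq_mul_C1 (U : Set (ℝ × ℝ)) (ψ H : ℝ × ℝ → ℝ) (hψ : ContDiff ℝ 1 ψ)
    (hs : tsupport ψ ⊆ U) (hH : ∀ p ∈ U, ContDiffAt ℝ 1 H p) :
    ContDiff ℝ 1 (fun p => ψ p ^ 2 * H p) := by
  refine contDiff_iff_contDiffAt.2 fun p => ?_
  by_cases hp : p ∈ tsupport ψ
  · exact (hψ.contDiffAt.pow 2).mul (hH p (hs hp))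
  · have : (fun p => ψ p ^ 2 * H p) =ᶠ[nhds p] fun _ => 0 := by
      filter_upwards [notMem_tsupport_iff_eventuallyEq.1 hp] with q hq
      simp [hq]
    exact contDiffAt_const.congr_of_eventuallyEq this

lemma integrable_cs (U : Set (ℝ × ℝ)) (ψ f : ℝ × ℝ → ℝ) (hc : HasCompactSupport ψ)
    (hs : tsupport ψ ⊆ U) (hf : ∀ p ∈ U, ContinuousAt f p) (h0 : ∀ p ∉ tsupport ψ, f p = 0) :
    Integrable f := by
  have ht : tsupport f ⊆ tsupport ψ := by
    refine closure_minimal (fun p hp => ?_) (isClosed_tsupport ψ)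
    by_contra h
    exact hp (h0 p h)
  refine Continuous.integrable_of_hasCompactSupport
    (continuous_of_tsupport fun p hp => hf p (hs (ht hp))) ?_
  exact hc.of_isClosed_subset (isClosed_tsupport f) ht

lemma abstract_ineq (U : Set (ℝ × ℝ)) (ψ H G E R : ℝ × ℝ → ℝ) (b : ℝ → ℝ) (c : ℝ)
    (hψ : ContDiff ℝ 1 ψ) (hc : HasCompactSupport ψ) (hs : tsupport ψ ⊆ U)
    (hb : Continuous b)
    (hH : ∀ p ∈ U, ContDiffAt ℝ 1 H p) (hG : ∀ p ∈ U, ContDiffAt ℝ 1 G p)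
    (hE : ∀ p ∈ U, ContinuousAt E p) (hE0 : ∀ p ∉ tsupport ψ, E p = 0)
    (hR : ∀ p ∈ U, ContinuousAt R p) (hR0 : ∀ p ∉ tsupport ψ, R p = 0)
    (hineq : ∀ p ∈ U, c * R p + (- fderiv ℝ (fun p => ψ p ^ 2 * H p) p (1, 0)
      + b p.1 * fderiv ℝ (fun p => ψ p ^ 2 * H p) p (0, 1)
      - fderiv ℝ (fun p => ψ p ^ 2 * G p) p (0, 1)) ≤ E p) :
    c * (∫ p in U, R p) ≤ ∫ p in U, E p := by
  have cH := sq_mul_C1 U ψ H hψ hs hH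
  have cG := sq_mul_C1 U ψ G hψ hs hG
  have csq : HasCompactSupport (fun p => ψ p ^ 2) := by
    simp only [pow_two]
    exact hc.mul_left (f := ψ)
  have sH : HasCompactSupport (fun p => ψ p ^ 2 * H p) := csq.mul_right
  have sG : HasCompactSupport (fun p => ψ p ^ 2 * G p) := csq.mul_right
  have iE := integrable_cs U ψ E hc hs hE hE0
  have iR := integrable_cs U ψ R hc hs hR hR0
  have z1 := int_fst _ cH sH
  have z2 := int_snd _ cH sH b hb
  have z3 := int_snd _ cG sG (fun _ => 1) continuous_const
  simp only [one_mul] at z3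
  have i1 : Integrable fun p => fderiv ℝ (fun p => ψ p ^ 2 * H p) p (1, 0) :=
    ((cH.continuous_fderiv (by norm_num)).clm_apply continuous_const).integrable_of_hasCompactSupport
      (sH.fderiv_apply ℝ _)
  have i2 : Integrable fun p : ℝ × ℝ => b p.1 * fderiv ℝ (fun p => ψ p ^ 2 * H p) p (0, 1) :=
    ((hb.comp continuous_fst).mul ((cH.continuous_fderiv (by norm_num)).clm_apply
      continuous_const)).integrable_of_hasCompactSupport (sH.fderiv_apply ℝ _).mul_left
  have i3 : Integrable fun p => fderiv ℝ (fun p => ψ p ^ 2 * G p) p (0, 1) :=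
    ((cG.continuous_fderiv (by norm_num)).clm_apply continuous_const).integrable_of_hasCompactSupport
      (sG.fderiv_apply ℝ _)
  rw [setIntegral_eq_integral_of_forall_compl_eq_zero (fun p hp => hR0 p fun h => hp (hs h)),
    setIntegral_eq_integral_of_forall_compl_eq_zero (fun p hp => hE0 p fun h => hp (hs h))]
  have e : ∫ p : ℝ × ℝ, (c * R p + (- fderiv ℝ (fun p => ψ p ^ 2 * H p) p (1, 0)
      + b p.1 * fderiv ℝ (fun p => ψ p ^ 2 * H p) p (0, 1)
      - fderiv ℝ (fun p => ψ p ^ 2 * G p) p (0, 1))) = c * ∫ p, R p := by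
    have i12 : Integrable fun p : ℝ × ℝ => - fderiv ℝ (fun p => ψ p ^ 2 * H p) p (1, 0)
      + b p.1 * fderiv ℝ (fun p => ψ p ^ 2 * H p) p (0, 1) := i1.neg.add i2
    have i123 : Integrable fun p : ℝ × ℝ => - fderiv ℝ (fun p => ψ p ^ 2 * H p) p (1, 0)
      + b p.1 * fderiv ℝ (fun p => ψ p ^ 2 * H p) p (0, 1)
      - fderiv ℝ (fun p => ψ p ^ 2 * G p) p (0, 1) := i12.sub i3
    have i1n : Integrable fun p : ℝ × ℝ => - fderiv ℝ (fun p => ψ p ^ 2 * H p) p (1, 0) := i1.neg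
    rw [integral_add (iR.const_mul c) i123, integral_sub i12 i3,
      integral_add i1n i2, integral_neg, z1, z2, z3, integral_const_mul]
    ring
  rw [← e]
  refine integral_mono ((iR.const_mul c).add ((i1.neg.add i2).sub i3)) iE fun p => ?_
  by_cases hp : p ∈ tsupport ψ
  · exact hineq p (hs hp)
  · have h0 : ∀ K : ℝ × ℝ → ℝ, fderiv ℝ (fun p => ψ p ^ 2 * K p) p = 0 := by
      intro K
      have : (fun p => ψ p ^ 2 * K p) =ᶠ[nhds p] fun _ => 0 := by
        filter_upwards [notMem_tsupport_iff_eventuallyEq.1 hp] with q hq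
        simp [hq]
      rw [this.fderiv_eq]; simp
    simp [h0, hE0 p hp, hR0 p hp]

/-- pointwise step -/
lemma pointwise (a1 cc : ℝ) (ψ : ℝ × ℝ → ℝ) (k r φ bb al al' be be' be'' S C : ℝ) (hk : 0 < k) (hr : 0 < r)
    (H G : ℝ × ℝ → ℝ) (hψ : DifferentiableAt ℝ ψ (r, φ))
    (hH : HasFDerivAt H ((al' + be' * C) • ContinuousLinearMap.fst ℝ ℝ ℝ
      + (be * (-k * S)) • ContinuousLinearMap.snd ℝ ℝ ℝ) (r, φ))
    (hG : HasFDerivAt G (be'' • ContinuousLinearMap.fst ℝ ℝ ℝ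
      + (k ^ 2 * S / r) • ContinuousLinearMap.snd ℝ ℝ ℝ) (r, φ))
    (hHv : H (r, φ) = al + be * C) (hGv : G (r, φ) = (-k * C) / r - be' / (2 * k))
    (hS : S = 1 + C ^ 2)
    (hT : cc * (r ^ 2 / a1) ≤ r * al' + r * bb * be * k * S - (al + be * C) ^ 2
      - r ^ 2 * be' ^ 2 / (4 * k ^ 2)) :
    cc * (ψ (r, φ) ^ 2 / a1 * r) + (- fderiv ℝ (fun p => ψ p ^ 2 * H p) (r, φ) (1, 0)
      + bb * fderiv ℝ (fun p => ψ p ^ 2 * H p) (r, φ) (0, 1)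
      - fderiv ℝ (fun p => ψ p ^ 2 * G p) (r, φ) (0, 1)) ≤
    ((fderiv ℝ ψ (r, φ) (1, 0) - bb * fderiv ℝ ψ (r, φ) (0, 1)) ^ 2
            + (fderiv ℝ ψ (r, φ) (0, 1)) ^ 2 / r ^ 2
            - k ^ 2 * (ψ (r, φ)) ^ 2 / r ^ 2) * r := by
  have dH := ((hψ.hasFDerivAt.pow 2).mul hH).fderiv
  have dG := ((hψ.hasFDerivAt.pow 2).mul hG).fderiv
  simp only [Pi.mul_def] at dH dG
  rw [dH, dG, hHv, hGv]
  simp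
  generalize fderiv ℝ ψ (r, φ) (1, 0) = A
  generalize fderiv ℝ ψ (r, φ) (0, 1) = B
  generalize ψ (r, φ) = v
  have hT2 := mul_le_mul_of_nonneg_left hT (show 0 ≤ v ^ 2 / r by positivity)
  have s1 : 0 ≤ r * (A - bb * B + (al + be * C) / r * v) ^ 2 := by positivity
  have s2 : 0 ≤ (B + (-k * C - r * be' / (2 * k)) * v) ^ 2 / r := by positivity
  rw [← sub_nonneg]
  refine (add_nonneg (add_nonneg s1 s2) (sub_nonneg.2 hT2)).trans_eq ?_
  subst hS
  simp only [div_eq_mul_inv]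
  generalize a1⁻¹ = a2
  field_simp
  ring

lemma log_near (r0 w : ℝ) (hr0 : 0 < r0) (hw : 0 < w) : ∃ L > 0, ∀ r > 0,
    |log r - log r0| ≤ 2 * L → |r - r0| ≤ w := by
  obtain ⟨d, hd, h⟩ := Metric.continuous_iff.1 continuous_exp (log r0) w hw
  refine ⟨d / 4, by positivity, fun r hr hl => ?_⟩
  have := h (log r) (by rw [Real.dist_eq]; linarith)
  rw [exp_log hr, exp_log hr0, Real.dist_eq] at this
  exact this.le

lemma scalar_rho (t0 L : ℝ) : ∃ C > 0, ∀ r > 0,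
    r ^ 2 * (L ^ 2 + (log r - t0) ^ 2) ≤ C * (1 + r ^ 2 * (log r) ^ 2) := by
  refine ⟨2 + (L ^ 2 + 2 * t0 ^ 2) * (1 + exp 1 ^ 2), by positivity, fun r hr => ?_⟩
  have key : r ^ 2 ≤ (1 + exp 1 ^ 2) * (1 + r ^ 2 * (log r) ^ 2) := by
    rcases le_total r (exp 1) with h | h
    · have : r ^ 2 ≤ exp 1 ^ 2 := by gcongr
      have : 0 ≤ r ^ 2 * (log r) ^ 2 := by positivity
      nlinarith [sq_nonneg (exp 1)]
    · have h1 : 1 ≤ log r := by rwa [le_log_iff_exp_le hr]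
      have : r ^ 2 * 1 ≤ r ^ 2 * (log r) ^ 2 := by gcongr; nlinarith
      nlinarith [sq_nonneg (exp 1)]
  have h2 : (log r - t0) ^ 2 ≤ 2 * log r ^ 2 + 2 * t0 ^ 2 := by nlinarith [sq_nonneg (log r + t0)]
  have h3 : r ^ 2 * (L ^ 2 + (log r - t0) ^ 2) ≤ r ^ 2 * (L ^ 2 + (2 * log r ^ 2 + 2 * t0 ^ 2)) := by gcongr
  have h4 : (L ^ 2 + 2 * t0 ^ 2) * r ^ 2 ≤ (L ^ 2 + 2 * t0 ^ 2) * ((1 + exp 1 ^ 2) * (1 + r ^ 2 * (log r) ^ 2)) := by gcongr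
  nlinarith

lemma scalar_alpha (κ L : ℝ) (hκ : 0 < κ) (hL : 0 < L) : ∃ δ > 0, ∃ c > 0, ∀ τ F : ℝ,
    0 ≤ F → (|τ| ≤ 2 * L → F = 1) →
    c / (L ^ 2 + τ ^ 2) ≤ -δ * (L ^ 2 - τ ^ 2) / (L ^ 2 + τ ^ 2) ^ 2
      - 2 * (-δ * τ / (L ^ 2 + τ ^ 2)) ^ 2 + κ * F := by
  obtain ⟨δ, hδ, h1, h2⟩ : ∃ δ > 0, δ ≤ 1 / 4 ∧ δ ≤ κ * L ^ 2 / 2 :=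
    ⟨min (1/4) (κ * L ^ 2 / 2), by positivity, min_le_left _ _, min_le_right _ _⟩
  obtain ⟨c, hc, h3, h4⟩ : ∃ c > 0, c ≤ δ / 5 ∧ c ≤ κ * L ^ 2 / 2 :=
    ⟨min (δ / 5) (κ * L ^ 2 / 2), by positivity, min_le_left _ _, min_le_right _ _⟩
  refine ⟨δ, hδ, c, hc, fun τ F hF hF1 => ?_⟩
  have hD : 0 < L ^ 2 + τ ^ 2 := by positivity
  have e : -δ * (L ^ 2 - τ ^ 2) / (L ^ 2 + τ ^ 2) ^ 2
      - 2 * (-δ * τ / (L ^ 2 + τ ^ 2)) ^ 2 = δ * (τ ^ 2 - L ^ 2 - 2 * δ * τ ^ 2) / (L ^ 2 + τ ^ 2) ^ 2 := by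
    field_simp; ring
  rw [e]
  by_cases ht : |τ| ≤ 2 * L
  · rw [hF1 ht, mul_one]
    have : c / (L ^ 2 + τ ^ 2) ≤ κ / 2 := by
      rw [div_le_iff₀ hD]; nlinarith [sq_nonneg τ]
    have : -(κ / 2) ≤ δ * (τ ^ 2 - L ^ 2 - 2 * δ * τ ^ 2) / (L ^ 2 + τ ^ 2) ^ 2 := by
      rw [le_div_iff₀ (by positivity)]
      have a1 : -(δ * L ^ 2) ≤ δ * (τ ^ 2 - L ^ 2 - 2 * δ * τ ^ 2) := by
        have : 0 ≤ δ * (1 - 2 * δ) * τ ^ 2 := by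
          have : 0 ≤ 1 - 2 * δ := by linarith
          positivity
        linarith
      have a2 : δ * L ^ 2 ≤ κ * L ^ 2 / 2 * L ^ 2 := by gcongr
      have a3 : L ^ 2 * L ^ 2 ≤ (L ^ 2 + τ ^ 2) ^ 2 := by nlinarith [sq_nonneg τ, sq_nonneg L, mul_nonneg (sq_nonneg τ) (sq_nonneg L)]
      nlinarith
    linarith
  · push Not at ht
    have h5 : 4 * L ^ 2 ≤ τ ^ 2 := by
      rw [← sq_abs τ]; nlinarith
    have : c / (L ^ 2 + τ ^ 2) ≤ δ * (τ ^ 2 - L ^ 2 - 2 * δ * τ ^ 2) / (L ^ 2 + τ ^ 2) ^ 2 := by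
      rw [div_le_div_iff₀ hD (by positivity)]
      have : c * (L ^ 2 + τ ^ 2) ≤ δ * (τ ^ 2 - L ^ 2 - 2 * δ * τ ^ 2) := by
        have b1 : c * (L ^ 2 + τ ^ 2) ≤ δ / 5 * (L ^ 2 + τ ^ 2) := by gcongr
        have b2 : δ * ((L ^ 2 + τ ^ 2) / 5) ≤ δ * (τ ^ 2 - L ^ 2 - 2 * δ * τ ^ 2) := by
          apply mul_le_mul_of_nonneg_left _ hδ.le
          nlinarith
        linarith
      nlinarith
    have := mul_nonneg hκ.le hF
    linarith

set_option maxHeartbeats 1000000 in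
/-- Choice of the radial coefficients. -/
lemma choose_coeffs (k : ℝ) (hk : 0 < k) (b : ℝ → ℝ) (hb : Continuous b)
    (hne : ∃ r > 0, b r ≠ 0) :
    ∃ c > 0, ∃ al al' be be' be'' : ℝ → ℝ, ContDiff ℝ 1 be ∧ ContDiff ℝ 1 be' ∧
      (∀ r > 0, ContDiffAt ℝ 1 al r) ∧
      (∀ r > 0, HasDerivAt al (al' r) r) ∧ (∀ r, HasDerivAt be (be' r) r) ∧
      (∀ r, HasDerivAt be' (be'' r) r) ∧
      ∀ r > 0, ∀ C S : ℝ, S = 1 + C ^ 2 →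
        c * (r ^ 2 / (1 + r ^ 2 * (log r) ^ 2)) ≤ r * al' r + r * b r * be r * k * S
          - (al r + be r * C) ^ 2 - r ^ 2 * be' r ^ 2 / (4 * k ^ 2) := by
  obtain ⟨r0, hr0, hbr0⟩ := hne
  obtain ⟨σ, hσ, hpos⟩ : ∃ σ : ℝ, σ ^ 2 = 1 ∧ 0 < σ * b r0 := by
    rcases lt_or_gt_of_ne hbr0 with h | h
    · exact ⟨-1, by norm_num, by linarith⟩
    · exact ⟨1, by norm_num, by linarith⟩
  obtain ⟨m, hm, w, hw, hwr, hbm⟩ : ∃ m > 0, ∃ w > 0, w < r0 ∧ ∀ r, |r - r0| < w → m ≤ σ * b r := by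
    obtain ⟨d, hd, h⟩ := Metric.continuous_iff.1 (hb.const_mul σ) r0 (σ * b r0 / 2) (by positivity)
    refine ⟨σ * b r0 / 2, by positivity, min d (r0 / 2), by positivity, by
      have := min_le_right d (r0 / 2); linarith, fun r hr => ?_⟩
    have := h r (by rw [Real.dist_eq]; exact hr.trans_le (min_le_left _ _))
    rw [Real.dist_eq, abs_lt] at this
    linarith [this.1]
  let f : ContDiffBump r0 := ⟨w / 2, w, by positivity, by linarith⟩
  have hf2 : ContDiff ℝ 2 f := f.contDiff (n := 2)
  have hf1 : ContDiff ℝ 1 (deriv f) := ((contDiff_succ_iff_deriv (n := 1)).1 hf2).2.2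
  have hfd : ∀ r, HasDerivAt f (deriv f r) r := fun r => (hf2.differentiable (by norm_num) r).hasDerivAt
  have hfd2 : ∀ r, HasDerivAt (deriv f) (deriv (deriv f) r) r :=
    fun r => (hf1.differentiable (by norm_num) r).hasDerivAt
  obtain ⟨N0, hN0⟩ : ∃ N0, ∀ r, ‖r * deriv f r‖ ≤ N0 := by
    refine HasCompactSupport.exists_bound_of_continuous (f := fun r => r * deriv f r) ?_
      (continuous_id.mul hf1.continuous)
    exact (f.hasCompactSupport.deriv).mul_left
  have hN : ∀ r, r ^ 2 * deriv f r ^ 2 / k ^ 2 ≤ N0 ^ 2 / k ^ 2 := by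
    intro r
    gcongr
    rw [← mul_pow, ← sq_abs]
    exact pow_le_pow_left₀ (abs_nonneg _) (hN0 r) 2
  set N := N0 ^ 2 / k ^ 2 with hNdef
  have hNn : 0 ≤ N := by positivity
  set μ := (r0 - w) * m * k with hμdef
  have hμ : 0 < μ := by have : 0 < r0 - w := by linarith
                        positivity
  set ε := μ / (2 * (2 + N)) with hε
  have hε0 : 0 < ε := by positivity
  have hεμ : ε * (2 + N) = μ / 2 := by rw [hε]; field_simp
  obtain ⟨L, hL, hlog⟩ := log_near r0 (w / 2) hr0 (by positivity)
  obtain ⟨δ, hδ, c0, hc0, hal⟩ := scalar_alpha (ε * μ / 2) L (by positivity) hL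
  obtain ⟨K, hK, hrho⟩ := scalar_rho (log r0) L
  have hD : ∀ t : ℝ, L ^ 2 + t ^ 2 ≠ 0 := fun t => by positivity
  refine ⟨c0 / K, by positivity, fun r => -δ * (log r - log r0) / (L ^ 2 + (log r - log r0) ^ 2),
    fun r => (-δ * (L ^ 2 - (log r - log r0) ^ 2) / (L ^ 2 + (log r - log r0) ^ 2) ^ 2) / r,
    fun r => σ * ε * f r ^ 2, fun r => σ * ε * (2 * f r * deriv f r),
    fun r => σ * ε * (2 * deriv f r * deriv f r + 2 * f r * deriv (deriv f) r), ?_, ?_, ?_, ?_, ?_, ?_, ?_⟩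
  · exact contDiff_const.mul (f.contDiff.pow 2)
  · exact contDiff_const.mul ((contDiff_const.mul f.contDiff).mul hf1)
  · intro r hr
    have hl : ContDiffAt ℝ 1 (fun r => log r - log r0) r :=
      (contDiffAt_log.2 hr.ne').sub contDiffAt_const
    exact (contDiffAt_const.mul hl).div (contDiffAt_const.add (hl.pow 2)) (hD _)
  · intro r hr
    have hl : HasDerivAt (fun r => log r - log r0) r⁻¹ r := (hasDerivAt_log hr.ne').sub_const _
    refine ((hl.const_mul (-δ)).div ((hl.pow 2).const_add (L ^ 2)) (hD _)).congr_deriv ?_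
    have := hD (log r - log r0)
    simp
    field_simp
    ring
  · intro r
    refine (((hfd r).pow 2).const_mul (σ * ε)).congr_deriv ?_
    simp
  · intro r
    exact (((hfd r).const_mul 2).mul (hfd2 r)).const_mul (σ * ε)
  · intro r hr C S hS
    have h1 := hal (log r - log r0) (f r ^ 2) (by positivity) (fun h => by
      have := hlog r hr h
      have : f r = 1 := f.one_of_mem_closedBall (by rw [Metric.mem_closedBall, Real.dist_eq]; exact this)
      simp [this])
    have h2 : c0 / K * (r ^ 2 / (1 + r ^ 2 * log r ^ 2)) ≤ c0 / (L ^ 2 + (log r - log r0) ^ 2) := by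
      have : 0 < L ^ 2 + (log r - log r0) ^ 2 := by positivity
      rw [div_mul_div_comm, div_le_div_iff₀ (by positivity) this]
      have := mul_le_mul_of_nonneg_left (hrho r hr) hc0.le
      linarith
    refine h2.trans (h1.trans ?_)
    beta_reduce
    rw [mul_div_cancel₀ _ hr.ne']
    generalize -δ * (L ^ 2 - (log r - log r0) ^ 2) / (L ^ 2 + (log r - log r0) ^ 2) ^ 2 = P
    generalize -δ * (log r - log r0) / (L ^ 2 + (log r - log r0) ^ 2) = A
    have hS1 : 1 ≤ S := by rw [hS]; nlinarith [sq_nonneg C]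
    have e1 : μ * ε * f r ^ 2 ≤ r * b r * (σ * ε * f r ^ 2) * k := by
      by_cases hfr : |r - r0| < w
      · have q1 := hbm r hfr
        have q2 : r0 - w ≤ r := by linarith [(abs_lt.1 hfr).1]
        have : (r0 - w) * m ≤ r * (σ * b r) := by
          apply mul_le_mul q2 q1 hm.le hr.le
        have := mul_le_mul_of_nonneg_left this (show 0 ≤ k * ε * f r ^ 2 by positivity)
        rw [hμdef]
        linarith
      · have : f r = 0 := f.zero_of_le_dist (by rw [Real.dist_eq]; exact not_lt.1 hfr)
        simp [this]
    have hf01 : f r ^ 2 ≤ 1 := pow_le_one₀ f.nonneg f.le_one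
    have hf0 : 0 ≤ f r ^ 2 := by positivity
    have e2 : (A + σ * ε * f r ^ 2 * C) ^ 2 ≤ 2 * A ^ 2 + 2 * ε ^ 2 * f r ^ 2 * S := by
      have : (σ * ε * f r ^ 2 * C) ^ 2 ≤ ε ^ 2 * f r ^ 2 * S := by
        have : (σ * ε * f r ^ 2 * C) ^ 2 = ε ^ 2 * f r ^ 2 * (f r ^ 2 * C ^ 2) := by
          linear_combination (ε * f r ^ 2 * C) ^ 2 * hσ
        rw [this]
        gcongr
        nlinarith [sq_nonneg C]
      linarith [sq_nonneg (A - σ * ε * f r ^ 2 * C)]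
    have e3 : r ^ 2 * (σ * ε * (2 * f r * deriv f r)) ^ 2 / (4 * k ^ 2) ≤ ε ^ 2 * f r ^ 2 * N := by
      have : r ^ 2 * (σ * ε * (2 * f r * deriv f r)) ^ 2 / (4 * k ^ 2)
          = ε ^ 2 * f r ^ 2 * (r ^ 2 * deriv f r ^ 2 / k ^ 2) := by
        field_simp
        linear_combination (4 * f r ^ 2 * deriv f r ^ 2) * hσ
      rw [this]
      gcongr
      exact hN r
    have e1' := mul_le_mul_of_nonneg_right e1 (show 0 ≤ S by linarith)
    have e4 : 0 ≤ ε * f r ^ 2 * (μ - 2 * ε) * (S - 1) := by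
      have : 0 ≤ μ - 2 * ε := by linarith [mul_nonneg hε0.le hNn]
      have : 0 ≤ S - 1 := by linarith
      positivity
    have e5 : ε * f r ^ 2 * (ε * (2 + N)) = ε * f r ^ 2 * (μ / 2) := by rw [hεμ]
    linarith

set_option maxHeartbeats 1000000 in
theorem improved_hardy_curvilinear
    (a : ℝ) (ha : a ∈ Ioc (0:ℝ) 1)
    (θ θ' : ℝ → ℝ)
    (hderiv : ∀ r ∈ Ici (0:ℝ), HasDerivWithinAt θ (θ' r) (Ici 0) r)
    (hcont : ContinuousOn θ' (Ici 0))
    (hsupp : HasCompactSupport θ')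
    (hne : ∃ r ∈ Ioi (0:ℝ), θ' r ≠ 0) :
    ∃ c > 0, ∀ ψ : ℝ × ℝ → ℝ,
      ContDiff ℝ 1 ψ → HasCompactSupport ψ → tsupport ψ ⊆ wedgeU a →
      (∫ p in wedgeU a,
          ((fderiv ℝ ψ p (1, 0) - θ' p.1 * fderiv ℝ ψ p (0, 1)) ^ 2
            + (fderiv ℝ ψ p (0, 1)) ^ 2 / p.1 ^ 2
            - (1 / (4 * a ^ 2)) * (ψ p) ^ 2 / p.1 ^ 2) * p.1)
        ≥ c * ∫ p in wedgeU a,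
            (ψ p) ^ 2 / (1 + p.1 ^ 2 * (Real.log p.1) ^ 2) * p.1 := by
  obtain ⟨ha0, -⟩ := ha
  have hb : Continuous fun r => θ' (max r 0) :=
    hcont.comp_continuous (by fun_prop) fun r => mem_Ici.2 (le_max_right _ _)
  have hk : 0 < 1 / (2 * a) := by positivity
  obtain ⟨c, hc, al, al', be, be', be'', hbe, hbe', hal, dal, dbe, dbe', hT⟩ :=
    choose_coeffs (1 / (2 * a)) hk (fun r => θ' (max r 0)) hb (by
      obtain ⟨r, hr, h⟩ := hne
      exact ⟨r, hr, by rwa [max_eq_left (le_of_lt hr)]⟩)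
  have hk2 : 1 / (4 * a ^ 2) = (1 / (2 * a)) ^ 2 := by field_simp; norm_num
  have hkpi : 1 / (2 * a) * (2 * π * a) = π := by field_simp
  rw [hk2]
  set k := 1 / (2 * a) with hkdef
  have hsin : ∀ p ∈ wedgeU a, sin (k * p.2) ≠ 0 := by
    rintro ⟨r, φ⟩ ⟨-, h1, h2⟩
    refine (sin_pos_of_pos_of_lt_pi (by positivity) ?_).ne'
    rw [← hkpi]
    exact mul_lt_mul_of_pos_left h2 hk
  refine ⟨c, hc, fun ψ hψ hcs hs => ?_⟩
  have hmU : MeasurableSet (wedgeU a) := measurableSet_Ioi.prod measurableSet_Ioo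
  have hrw : ∀ p ∈ wedgeU a, ((fderiv ℝ ψ p (1, 0) - θ' p.1 * fderiv ℝ ψ p (0, 1)) ^ 2
            + (fderiv ℝ ψ p (0, 1)) ^ 2 / p.1 ^ 2
            - k ^ 2 * (ψ p) ^ 2 / p.1 ^ 2) * p.1
      = ((fderiv ℝ ψ p (1, 0) - θ' (max p.1 0) * fderiv ℝ ψ p (0, 1)) ^ 2
            + (fderiv ℝ ψ p (0, 1)) ^ 2 / p.1 ^ 2
            - k ^ 2 * (ψ p) ^ 2 / p.1 ^ 2) * p.1 := by
    rintro p ⟨hp, -⟩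
    rw [max_eq_left (le_of_lt hp)]
  rw [setIntegral_congr_fun hmU hrw, ge_iff_le]
  have hfc := hψ.continuous_fderiv (by norm_num)
  have c1 : Continuous fun p => fderiv ℝ ψ p (1, 0) := hfc.clm_apply continuous_const
  have c2 : Continuous fun p => fderiv ℝ ψ p (0, 1) := hfc.clm_apply continuous_const
  have hψ0 : ∀ p ∉ tsupport ψ, ψ p = 0 := fun p hp => image_eq_zero_of_notMem_tsupport hp
  have hfψ0 : ∀ p ∉ tsupport ψ, fderiv ℝ ψ p = 0 := fun p hp =>
    image_eq_zero_of_notMem_tsupport fun h => hp (tsupport_fderiv_subset ℝ h)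
  have hcot : ∀ p ∈ wedgeU a, ContDiffAt ℝ 1 (fun p : ℝ × ℝ => cos (k * p.2) / sin (k * p.2)) p := by
    intro p hp
    exact ContDiffAt.div (by fun_prop) (by fun_prop) (hsin p hp)
  refine abstract_ineq (wedgeU a) ψ (fun p => al p.1 + be p.1 * (cos (k * p.2) / sin (k * p.2)))
    (fun p => (-k * (cos (k * p.2) / sin (k * p.2))) / p.1 - be' p.1 / (2 * k)) _ _
    (fun r => θ' (max r 0)) c hψ hcs hs hb ?_ ?_ ?_ ?_ ?_ ?_ ?_
  · intro p hp
    exact ((hal p.1 hp.1).comp p contDiffAt_fst).add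
      ((hbe.contDiffAt.comp p contDiffAt_fst).mul (hcot p hp))
  · intro p hp
    exact ((contDiffAt_const.mul (hcot p hp)).div contDiffAt_fst (ne_of_gt hp.1)).sub
      ((hbe'.contDiffAt.comp p contDiffAt_fst).div_const _)
  · intro p hp
    have h1 : p.1 ^ 2 ≠ 0 := pow_ne_zero _ (ne_of_gt hp.1)
    have h2 : Continuous fun p : ℝ × ℝ => θ' (max p.1 0) := hb.comp continuous_fst
    have h3 := hψ.continuous
    have f1 : ContinuousAt (fun p : ℝ × ℝ => p.1 ^ 2) p := by fun_prop
    exact (((((c1.sub (h2.mul c2)).pow 2).continuousAt).add ((c2.pow 2).continuousAt.div f1 h1)).sub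
      ((continuous_const.mul (h3.pow 2)).continuousAt.div f1 h1)).mul continuousAt_fst
  · intro p hp
    simp [hψ0 p hp, hfψ0 p hp]
  · intro p hp
    have f1 : ContinuousAt (fun p : ℝ × ℝ => log p.1) p :=
      continuousAt_fst.log (ne_of_gt hp.1)
    have f2 : ContinuousAt (fun p : ℝ × ℝ => p.1) p := continuousAt_fst
    have hpos : 0 < 1 + p.1 ^ 2 * (Real.log p.1) ^ 2 := by positivity
    exact (((hψ.continuous.pow 2).continuousAt).div (continuousAt_const.add ((f2.pow 2).mul (f1.pow 2)))
      hpos.ne').mul f2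
  · intro p hp
    simp [hψ0 p hp]
  · rintro ⟨r, φ⟩ hp
    have hr : 0 < r := hp.1
    have hsn : sin (k * φ) ≠ 0 := hsin (r, φ) hp
    have hS : 1 / sin (k * φ) ^ 2 = 1 + (cos (k * φ) / sin (k * φ)) ^ 2 := by
      field_simp
      linarith [sin_sq_add_cos_sq (k * φ)]
    have dC : HasDerivAt (fun y => cos (k * y) / sin (k * y)) (-k * (1 / sin (k * φ) ^ 2)) φ := by
      have hl : HasDerivAt (fun y => k * y) k φ := by simpa using (hasDerivAt_id φ).const_mul k
      refine (hl.cos.div hl.sin hsn).congr_deriv ?_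
      field_simp
      linear_combination -sin_sq_add_cos_sq (k * φ)
    have f1 : HasFDerivAt (fun p : ℝ × ℝ => p.1) (ContinuousLinearMap.fst ℝ ℝ ℝ) (r, φ) := hasFDerivAt_fst
    have f2 : HasFDerivAt (fun p : ℝ × ℝ => p.2) (ContinuousLinearMap.snd ℝ ℝ ℝ) (r, φ) := hasFDerivAt_snd
    have DC : HasFDerivAt (fun p : ℝ × ℝ => cos (k * p.2) / sin (k * p.2)) _ (r, φ) :=
      HasDerivAt.comp_hasFDerivAt (h₂ := fun y => cos (k * y) / sin (k * y)) (r, φ) dC f2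
    have Dal : HasFDerivAt (fun p : ℝ × ℝ => al p.1) _ (r, φ) :=
      HasDerivAt.comp_hasFDerivAt (r, φ) (dal r hr) f1
    have Dbe : HasFDerivAt (fun p : ℝ × ℝ => be p.1) _ (r, φ) :=
      HasDerivAt.comp_hasFDerivAt (r, φ) (dbe r) f1
    have Dbe' : HasFDerivAt (fun p : ℝ × ℝ => be' p.1 / (2 * k)) _ (r, φ) :=
      HasDerivAt.comp_hasFDerivAt (h₂ := fun y => be' y / (2 * k)) (r, φ) ((dbe' r).div_const (2 * k)) f1
    have Dinv : HasFDerivAt (fun p : ℝ × ℝ => (p.1)⁻¹) _ (r, φ) :=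
      HasDerivAt.comp_hasFDerivAt (h₂ := fun y => y⁻¹) (r, φ) (hasDerivAt_inv hr.ne') f1
    refine pointwise (1 + r ^ 2 * log r ^ 2) c ψ k r φ (θ' (max r 0)) (al r) (al' r) (be r) (be' r)
      (k * (cos (k * φ) / sin (k * φ)) / r ^ 2 - be'' r / (2 * k))
      (1 / sin (k * φ) ^ 2) (cos (k * φ) / sin (k * φ)) hk hr _ _
      (hψ.differentiable (by norm_num) _) ?_ ?_ rfl rfl hS (hT r hr _ _ hS)
    · refine (Dal.add (Dbe.mul DC)).congr_fderiv ?_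
      ext <;> simp <;> ring
    · simp only [div_eq_mul_inv _ (Prod.fst _)]
      refine (((DC.const_mul (-k)).mul Dinv).sub Dbe').congr_fderiv ?_
      ext <;> simp <;> field_simp <;> ring
end
end

section
/- Let a ∈ (0,1], let θ ∈ C¹((0,∞)) with r ↦ r θ'(r) bounded on (0,∞), and let R > 0. Define λ(R,θ') as the infimum, over all ψ ∈ C¹_c(U) whose restriction to U_R := (0,R) × (0,2πa) is not identically zero, of the quotient (∫_{U_R} [ |∂_rψ − θ'(r)∂_φψ|² + |∂_φψ|²/r² − (1/(4a²)) |ψ|²/r² ] r dr dφ) / (∫_{U_R} |ψ|² r dr dφ). Then for every continuously differentiable function u with compact support in Ω one has ∫_Ω |∇u(x)|² dx − (1/(4a²)) ∫_Ω |u(x)|²/|x|² dx ≥ λ(R,θ') ∫_{Ω_R} |u(x)|² dx, where Ω_R := ℒ(U_R). -/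
open MeasureTheory Real Set

noncomputable section

/-- The truncated half-strip `U_R = (0,R) × (0,2πa)`. -/
def wedgeUR (a R : ℝ) : Set (ℝ × ℝ) := Ioo (0:ℝ) R ×ˢ Ioo (0:ℝ) (2 * π * a)

/-- The curvilinear coordinate map `ℒ(r,φ) = (r cos(φ+θ(r)), r sin(φ+θ(r)))`. -/
def wedgeMap (θ : ℝ → ℝ) (p : ℝ × ℝ) : ℝ × ℝ :=
  (p.1 * Real.cos (p.2 + θ p.1), p.1 * Real.sin (p.2 + θ p.1))

/-- The lowest "Neumann" eigenvalue `λ(R,θ')`: the infimum over test functions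
`ψ ∈ C¹_c(U)`, not identically zero on `U_R`, of the Hardy-type Rayleigh quotient on `U_R`. -/
def lamRayleigh (a R : ℝ) (θ' : ℝ → ℝ) : ℝ :=
  sInf { q : ℝ | ∃ ψ : ℝ × ℝ → ℝ,
    ContDiff ℝ 1 ψ ∧ HasCompactSupport ψ ∧ tsupport ψ ⊆ wedgeU a ∧
    (¬ ∀ p ∈ wedgeUR a R, ψ p = 0) ∧
    q = (∫ p in wedgeUR a R,
          ((fderiv ℝ ψ p (1, 0) - θ' p.1 * fderiv ℝ ψ p (0, 1)) ^ 2
            + (fderiv ℝ ψ p (0, 1)) ^ 2 / p.1 ^ 2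
            - (1 / (4 * a ^ 2)) * (ψ p) ^ 2 / p.1 ^ 2) * p.1)
        / (∫ p in wedgeUR a R, (ψ p) ^ 2 * p.1) }

lemma aux_wirtinger (a : ℝ) (ha : 0 < a) (f : ℝ → ℝ) (hf : ContDiff ℝ 1 f)
    (hs : tsupport f ⊆ Ioo 0 (2 * π * a)) :
    0 ≤ ∫ x in Ioo 0 (2 * π * a), ((deriv f x) ^ 2 - (1 / (4 * a ^ 2)) * f x ^ 2) := by
  set k : ℝ := 1 / (2 * a) with hk
  have hkp : 0 < k := by positivity
  have hk2 : 1 / (4 * a ^ 2) = k ^ 2 := by rw [hk]; field_simp; norm_num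
  have hL : 0 < 2 * π * a := by positivity
  have hfd : Continuous (deriv f) := hf.continuous_deriv le_rfl
  have hdf : ∀ x, HasDerivAt f (deriv f x) x := fun x =>
    (hf.differentiable one_ne_zero x).hasDerivAt
  let g : ℝ → ℝ := fun x => k * (Real.cos (k * x) / Real.sin (k * x)) * f x ^ 2
  have hsin : ∀ x ∈ Ioo 0 (2 * π * a), 0 < Real.sin (k * x) := by
    intro x hx
    apply Real.sin_pos_of_pos_of_lt_pi (mul_pos hkp hx.1)
    calc k * x < k * (2 * π * a) := by gcongr; exact hx.2
      _ = π := by rw [hk]; field_simp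
  have hgt : tsupport g ⊆ tsupport f := by
    apply closure_mono
    intro x hx
    simp only [g, Function.mem_support] at hx ⊢
    intro h; apply hx; simp [h]
  have hgc : ContDiff ℝ 1 g := by
    rw [contDiff_iff_contDiffAt]
    intro x
    by_cases hx : x ∉ tsupport g
    · exact contDiffAt_const.congr_of_eventuallyEq (notMem_tsupport_iff_eventuallyEq.mp hx)
    rw [not_not] at hx
    have := (hsin x (hs (hgt hx))).ne'
    have h1 : ContDiffAt ℝ 1 (fun x => Real.cos (k * x)) x := by fun_prop
    have h2 : ContDiffAt ℝ 1 (fun x => Real.sin (k * x)) x := by fun_prop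
    exact ((contDiffAt_const.mul (h1.div h2 this))).mul (hf.contDiffAt.pow 2)
  have hgd : Continuous (deriv g) := hgc.continuous_deriv le_rfl
  have hg0 : ∫ x in Ioo 0 (2 * π * a), deriv g x = 0 := by
    rw [← integral_Ioc_eq_integral_Ioo, ← intervalIntegral.integral_of_le hL.le,
      intervalIntegral.integral_eq_sub_of_hasDerivAt
        (fun x _ => (hgc.differentiable one_ne_zero x).hasDerivAt)
        (hgd.intervalIntegrable _ _)]
    have e1 : f (2 * π * a) = 0 := image_eq_zero_of_notMem_tsupport (fun h => (hs h).2.false)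
    have e2 : f 0 = 0 := image_eq_zero_of_notMem_tsupport (fun h => (hs h).1.false)
    simp [g, e1, e2]
  rw [hk2]
  refine hg0.symm.le.trans ?_
  apply setIntegral_mono_on
  · exact (hgd.continuousOn.integrableOn_Icc (a := 0) (b := 2 * π * a)).mono_set Ioo_subset_Icc_self
  · exact (ContinuousOn.integrableOn_Icc (a := 0) (b := 2 * π * a)
      (by have := hf.continuous; fun_prop)).mono_set Ioo_subset_Icc_self
  · exact measurableSet_Ioo
  intro x hx
  have hne := (hsin x hx).ne'
  have hc : HasDerivAt (fun x => k * x) k x := by simpa using (hasDerivAt_id x).const_mul k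
  have hd := (((hc.cos.div hc.sin hne).const_mul k).mul ((hdf x).pow 2))
  have hd' : deriv g x = _ := HasDerivAt.deriv hd
  rw [hd']
  have hsc := Real.sin_sq_add_cos_sq (k * x)
  set s := Real.sin (k * x)
  set c := Real.cos (k * x)
  have key : deriv f x ^ 2 - k ^ 2 * f x ^ 2 - (k * ((-s * k * s - c * (c * k)) / s ^ 2) * f x ^ 2
      + k * (c / s) * (2 * f x * deriv f x)) = (deriv f x - k * (c / s) * f x) ^ 2 := by
    have : -s * k * s - c * (c * k) = - k := by linear_combination (-k) * hsc
    rw [this]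
    field_simp
    linear_combination (k ^ 2 * f x ^ 2) * (-hsc)
  have := sq_nonneg (deriv f x - k * (c / s) * f x)
  rw [← key] at this
  simp at this ⊢
  linarith

/-- energy density -/
def auxE (θ' : ℝ → ℝ) (ψ : ℝ × ℝ → ℝ) (p : ℝ × ℝ) : ℝ :=
  ((fderiv ℝ ψ p (1, 0) - θ' p.1 * fderiv ℝ ψ p (0, 1)) ^ 2
    + (fderiv ℝ ψ p (0, 1)) ^ 2 / p.1 ^ 2) * p.1

/-- Hardy density -/
def auxH (ψ : ℝ × ℝ → ℝ) (p : ℝ × ℝ) : ℝ := (ψ p) ^ 2 / p.1 ^ 2 * p.1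

/-- test function predicate -/
def auxT (a : ℝ) (ψ : ℝ × ℝ → ℝ) : Prop :=
  ContDiff ℝ 1 ψ ∧ HasCompactSupport ψ ∧ tsupport ψ ⊆ wedgeU a

lemma auxQ_eq (a : ℝ) (θ' : ℝ → ℝ) (ψ : ℝ × ℝ → ℝ) (p : ℝ × ℝ) :
    ((fderiv ℝ ψ p (1, 0) - θ' p.1 * fderiv ℝ ψ p (0, 1)) ^ 2
            + (fderiv ℝ ψ p (0, 1)) ^ 2 / p.1 ^ 2
            - (1 / (4 * a ^ 2)) * (ψ p) ^ 2 / p.1 ^ 2) * p.1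
      = auxE θ' ψ p - (1 / (4 * a ^ 2)) * auxH ψ p := by
  unfold auxE auxH; ring

lemma aux_integrable {ψ F : ℝ × ℝ → ℝ} (hc : HasCompactSupport ψ)
    (h0 : ∀ p, p ∉ tsupport ψ → F p = 0) (h1 : ∀ p ∈ tsupport ψ, ContinuousAt F p) :
    Integrable F := by
  have hsub : tsupport F ⊆ tsupport ψ :=
    closure_minimal (fun p hp => by by_contra h; exact hp (h0 p h)) (isClosed_tsupport ψ)
  exact (continuous_of_tsupport (fun p hp => h1 p (hsub hp))).integrable_of_hasCompactSupport
    (hc.of_isClosed_subset (isClosed_tsupport F) hsub)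

lemma auxE_int {a : ℝ} {θ' : ℝ → ℝ} {ψ : ℝ × ℝ → ℝ} (hcont : ContinuousOn θ' (Ioi 0))
    (h : auxT a ψ) : Integrable (auxE θ' ψ) := by
  obtain ⟨h1, h2, h3⟩ := h
  have hfd : Continuous (fderiv ℝ ψ) := h1.continuous_fderiv one_ne_zero
  refine aux_integrable h2 (fun p hp => ?_) (fun p hp => ?_)
  · have : fderiv ℝ ψ p = 0 :=
      image_eq_zero_of_notMem_tsupport (fun h => hp (tsupport_fderiv_subset ℝ h))
    simp [auxE, this]
  · have hp0 : p.1 ∈ Ioi (0:ℝ) := (h3 hp).1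
    have hθ : ContinuousAt (fun p : ℝ × ℝ => θ' p.1) p :=
      ContinuousAt.comp (g := θ') (hcont.continuousAt (Ioi_mem_nhds hp0)) continuousAt_fst
    have e1 : Continuous fun p => fderiv ℝ ψ p (1, 0) := by fun_prop
    have e2 : Continuous fun p => fderiv ℝ ψ p (0, 1) := by fun_prop
    exact (((e1.continuousAt.sub (hθ.mul e2.continuousAt)).pow 2).add
      ((e2.continuousAt.pow 2).div (continuousAt_fst.pow 2) (pow_ne_zero 2 (ne_of_gt hp0)))).mul
      continuousAt_fst

lemma auxH_int {a : ℝ} {ψ : ℝ × ℝ → ℝ} (h : auxT a ψ) : Integrable (auxH ψ) := by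
  obtain ⟨h1, h2, h3⟩ := h
  refine aux_integrable h2 (fun p hp => ?_) (fun p hp => ?_)
  · simp [auxH, image_eq_zero_of_notMem_tsupport hp]
  · have hp0 : p.1 ∈ Ioi (0:ℝ) := (h3 hp).1
    exact ((h1.continuous.continuousAt.pow 2).div (continuousAt_fst.pow 2)
      (pow_ne_zero 2 (ne_of_gt hp0))).mul continuousAt_fst

lemma auxM_int {a : ℝ} {ψ : ℝ × ℝ → ℝ} (h : auxT a ψ) :
    Integrable (fun p => ψ p ^ 2 * p.1) := by
  obtain ⟨h1, h2, h3⟩ := h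
  refine aux_integrable h2 (fun p hp => ?_) (fun p hp => ?_)
  · simp [image_eq_zero_of_notMem_tsupport hp]
  · exact (h1.continuous.continuousAt.pow 2).mul continuousAt_fst

lemma aux_nonneg {a : ℝ} (ha : 0 < a) {θ' : ℝ → ℝ} {ψ : ℝ × ℝ → ℝ}
    (hcont : ContinuousOn θ' (Ioi 0)) (h : auxT a ψ) {A : Set ℝ} (hA : MeasurableSet A)
    (hA0 : A ⊆ Ioi 0) :
    0 ≤ ∫ p in A ×ˢ Ioo 0 (2 * π * a), (auxE θ' ψ p - (1 / (4 * a ^ 2)) * auxH ψ p) := by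
  have hint : Integrable (fun p => auxE θ' ψ p - (1 / (4 * a ^ 2)) * auxH ψ p) :=
    (auxE_int hcont h).sub ((auxH_int h).const_mul _)
  obtain ⟨h1, h2, h3⟩ := h
  rw [Measure.volume_eq_prod, setIntegral_prod _ hint.integrableOn]
  refine setIntegral_nonneg hA (fun r hr => ?_)
  have hr0 : 0 < r := hA0 hr
  let f : ℝ → ℝ := fun φ => ψ (r, φ)
  have hf : ContDiff ℝ 1 f := h1.comp (contDiff_const.prodMk contDiff_id)
  have hfs : tsupport f ⊆ Ioo 0 (2 * π * a) := fun x hx =>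
    (h3 (tsupport_comp_subset_preimage ψ (f := fun φ : ℝ => (r, φ)) (by fun_prop) hx)).2
  have hd : ∀ x, deriv f x = fderiv ℝ ψ (r, x) (0, 1) := by
    intro x
    have e := (h1.differentiable one_ne_zero (r, x)).hasFDerivAt.comp_hasDerivAt x
      ((hasDerivAt_const x r).prodMk (hasDerivAt_id x))
    exact e.deriv
  have hfd : Continuous (deriv f) := hf.continuous_deriv le_rfl
  have hW := aux_wirtinger a ha f hf hfs
  have hfder : Continuous (fderiv ℝ ψ) := h1.continuous_fderiv one_ne_zero
  have hsl : Continuous (fun x => auxE θ' ψ (r, x) - (1 / (4 * a ^ 2)) * auxH ψ (r, x)) := by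
    simp only [auxE, auxH]
    have := h1.continuous
    fun_prop (disch := positivity)
  calc (0:ℝ) ≤ r⁻¹ * ∫ x in Ioo 0 (2 * π * a), ((deriv f x) ^ 2 - (1 / (4 * a ^ 2)) * f x ^ 2) := by
        positivity
    _ = ∫ x in Ioo 0 (2 * π * a), r⁻¹ * ((deriv f x) ^ 2 - (1 / (4 * a ^ 2)) * f x ^ 2) := by
        rw [integral_const_mul]
    _ ≤ _ := by
        apply setIntegral_mono_on
        · exact (ContinuousOn.integrableOn_Icc (a := 0) (b := 2 * π * a)
            (by have := hf.continuous; fun_prop)).mono_set Ioo_subset_Icc_self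
        · exact (ContinuousOn.integrableOn_Icc (a := 0) (b := 2 * π * a)
            hsl.continuousOn).mono_set Ioo_subset_Icc_self
        · exact measurableSet_Ioo
        intro x hx
        rw [hd]
        simp only [auxE, auxH, f]
        have : 0 ≤ (fderiv ℝ ψ (r, x) (1, 0) - θ' r * fderiv ℝ ψ (r, x) (0, 1)) ^ 2 * r := by
          positivity
        have e : (fderiv ℝ ψ (r, x) (0, 1)) ^ 2 / r ^ 2 * r
          = r⁻¹ * (fderiv ℝ ψ (r, x) (0, 1)) ^ 2 := by field_simp
        have e' : (ψ (r, x)) ^ 2 / r ^ 2 * r = r⁻¹ * (ψ (r, x)) ^ 2 := by field_simp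
        rw [add_mul, e, e']
        linarith

/-- energy on strips dominates -/
lemma aux_main {a : ℝ} (ha : 0 < a) {R : ℝ} {θ' : ℝ → ℝ} {ψ : ℝ × ℝ → ℝ}
    (hcont : ContinuousOn θ' (Ioi 0)) (h : auxT a ψ) :
    lamRayleigh a R θ' * ∫ p in wedgeUR a R, ψ p ^ 2 * p.1
      ≤ (∫ p in wedgeU a, auxE θ' ψ p) - (1 / (4 * a ^ 2)) * ∫ p in wedgeU a, auxH ψ p := by
  have hint : Integrable (fun p => auxE θ' ψ p - (1 / (4 * a ^ 2)) * auxH ψ p) :=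
    (auxE_int hcont h).sub ((auxH_int h).const_mul _)
  have hsplit : (∫ p in wedgeU a, auxE θ' ψ p) - (1 / (4 * a ^ 2)) * ∫ p in wedgeU a, auxH ψ p
      = ∫ p in wedgeU a, (auxE θ' ψ p - (1 / (4 * a ^ 2)) * auxH ψ p) := by
    rw [integral_sub (auxE_int hcont h).integrableOn ((auxH_int h).const_mul _).integrableOn,
      integral_const_mul]
  have hURm : MeasurableSet (wedgeUR a R) := measurableSet_Ioo.prod measurableSet_Ioo
  have hle : ∫ p in wedgeUR a R, (auxE θ' ψ p - (1 / (4 * a ^ 2)) * auxH ψ p)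
      ≤ ∫ p in wedgeU a, (auxE θ' ψ p - (1 / (4 * a ^ 2)) * auxH ψ p) := by
    have hU : wedgeU a = wedgeUR a R ∪ ((Ioi 0 \ Ioo 0 R) ×ˢ Ioo 0 (2 * π * a)) := by
      unfold wedgeU wedgeUR
      rw [← union_prod, union_sdiff_cancel Ioo_subset_Ioi_self]
    have hm : MeasurableSet (Ioi (0:ℝ) \ Ioo 0 R) := measurableSet_Ioi.diff measurableSet_Ioo
    rw [hU, setIntegral_union _ (hm.prod measurableSet_Ioo) hint.integrableOn hint.integrableOn]
    · have := aux_nonneg ha hcont h hm sdiff_subset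
      linarith
    · exact Disjoint.set_prod_left disjoint_sdiff_right _ _
  rw [hsplit]
  have hM0 : ∀ p ∈ wedgeUR a R, 0 ≤ ψ p ^ 2 * p.1 := fun p hp =>
    mul_nonneg (sq_nonneg _) hp.1.1.le
  by_cases hz : ∀ p ∈ wedgeUR a R, ψ p = 0
  · rw [setIntegral_congr_fun hURm (g := fun _ => (0:ℝ)) (fun p hp => by simp [hz p hp])]
    simp only [integral_zero, mul_zero]
    exact aux_nonneg ha hcont h measurableSet_Ioi subset_rfl
  refine le_trans ?_ hle
  have hpos : 0 < ∫ p in wedgeUR a R, ψ p ^ 2 * p.1 := by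
    rw [setIntegral_pos_iff_support_of_nonneg_ae
      ((ae_restrict_iff' hURm).2 (Filter.Eventually.of_forall hM0)) (auxM_int h).integrableOn]
    push Not at hz
    obtain ⟨p, hp, hp0⟩ := hz
    have ho : IsOpen (Function.support (fun p => ψ p ^ 2 * p.1) ∩ wedgeUR a R) :=
      (((h.1.continuous.pow 2).mul continuous_fst).isOpen_support).inter
        (isOpen_Ioo.prod isOpen_Ioo)
    exact ho.measure_pos _ ⟨p, mul_ne_zero (pow_ne_zero 2 hp0) hp.1.1.ne', hp⟩
  rw [← le_div_iff₀ hpos]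
  unfold lamRayleigh
  simp only [auxQ_eq]
  apply csInf_le
  · refine ⟨0, ?_⟩
    rintro q ⟨χ, c1, c2, c3, -, rfl⟩
    exact div_nonneg (aux_nonneg ha hcont ⟨c1, c2, c3⟩ measurableSet_Ioo Ioo_subset_Ioi_self)
      (setIntegral_nonneg hURm fun p hp => mul_nonneg (sq_nonneg _) hp.1.1.le)
  · exact ⟨ψ, h.1, h.2.1, h.2.2, hz, rfl⟩

/-- derivative of the wedge map -/
def auxD (θ θ' : ℝ → ℝ) (p : ℝ × ℝ) : ℝ × ℝ →L[ℝ] ℝ × ℝ :=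
  (Matrix.toLin (.finTwoProd ℝ) (.finTwoProd ℝ)
    !![cos (p.2 + θ p.1) - p.1 * θ' p.1 * sin (p.2 + θ p.1), -p.1 * sin (p.2 + θ p.1);
       sin (p.2 + θ p.1) + p.1 * θ' p.1 * cos (p.2 + θ p.1), p.1 * cos (p.2 + θ p.1)]
    ).toContinuousLinearMap

lemma auxD_det (θ θ' : ℝ → ℝ) (p : ℝ × ℝ) : (auxD θ θ' p).det = p.1 := by
  unfold auxD
  simp only [LinearMap.det_toContinuousLinearMap, LinearMap.det_toLin, Matrix.det_fin_two_of]
  linear_combination p.1 * Real.sin_sq_add_cos_sq (p.2 + θ p.1)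

lemma auxD_apply (θ θ' : ℝ → ℝ) (p : ℝ × ℝ) (v : ℝ × ℝ) : auxD θ θ' p v =
    ((cos (p.2 + θ p.1) - p.1 * θ' p.1 * sin (p.2 + θ p.1)) * v.1
        + (-p.1 * sin (p.2 + θ p.1)) * v.2,
     (sin (p.2 + θ p.1) + p.1 * θ' p.1 * cos (p.2 + θ p.1)) * v.1
        + (p.1 * cos (p.2 + θ p.1)) * v.2) := by
  unfold auxD
  rw [Matrix.toLin_finTwoProd_toContinuousLinearMap]
  simp

lemma auxD_hasFDerivAt {θ θ' : ℝ → ℝ} (hderiv : ∀ r ∈ Ioi (0:ℝ), HasDerivAt θ (θ' r) r)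
    {p : ℝ × ℝ} (hp : 0 < p.1) : HasFDerivAt (wedgeMap θ) (auxD θ θ' p) p := by
  have h1 : HasFDerivAt (fun p : ℝ × ℝ => p.1) (ContinuousLinearMap.fst ℝ ℝ ℝ) p :=
    hasFDerivAt_fst
  have h2 : HasFDerivAt (fun p : ℝ × ℝ => p.2) (ContinuousLinearMap.snd ℝ ℝ ℝ) p :=
    hasFDerivAt_snd
  have h3 : HasFDerivAt (fun p : ℝ × ℝ => θ p.1) (θ' p.1 • ContinuousLinearMap.fst ℝ ℝ ℝ) p :=
    (hderiv p.1 hp).comp_hasFDerivAt p h1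
  have hα : HasFDerivAt (fun p : ℝ × ℝ => p.2 + θ p.1) _ p := h2.add h3
  have := HasFDerivAt.prodMk (h1.mul hα.cos) (h1.mul hα.sin)
  refine this.congr_fderiv ?_
  apply ContinuousLinearMap.ext
  intro v
  rw [auxD_apply]
  ext <;> simp <;> ring

lemma aux_contDiffAt {θ θ' : ℝ → ℝ} (hderiv : ∀ r ∈ Ioi (0:ℝ), HasDerivAt θ (θ' r) r)
    (hcont : ContinuousOn θ' (Ioi 0)) {p : ℝ × ℝ} (hp : 0 < p.1) :
    ContDiffAt ℝ 1 (wedgeMap θ) p := by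
  have hθ : ContDiffOn ℝ 1 θ (Ioi 0) := by
    rw [contDiffOn_one_iff_derivWithin isOpen_Ioi.uniqueDiffOn]
    refine ⟨fun r hr => (hderiv r hr).differentiableAt.differentiableWithinAt, ?_⟩
    refine hcont.congr (fun r hr => ?_)
    exact (hderiv r hr).hasDerivWithinAt.derivWithin (isOpen_Ioi.uniqueDiffOn r hr)
  have h1 : ContDiffAt ℝ 1 (fun p : ℝ × ℝ => θ p.1) p :=
    ContDiffAt.comp (g := θ) p (hθ.contDiffAt (Ioi_mem_nhds hp)) contDiffAt_fst
  have h2 : ContDiffAt ℝ 1 (fun p : ℝ × ℝ => p.2 + θ p.1) p := contDiffAt_snd.add h1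
  exact (contDiffAt_fst.mul h2.cos).prodMk (contDiffAt_fst.mul h2.sin)

lemma aux_norm (θ : ℝ → ℝ) (p : ℝ × ℝ) :
    (wedgeMap θ p).1 ^ 2 + (wedgeMap θ p).2 ^ 2 = p.1 ^ 2 := by
  simp only [wedgeMap]
  linear_combination p.1 ^ 2 * Real.sin_sq_add_cos_sq (p.2 + θ p.1)

lemma aux_injOn {a : ℝ} (ha : a ∈ Ioc (0:ℝ) 1) (θ : ℝ → ℝ) : InjOn (wedgeMap θ) (wedgeU a) := by
  rintro ⟨r, φ⟩ hp ⟨s, χ⟩ hq h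
  have hr : 0 < r := hp.1
  have hs : 0 < s := hq.1
  have e := aux_norm θ (r, φ)
  rw [h, aux_norm] at e
  have hrs : r = s := by
    have : s ^ 2 = r ^ 2 := e
    exact ((sq_eq_sq₀ hs.le hr.le).1 this).symm
  subst hrs
  simp only [wedgeMap, Prod.mk.injEq] at h
  have hc := mul_left_cancel₀ hr.ne' h.1
  have hsn := mul_left_cancel₀ hr.ne' h.2
  have hcos : Real.cos (φ - χ) = 1 := by
    have : φ - χ = (φ + θ r) - (χ + θ r) := by ring
    rw [this, Real.cos_sub, hc, hsn]
    linear_combination Real.sin_sq_add_cos_sq (χ + θ r)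
  have h1 : 2 * π * a ≤ 2 * π := by nlinarith [ha.2, Real.pi_pos]
  have p1 := hp.2.1
  have p2 := hp.2.2
  have q1 := hq.2.1
  have q2 := hq.2.2
  simp only at p1 p2 q1 q2
  have := (Real.cos_eq_one_iff_of_lt_of_lt (by linarith) (by linarith)).1 hcos
  rw [sub_eq_zero.1 this]

lemma aux_isOpenU (a : ℝ) : IsOpen (wedgeU a) := isOpen_Ioi.prod isOpen_Ioo

lemma aux_compact {a : ℝ} (ha : a ∈ Ioc (0:ℝ) 1) {θ θ' : ℝ → ℝ}
    (hderiv : ∀ r ∈ Ioi (0:ℝ), HasDerivAt θ (θ' r) r)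
    (hcont : ContinuousOn θ' (Ioi 0)) {S : Set (ℝ × ℝ)} (hS : IsCompact S)
    (hSU : S ⊆ wedgeMap θ '' wedgeU a) : IsCompact (wedgeU a ∩ wedgeMap θ ⁻¹' S) := by
  let g : wedgeU a → ℝ × ℝ := fun x => wedgeMap θ x.1
  have hg : Topology.IsOpenEmbedding g := by
    apply Topology.IsOpenEmbedding.of_continuous_injective_isOpenMap
    · rw [continuous_iff_continuousAt]
      intro x
      exact ContinuousAt.comp (g := wedgeMap θ) (aux_contDiffAt hderiv hcont x.2.1).continuousAt
        continuousAt_subtype_val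
    · intro x y h
      exact Subtype.ext (aux_injOn ha θ x.2 y.2 h)
    · apply IsOpenMap.of_nhds_le
      intro x
      have hx0 : 0 < x.1.1 := x.2.1
      have hst : HasStrictFDerivAt (wedgeMap θ) (auxD θ θ' x.1) x.1 :=
        (aux_contDiffAt hderiv hcont hx0).hasStrictFDerivAt' (auxD_hasFDerivAt hderiv hx0)
          one_ne_zero
      have hdet : LinearMap.det (auxD θ θ' x.1 : ℝ × ℝ →ₗ[ℝ] ℝ × ℝ) ≠ 0 := by
        have := auxD_det θ θ' x.1
        rw [ContinuousLinearMap.det] at this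
        rw [this]; exact hx0.ne'
      have hr := hst.map_nhds_eq_of_surj
        (LinearMap.range_eq_top.2 (LinearMap.equivOfDetNeZero _ hdet).surjective)
      have : Filter.map g (nhds x) = nhds (g x) := by
        change Filter.map (wedgeMap θ ∘ Subtype.val) (nhds x) = _
        rw [← Filter.map_map, (aux_isOpenU a).isOpenEmbedding_subtypeVal.map_nhds_eq, hr]
      exact this.ge
  have hc : IsCompact (g ⁻¹' S) := by
    rw [hg.isInducing.isCompact_iff, image_preimage_eq_of_subset]
    · exact hS
    · intro y hy
      obtain ⟨x, hx, rfl⟩ := hSU hy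
      exact ⟨⟨x, hx⟩, rfl⟩
  have := hc.image continuous_subtype_val
  convert this using 1
  ext p
  constructor
  · rintro ⟨h1, h2⟩; exact ⟨⟨p, h1⟩, h2, rfl⟩
  · rintro ⟨⟨q, h1⟩, h2, rfl⟩; exact ⟨h1, h2⟩

/-- **The local Hardy inequality in a curved wedge.**
For `a ∈ (0,1]`, `θ ∈ C¹((0,∞))` with `r θ'(r)` bounded, and `R > 0`, every `C¹` function
`u` compactly supported in the curved wedge `Ω = ℒ(U)` satisfies
`∫_Ω |∇u|² - (1/(4a²)) ∫_Ω u²/|x|² ≥ λ(R,θ') ∫_{Ω_R} u²` with `Ω_R = ℒ(U_R)`. -/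
theorem local_hardy_curved_wedge
    (a : ℝ) (ha : a ∈ Ioc (0:ℝ) 1)
    (θ θ' : ℝ → ℝ)
    (hderiv : ∀ r ∈ Ioi (0:ℝ), HasDerivAt θ (θ' r) r)
    (hcont : ContinuousOn θ' (Ioi 0))
    (C : ℝ) (hC : ∀ r ∈ Ioi (0:ℝ), |r * θ' r| ≤ C)
    (R : ℝ) (hR : 0 < R) :
    ∀ u : ℝ × ℝ → ℝ,
      ContDiff ℝ 1 u → HasCompactSupport u → tsupport u ⊆ wedgeMap θ '' wedgeU a →
      (∫ x in wedgeMap θ '' wedgeU a,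
          ((fderiv ℝ u x (1, 0)) ^ 2 + (fderiv ℝ u x (0, 1)) ^ 2))
          - (1 / (4 * a ^ 2)) * ∫ x in wedgeMap θ '' wedgeU a, (u x) ^ 2 / enorm2 x ^ 2
        ≥ lamRayleigh a R θ' * ∫ x in wedgeMap θ '' wedgeUR a R, (u x) ^ 2 := by
  intro u hu huc hus
  set U := wedgeU a with hU
  set ψ : ℝ × ℝ → ℝ := U.indicator (fun p => u (wedgeMap θ p)) with hψ
  have hUo : IsOpen U := aux_isOpenU a
  have hK := aux_compact ha hderiv hcont huc hus
  have hsup : tsupport ψ ⊆ wedgeU a ∩ wedgeMap θ ⁻¹' (tsupport u) := by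
    refine closure_minimal (fun p hp => ?_) hK.isClosed
    have hpU : p ∈ U := by
      by_contra h; exact hp (indicator_of_notMem h _)
    refine ⟨hpU, subset_tsupport u ?_⟩
    simpa [hψ, hpU] using hp
  have hev : ∀ p ∈ U, ψ =ᶠ[nhds p] (u ∘ wedgeMap θ) := fun p hp => by
    filter_upwards [hUo.mem_nhds hp] with q hq
    simp [hψ, hq]
  have hT : auxT a ψ := by
    refine ⟨?_, hK.of_isClosed_subset (isClosed_tsupport ψ) hsup, fun p hp => (hsup hp).1⟩
    rw [contDiff_iff_contDiffAt]
    intro p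
    by_cases hp : p ∈ tsupport ψ
    · have hpU := (hsup hp).1
      exact (hu.contDiffAt.comp p (aux_contDiffAt hderiv hcont hpU.1)).congr_of_eventuallyEq
        (hev p hpU)
    · exact contDiffAt_const.congr_of_eventuallyEq (notMem_tsupport_iff_eventuallyEq.mp hp)
  have hfd : ∀ p ∈ U, ∀ v, fderiv ℝ ψ p v = fderiv ℝ u (wedgeMap θ p) (auxD θ θ' p v) := by
    intro p hp v
    rw [(hev p hp).fderiv_eq, fderiv_comp p (hu.differentiable one_ne_zero _)
      (auxD_hasFDerivAt hderiv hp.1).differentiableAt, (auxD_hasFDerivAt hderiv hp.1).fderiv]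
    rfl
  have hcv : ∀ s ⊆ U, MeasurableSet s → ∀ g : ℝ × ℝ → ℝ,
      ∫ x in wedgeMap θ '' s, g x = ∫ p in s, p.1 * g (wedgeMap θ p) := by
    intro s hs hm g
    rw [integral_image_eq_integral_abs_det_fderiv_smul volume hm
      (fun p hp => (auxD_hasFDerivAt hderiv (hs hp).1).hasFDerivWithinAt)
      ((aux_injOn ha θ).mono hs) g]
    refine setIntegral_congr_fun hm (fun p hp => ?_)
    simp only [auxD_det, abs_of_pos (show 0 < p.1 from (hs hp).1), smul_eq_mul]
  have hURm : MeasurableSet (wedgeUR a R) := measurableSet_Ioo.prod measurableSet_Ioo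
  have hURs : wedgeUR a R ⊆ U := prod_mono Ioo_subset_Ioi_self subset_rfl
  have key := aux_main ha.1 (R := R) hcont hT
  rw [hcv _ hURs hURm, hcv U subset_rfl hUo.measurableSet, hcv U subset_rfl hUo.measurableSet]
  have i1 : ∫ p in wedgeUR a R, p.1 * u (wedgeMap θ p) ^ 2 = ∫ p in wedgeUR a R, ψ p ^ 2 * p.1 :=
    setIntegral_congr_fun hURm (fun p hp => by simp [hψ, hURs hp, mul_comm])
  have i2 : ∫ p in U, p.1 * (u (wedgeMap θ p) ^ 2 / enorm2 (wedgeMap θ p) ^ 2)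
      = ∫ p in U, auxH ψ p :=
    setIntegral_congr_fun hUo.measurableSet (fun p hp => by
      have : enorm2 (wedgeMap θ p) ^ 2 = p.1 ^ 2 := by
        rw [enorm2, Real.sq_sqrt (by positivity), aux_norm]
      simp only [this, auxH]
      simp [hψ, hp, mul_comm])
  have i3 : ∫ p in U, p.1 * (fderiv ℝ u (wedgeMap θ p) (1, 0) ^ 2
      + fderiv ℝ u (wedgeMap θ p) (0, 1) ^ 2) = ∫ p in U, auxE θ' ψ p :=
    setIntegral_congr_fun hUo.measurableSet (fun p hp => by
      have hp0 : 0 < p.1 := hp.1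
      simp only [auxE]
      rw [hfd p hp, hfd p hp, auxD_apply, auxD_apply]
      have hlin : ∀ x y : ℝ, fderiv ℝ u (wedgeMap θ p) (x, y)
          = x * fderiv ℝ u (wedgeMap θ p) (1, 0) + y * fderiv ℝ u (wedgeMap θ p) (0, 1) := by
        intro x y
        have : ((x, y) : ℝ × ℝ) = x • (1, 0) + y • (0, 1) := by simp
        rw [this, map_add, map_smul, map_smul, smul_eq_mul, smul_eq_mul]
      rw [hlin (_ + _), hlin (_ + _)]
      have hsc := Real.sin_sq_add_cos_sq (p.2 + θ p.1)
      set s := sin (p.2 + θ p.1)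
      set c := cos (p.2 + θ p.1)
      set X := fderiv ℝ u (wedgeMap θ p) (1, 0)
      set Y := fderiv ℝ u (wedgeMap θ p) (0, 1)
      simp only [mul_one, mul_zero, add_zero, zero_add]
      field_simp
      linear_combination (-(X ^ 2 + Y ^ 2)) * hsc)
  rw [i1, i2, i3]
  exact key
end
end
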